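/- arXiv:1308.2808 — 5 statements merged into one kernel-verified Lean document; each statement's English description precedes it below -/
import Mathlib

section
/- Let m ≥ 2, let δ_1, …, δ_m be pairwise distinct nonzero real numbers, and let g : ℝ → ℂ be the function g(x) = Σ_{i=1}^m (1/|δ_i|) e^{−x/δ_i} h(x δ_i) ∏_{k=1, k≠i}^m (1 − δ_k/δ_i)^{−1} (the continuous totally positive function of finite type m with parameters δ_1, …, δ_m). Then for every α > 0, every x ∈ [0, α) and every ξ ∈ [0, 1/α), the Zak transform series converges and Z_α g(x, ξ) = Σ_{i=1}^m (1/δ_i) · e^{−x/δ_i} / (1 − e^{−α(1/δ_i + 2πi ξ)}) · ∏_{k=1, k≠i}^m (1 − δ_k/δ_i)^{−1}. -/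
/-!
Fix an index `i` and put `r = exp (-α (1/δ + 2πiξ))` with `δ = δ i`. For `0 ≤ x < α` the `i`-th
summand of the Zak series is a one-sided geometric series: over `k ≤ 0` with ratio `r` when
`δ > 0`, and over `k ≥ 1` with ratio `r⁻¹` when `δ < 0`. In both cases it sums to
`δ⁻¹ exp (-x/δ) / (1 - r)`, except that for `x = 0` the value `h(0) = 1/2` in the term `k = 0`
produces the defect `-δ⁻¹ / 2` (`hasSum_zak_term`).

The defects cancel after multiplication by the partial fraction coefficients and summation over
`i`: with `y i = -1 / δ i` the total is a multiple of the sum of the barycentric Lagrange weights of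
the nodes `y i`, which vanishes as soon as there are at least two nodes
(`sum_inv_mul_prod_eq_zero`).
-/

open MeasureTheory Complex Finset

/-- The Heaviside function: `1` for positive, `1/2` at zero, `0` for negative arguments. -/
noncomputable def heaviside (x : ℝ) : ℝ :=
  if 0 < x then 1 else if x = 0 then 1 / 2 else 0

/-- The explicit formula for a totally positive function of finite type `m`
with pairwise distinct nonzero parameters `δ`. -/
noncomputable def tpfftFormula {m : ℕ} (δ : Fin m → ℝ) (x : ℝ) : ℂ :=
  ∑ i : Fin m, ((|δ i|⁻¹ : ℝ) : ℂ) * Complex.exp (-(x / δ i : ℝ)) *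
    ((heaviside (x * δ i) : ℝ) : ℂ) *
      ∏ k ∈ Finset.univ.erase i, ((1 : ℂ) - (δ k : ℂ) / (δ i : ℂ))⁻¹

/-- The jumps of the individual exponentials at the origin cancel, i.e. the function given by
`tpfftFormula` is continuous at `0`. -/
lemma sum_inv_mul_prod_eq_zero (m : ℕ) (hm : 2 ≤ m) (δ : Fin m → ℝ)
    (hδ0 : ∀ i, δ i ≠ 0) (hδinj : Function.Injective δ) :
    ∑ i : Fin m, ((δ i : ℂ))⁻¹ *
      ∏ k ∈ Finset.univ.erase i, ((1 : ℂ) - (δ k : ℂ) / (δ i : ℂ))⁻¹ = 0 := by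
  have hinj : Function.Injective fun i : Fin m => -((δ i : ℂ))⁻¹ := by
    intro i j hij
    simpa using hδinj (by simpa using hij)
  have hw : ∑ i : Fin m, Lagrange.nodalWeight Finset.univ (fun i : Fin m => -((δ i : ℂ))⁻¹) i
      = 0 := by
    -- The sum of the weights is the coefficient of degree `m - 1` in the
    -- interpolation polynomial of the constant `1`, which is zero because `m - 1 > 0`.
    have h := Lagrange.coeff_eq_sum (s := Finset.univ) hinj.injOn (P := (1 : Polynomial ℂ))
      (by rw [Polynomial.degree_one, Finset.card_fin]; exact_mod_cast (by omega : 0 < m))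
    rw [Polynomial.coeff_one, if_neg (by rw [Finset.card_fin]; omega)] at h
    rw [h]
    exact Finset.sum_congr rfl fun i _ => by simp [Lagrange.nodalWeight]
  have hterm : ∀ i : Fin m, ((δ i : ℂ))⁻¹ *
      ∏ k ∈ Finset.univ.erase i, ((1 : ℂ) - (δ k : ℂ) / (δ i : ℂ))⁻¹
      = (∏ k, ((δ k : ℂ))⁻¹) *
        Lagrange.nodalWeight Finset.univ (fun i : Fin m => -((δ i : ℂ))⁻¹) i := by
    intro i
    rw [Lagrange.nodalWeight, ← Finset.mul_prod_erase _ _ (Finset.mem_univ i), mul_assoc,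
      ← Finset.prod_mul_distrib]
    congr 1
    refine Finset.prod_congr rfl fun k _ => ?_
    have hk : (δ k : ℂ) ≠ 0 := by exact_mod_cast hδ0 k
    have hi : (δ i : ℂ) ≠ 0 := by exact_mod_cast hδ0 i
    rw [← mul_inv]
    congr 1
    field_simp
    ring
  simp_rw [hterm]
  rw [← Finset.mul_sum, hw, mul_zero]

/-- The contribution of one exponential to the Zak series. The correction at `x = 0` comes from the
convention `h(0) = 1/2` in the term `k = 0`. -/
lemma hasSum_zak_term (δ : ℝ) (hδ : δ ≠ 0) (α : ℝ) (hα : 0 < α) (x ξ : ℝ)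
    (hx : x ∈ Set.Ico 0 α) :
    HasSum (fun k : ℤ => ((|δ|⁻¹ : ℝ) : ℂ) * Complex.exp (-((x - α * k) / δ : ℝ)) *
      ((heaviside ((x - α * k) * δ) : ℝ) : ℂ) *
        Complex.exp (2 * (Real.pi : ℂ) * Complex.I * (α : ℂ) * (k : ℂ) * (ξ : ℂ)))
      ((δ : ℂ)⁻¹ * (Complex.exp (-(x / δ : ℝ)) /
          (1 - Complex.exp (-((α : ℂ) * ((δ : ℂ)⁻¹ + 2 * (Real.pi : ℂ) * Complex.I * (ξ : ℂ))))))
        - if x = 0 then (δ : ℂ)⁻¹ / 2 else 0) := by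
  obtain ⟨hx0, hxα⟩ := hx
  have hδc : (δ : ℂ) ≠ 0 := by exact_mod_cast hδ
  set w : ℂ := -((α : ℂ) * ((δ : ℂ)⁻¹ + 2 * (Real.pi : ℂ) * Complex.I * (ξ : ℂ))) with hw
  set C : ℂ := Complex.exp (-(x / δ : ℝ)) with hC
  have hre : w.re = -(α * δ⁻¹) := by
    rw [hw, ← Complex.ofReal_inv]
    simp
  have hexp : ∀ k : ℤ, Complex.exp (-((x - α * k) / δ : ℝ)) *
      Complex.exp (2 * (Real.pi : ℂ) * Complex.I * (α : ℂ) * (k : ℂ) * (ξ : ℂ))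
      = C * Complex.exp (-(k * w)) := by
    intro k
    rw [hC, ← Complex.exp_add, ← Complex.exp_add, hw]
    congr 1
    push_cast
    field_simp
    ring
  have hC0 : x = 0 → C = 1 := by
    rintro rfl
    simp [hC]
  rw [← (Equiv.neg ℤ).hasSum_iff]
  rcases lt_or_gt_of_ne hδ with hneg | hpos
  · -- Only the indices `k ≥ 1` contribute, together with half a term at `k = 0` if `x = 0`.
    have hr : ‖Complex.exp (-w)‖ < 1 := by
      rw [Complex.norm_exp, Real.exp_lt_one_iff, Complex.neg_re, hre, neg_neg]
      exact mul_neg_of_pos_of_neg hα (inv_lt_zero.mpr hneg)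
    have h1 : HasSum (fun n : ℕ => if n = 0 then -(if x = 0 then (δ : ℂ)⁻¹ / 2 else 0) else 0)
        (-(if x = 0 then (δ : ℂ)⁻¹ / 2 else 0)) := hasSum_ite_eq 0 _
    have h2 := ((hasSum_geometric_of_norm_lt_one hr).mul_left
      (-(δ : ℂ)⁻¹ * C * Complex.exp (-w)))
    have hne : Complex.exp w ≠ 1 := by
      intro h
      rw [Complex.exp_neg, h] at hr
      simp at hr
    have hval : (δ : ℂ)⁻¹ * (C / (1 - Complex.exp w)) - (if x = 0 then (δ : ℂ)⁻¹ / 2 else 0)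
        = -(if x = 0 then (δ : ℂ)⁻¹ / 2 else 0) +
          -(δ : ℂ)⁻¹ * C * Complex.exp (-w) * (1 - Complex.exp (-w))⁻¹ := by
      rw [sub_eq_neg_add]
      congr 1
      have h3 : 1 - Complex.exp w ≠ 0 := sub_ne_zero.mpr hne.symm
      have h4 : 1 - Complex.exp (-w) = -(1 - Complex.exp w) * Complex.exp (-w) := by
        have : Complex.exp w * Complex.exp (-w) = 1 := by rw [← Complex.exp_add]; simp
        linear_combination -this
      rw [h4]
      have := Complex.exp_ne_zero (-w)
      field_simp
    rw [hval]
    refine HasSum.of_nat_of_neg_add_one ?_ ?_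
    · convert h1 using 2 with n
      simp only [Function.comp_apply, Equiv.neg_apply]
      rw [mul_right_comm, mul_assoc (_ : ℂ) (Complex.exp _) (Complex.exp _), hexp, abs_of_neg hneg]
      by_cases hn : n = 0
      · subst hn
        by_cases hx : x = 0
        · simp [hx, heaviside, hC0 hx]
          ring
        · have : ¬ 0 < x * δ := (mul_neg_of_pos_of_neg (by positivity) hneg).not_gt
          simp [hx, heaviside, this, hδ]
      · have hn' : (0 : ℝ) < n := by exact_mod_cast Nat.pos_of_ne_zero hn
        have : (x - α * ((-(n : ℤ) : ℤ) : ℝ)) * δ < 0 := by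
          refine mul_neg_of_pos_of_neg ?_ hneg
          push_cast
          nlinarith [mul_pos hα hn']
        simp only [heaviside, this.not_gt, this.ne, if_false, hn]
        simp
    · refine (congrArg (fun f => HasSum f _) (funext fun n => ?_)).mpr h2
      simp only [Function.comp_apply, Equiv.neg_apply, neg_neg]
      rw [mul_right_comm, mul_assoc (_ : ℂ) (Complex.exp _) (Complex.exp _), hexp, abs_of_neg hneg]
      have : 0 < (x - α * (((n : ℤ) + 1 : ℤ) : ℝ)) * δ := by
        refine mul_pos_of_neg_of_neg ?_ hneg
        push_cast
        nlinarith [mul_nonneg hα.le n.cast_nonneg]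
      rw [heaviside, if_pos this, ← Complex.exp_nat_mul, mul_assoc (_ * C),
        ← Complex.exp_add (-w)]
      have h3 : -w + n * -w = -((((n : ℤ) + 1 : ℤ) : ℂ) * w) := by
        push_cast
        ring
      rw [h3]
      push_cast
      rw [inv_neg]
      ring
  · -- Only the indices `k ≤ 0` contribute, with half a term at `k = 0` if `x = 0`.
    have hr : ‖Complex.exp w‖ < 1 := by
      rw [Complex.norm_exp, Real.exp_lt_one_iff, hre, neg_lt_zero]
      positivity
    have h1 : HasSum (fun n : ℕ => if n = 0 then (if x = 0 then (δ : ℂ)⁻¹ / 2 else 0) else 0)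
        (if x = 0 then (δ : ℂ)⁻¹ / 2 else 0) := hasSum_ite_eq 0 _
    have h2 := ((hasSum_geometric_of_norm_lt_one hr).mul_left ((δ : ℂ)⁻¹ * C)).sub h1
    have hval : (δ : ℂ)⁻¹ * (C / (1 - Complex.exp w)) - (if x = 0 then (δ : ℂ)⁻¹ / 2 else 0)
        = (δ : ℂ)⁻¹ * C * (1 - Complex.exp w)⁻¹ - (if x = 0 then (δ : ℂ)⁻¹ / 2 else 0) + 0 := by
      ring
    rw [hval]
    refine HasSum.of_nat_of_neg_add_one ?_ ?_
    · refine (congrArg (fun f => HasSum f _) (funext fun n => ?_)).mpr h2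
      simp only [Function.comp_apply, Equiv.neg_apply]
      rw [mul_right_comm, mul_assoc (_ : ℂ) (Complex.exp _) (Complex.exp _), hexp, abs_of_pos hpos]
      by_cases hn : n = 0
      · subst hn
        by_cases hx : x = 0
        · simp [hx, heaviside, hC0 hx]
          ring
        · have : 0 < x * δ := by positivity
          simp [hx, heaviside, this]
      · have hn' : (0 : ℝ) < n := by exact_mod_cast Nat.pos_of_ne_zero hn
        have : 0 < (x - α * ((-(n : ℤ) : ℤ) : ℝ)) * δ := by
          refine mul_pos ?_ hpos
          push_cast
          nlinarith [mul_pos hα hn']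
        rw [heaviside, if_pos this, ← Complex.exp_nat_mul, if_neg hn]
        simp [mul_assoc]
    · convert hasSum_zero (α := ℂ) (β := ℕ) using 2 with n
      simp only [Function.comp_apply, Equiv.neg_apply, neg_neg]
      have : (x - α * (((n : ℤ) + 1 : ℤ) : ℝ)) * δ < 0 := by
        refine mul_neg_of_neg_of_pos ?_ hpos
        push_cast
        nlinarith [mul_nonneg hα.le n.cast_nonneg]
      simp only [heaviside, this.not_gt, this.ne, if_false]
      simp

theorem stmt1 (m : ℕ) (hm : 2 ≤ m) (δ : Fin m → ℝ)
    (hδ0 : ∀ i, δ i ≠ 0) (hδinj : Function.Injective δ)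
    (g : ℝ → ℂ) (hg : g = tpfftFormula δ)
    (α : ℝ) (hα : 0 < α) (x ξ : ℝ) (hx : x ∈ Set.Ico 0 α) (hξ : ξ ∈ Set.Ico 0 (1 / α)) :
    Summable (fun k : ℤ => g (x - α * k) *
        Complex.exp (2 * (Real.pi : ℂ) * Complex.I * (α : ℂ) * (k : ℂ) * (ξ : ℂ))) ∧
    (∑' k : ℤ, g (x - α * k) *
        Complex.exp (2 * (Real.pi : ℂ) * Complex.I * (α : ℂ) * (k : ℂ) * (ξ : ℂ))) =
      ∑ i : Fin m, ((δ i : ℂ))⁻¹ *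
        (Complex.exp (-(x / δ i : ℝ)) /
          (1 - Complex.exp (-((α : ℂ) * ((δ i : ℂ)⁻¹ + 2 * (Real.pi : ℂ) * Complex.I * (ξ : ℂ)))))) *
        ∏ k ∈ Finset.univ.erase i, ((1 : ℂ) - (δ k : ℂ) / (δ i : ℂ))⁻¹ := by
  have key := hasSum_sum fun (i : Fin m) (_ : i ∈ Finset.univ) =>
    (hasSum_zak_term (δ i) (hδ0 i) α hα x ξ hx).mul_right
      (∏ k ∈ Finset.univ.erase i, ((1 : ℂ) - (δ k : ℂ) / (δ i : ℂ))⁻¹)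
  have hfun : ∀ k : ℤ, g (x - α * k) *
      Complex.exp (2 * (Real.pi : ℂ) * Complex.I * (α : ℂ) * (k : ℂ) * (ξ : ℂ)) =
      ∑ i : Fin m, ((|δ i|⁻¹ : ℝ) : ℂ) * Complex.exp (-((x - α * k) / δ i : ℝ)) *
      ((heaviside ((x - α * k) * δ i) : ℝ) : ℂ) *
        Complex.exp (2 * (Real.pi : ℂ) * Complex.I * (α : ℂ) * (k : ℂ) * (ξ : ℂ)) *
        ∏ k ∈ Finset.univ.erase i, ((1 : ℂ) - (δ k : ℂ) / (δ i : ℂ))⁻¹ := by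
    intro k
    rw [hg, tpfftFormula, Finset.sum_mul]
    exact Finset.sum_congr rfl fun i _ => by ring
  have hdefect : ∑ i : Fin m, (if x = 0 then (δ i : ℂ)⁻¹ / 2 else 0) *
      ∏ k ∈ Finset.univ.erase i, ((1 : ℂ) - (δ k : ℂ) / (δ i : ℂ))⁻¹ = 0 := by
    split_ifs
    · have h := congrArg (· / 2) (sum_inv_mul_prod_eq_zero m hm δ hδ0 hδinj)
      simp only [zero_div, Finset.sum_div] at h
      rw [← h]
      exact Finset.sum_congr rfl fun i _ => by ring
    · simp
  simp_rw [← hfun] at key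
  simp_rw [sub_mul, Finset.sum_sub_distrib, hdefect, sub_zero] at key
  exact ⟨key.summable, key.tsum_eq⟩
end

section
/- Let α > 0 and let g : ℝ → ℂ be an even function (g(−x) = g(x) for all x ∈ ℝ) such that for every (x, ξ) ∈ ℝ² the family (g(x − αk) e^{2πi α k ξ})_{k∈ℤ} is summable and the resulting Zak transform Z_α g : ℝ² → ℂ is continuous. Then Z_α g(α/2, 1/(2α)) = 0. -/
open MeasureTheory Complex

/-- The Zak transform `Z_α g (x, ξ) = ∑_{k ∈ ℤ} g(x - αk) e^{2πiαkξ}`. -/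
noncomputable def zak (α : ℝ) (g : ℝ → ℂ) (x ξ : ℝ) : ℂ :=
  ∑' k : ℤ, g (x - α * k) *
    Complex.exp (2 * (Real.pi : ℂ) * Complex.I * (α : ℂ) * (k : ℂ) * (ξ : ℂ))

theorem stmt2 (α : ℝ) (hα : 0 < α) (g : ℝ → ℂ)
    (heven : ∀ x : ℝ, g (-x) = g x)
    (hsum : ∀ x ξ : ℝ, Summable (fun k : ℤ => g (x - α * k) *
        Complex.exp (2 * (Real.pi : ℂ) * Complex.I * (α : ℂ) * (k : ℂ) * (ξ : ℂ))))
    (hcont : Continuous (fun p : ℝ × ℝ => zak α g p.1 p.2)) :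
    zak α g (α / 2) (1 / (2 * α)) = 0 := by
  -- The reflection `k ↦ 1 - k` maps `α/2 - αk` to its negative and flips the sign of
  -- `e^{2πiαk/(2α)} = e^{πik}`, so the sum equals its own negative.
  have hα' : (α : ℂ) ≠ 0 := by exact_mod_cast hα.ne'
  have key : zak α g (α / 2) (1 / (2 * α)) = -zak α g (α / 2) (1 / (2 * α)) := by
    unfold zak
    conv_lhs => rw [← (Equiv.subLeft (1 : ℤ)).tsum_eq]
    rw [← tsum_neg]
    refine tsum_congr fun k => ?_
    have hg : g (α / 2 - α * ((1 - k : ℤ) : ℝ)) = g (α / 2 - α * k) := by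
      rw [← heven]
      congr 1
      push_cast
      ring
    have hexp (m : ℤ) : Complex.exp (2 * (Real.pi : ℂ) * Complex.I * (α : ℂ) * (m : ℂ) *
        ((1 / (2 * α) : ℝ) : ℂ)) = (-1) ^ m := by
      rw [← Complex.exp_pi_mul_I, ← Complex.exp_int_mul]
      congr 1
      push_cast
      field_simp
    rw [Equiv.subLeft_apply, hg, hexp, hexp, zpow_sub₀ (by norm_num), zpow_one,
      div_eq_mul_inv (-1 : ℂ), ← inv_zpow, inv_neg_one]
    ring
  exact self_eq_neg.mp key
end

section
/- Let g : ℝ → ℂ be continuous and even (g(−x) = g(x) for all x), and suppose there exist C, a > 0 with |g(x)| ≤ C e^{−a|x|} for all x ∈ ℝ. Let M ∈ ℕ be even and set α = M, β = 1/M. Then the Gabor family G(Sg, M, 1/M) is not a frame for ℓ²(ℤ): there do not exist constants A, B > 0 such that A‖f‖² ≤ Σ_{k∈ℤ} Σ_{l=0}^{M−1} |⟨f, M_{l/M}T_{kM}(Sg)⟩|² ≤ B‖f‖² holds for all f ∈ ℓ²(ℤ). -/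
open MeasureTheory Complex

/-!
The obstruction is the zero at `(M/2, 1/2)` that evenness forces on the Zak transform of the
sampled window. With `M = 2 r` put `H m = (-1)^m g(r + m M)`; evenness gives `H (-1 - m) = -H m`,
so the sum of `H` over `ℤ` vanishes. Together with exponential decay this makes `H` the
difference `H m = P (m + 1) - P m` of a square-summable sequence `P` (`exists_primitive`).

The lower frame bound is tested on `f_N`, supported on the points `r + n M`, `0 ≤ n < N`, with
values `(-1)^n`, so that `‖f_N‖² = N`. Every Gabor coefficient of `f_N` has modulus
`‖∑_{n < N} H (n - k)‖ = ‖P (N - k) - P (-k)‖` (`norm_gaborCoefZ_alternating`), and so the sum of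
squares of the coefficients is at most `4 M ‖P‖²`, uniformly in `N`. Letting `N → ∞` contradicts
the lower frame bound.
-/

/-- The Gabor coefficient `⟨f, M_{l/M} T_{ka} g⟩` in `ℓ²(ℤ)`, where
`(M_{l/M}T_{ka}g)(j) = g(j - ka) e^{2πi l j/M}`. -/
noncomputable def gaborCoefZ (g : ℤ → ℂ) (a M : ℕ) (f : ℤ → ℂ) (k : ℤ) (l : ℕ) : ℂ :=
  ∑' j : ℤ, f j * star (g (j - k * (a : ℤ)) *
    Complex.exp (2 * (Real.pi : ℂ) * Complex.I * (l : ℂ) * (j : ℂ) / (M : ℂ)))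

/-- The Gabor family `G(g, a, 1/M)` is a frame for `ℓ²(ℤ)`. -/
def IsGaborFrameZ (g : ℤ → ℂ) (a M : ℕ) : Prop :=
  ∃ A B : ℝ, 0 < A ∧ 0 < B ∧ ∀ f : ℤ → ℂ, Summable (fun j : ℤ => ‖f j‖ ^ 2) →
    A * (∑' j : ℤ, ‖f j‖ ^ 2) ≤
        (∑' k : ℤ, ∑ l ∈ Finset.range M, ‖gaborCoefZ g a M f k l‖ ^ 2) ∧
      (∑' k : ℤ, ∑ l ∈ Finset.range M, ‖gaborCoefZ g a M f k l‖ ^ 2) ≤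
        B * (∑' j : ℤ, ‖f j‖ ^ 2)

/-- A sequence on `ℤ` that is antisymmetric about `-1/2` and decays geometrically is the forward
difference of a square-summable sequence, namely of the tail sums `P j = -∑_{m ≥ |j|} H m`. -/
lemma exists_primitive (H : ℤ → ℂ) (C q : ℝ) (hq0 : 0 ≤ q) (hq1 : q < 1)
    (hanti : ∀ m, H (-1 - m) = -H m) (hH : ∀ n : ℕ, ‖H n‖ ≤ C * q ^ n) :
    ∃ P : ℤ → ℂ, (∀ m, P (m + 1) - P m = H m) ∧ Summable (fun j => ‖P j‖ ^ 2) := by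
  have hgeo : Summable (fun n : ℕ => q ^ n) := summable_geometric_of_lt_one hq0 hq1
  have hbd : ∀ k i : ℕ, ‖H ((k + i : ℕ) : ℤ)‖ ≤ C * q ^ k * q ^ i := fun k i => by
    have := hH (k + i)
    rwa [pow_add, ← mul_assoc] at this
  have hs : ∀ k : ℕ, Summable (fun i : ℕ => H ((k + i : ℕ) : ℤ)) := fun k =>
    Summable.of_norm_bounded (hgeo.mul_left (C * q ^ k)) (hbd k)
  set T : ℕ → ℂ := fun k => ∑' i : ℕ, H ((k + i : ℕ) : ℤ) with hT
  have hstep : ∀ k : ℕ, T k = H k + T (k + 1) := fun k => by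
    simp only [hT]
    rw [(hs k).tsum_eq_zero_add]
    simp only [add_zero]
    congr 1
    refine tsum_congr fun i => ?_
    congr 2
    omega
  have hTb : ∀ k : ℕ, ‖T k‖ ≤ C * (1 - q)⁻¹ * q ^ k := fun k => by
    have h := tsum_of_norm_bounded ((hgeo.mul_left (C * q ^ k)).hasSum) (hbd k)
    rw [tsum_mul_left, tsum_geometric_of_lt_one hq0 hq1] at h
    calc ‖T k‖ ≤ _ := h
      _ = _ := by ring
  have hTs : Summable (fun k : ℕ => ‖T k‖ ^ 2) := by
    have h2 : Summable (fun k : ℕ => (C * (1 - q)⁻¹) ^ 2 * (q ^ 2) ^ k) :=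
      (summable_geometric_of_lt_one (by positivity) (by nlinarith)).mul_left _
    refine Summable.of_nonneg_of_le (fun _ => by positivity) (fun k => ?_) h2
    calc ‖T k‖ ^ 2 ≤ (C * (1 - q)⁻¹ * q ^ k) ^ 2 := by gcongr; exact hTb k
      _ = _ := by rw [mul_pow]; ring
  refine ⟨fun j => -T j.natAbs, fun m => ?_, ?_⟩
  · obtain ⟨n, rfl | rfl⟩ : ∃ n : ℕ, m = n ∨ m = -1 - n := by
      rcases le_or_gt 0 m with h | h
      · exact ⟨m.toNat, Or.inl (by omega)⟩
      · exact ⟨(-1 - m).toNat, Or.inr (by omega)⟩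
    · have h1 : ((n : ℤ) + 1).natAbs = n + 1 := by omega
      have h2 : (n : ℤ).natAbs = n := by omega
      simp only [h1, h2, hstep n]
      ring
    · have h1 : (-1 - (n : ℤ) + 1).natAbs = n := by omega
      have h2 : (-1 - (n : ℤ)).natAbs = n + 1 := by omega
      simp only [h1, h2, hstep n, hanti]
      ring
  · refine Summable.of_nat_of_neg ?_ ?_ <;> simpa using hTs

/-- The test sequence with value `(-1)^n` at `r + n M` for `0 ≤ n < N`, and `0` elsewhere. -/
noncomputable def alternatingSeq (r M N : ℕ) (j : ℤ) : ℂ :=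
  if j ∈ (Finset.range N).image (fun n : ℕ => (r : ℤ) + n * M) then
    (-1 : ℂ) ^ ((j - r) / M) else 0

lemma tsum_alternatingSeq {E : Type*} [AddCommMonoid E] [TopologicalSpace E] (r M N : ℕ)
    (hM : 0 < M) (F : ℤ → ℂ → E) (hF : ∀ j, F j 0 = 0) :
    ∑' j, F j (alternatingSeq r M N j) =
      ∑ n ∈ Finset.range N, F ((r : ℤ) + n * M) ((-1 : ℂ) ^ n) := by
  have hM' : (M : ℤ) ≠ 0 := by exact_mod_cast hM.ne'
  rw [tsum_eq_sum (s := (Finset.range N).image (fun n : ℕ => (r : ℤ) + n * M))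
    (fun j hj => by rw [alternatingSeq, if_neg hj, hF]), Finset.sum_image]
  · refine Finset.sum_congr rfl fun n hn => ?_
    rw [alternatingSeq, if_pos (Finset.mem_image_of_mem _ hn), add_sub_cancel_left,
      Int.mul_ediv_cancel _ hM', zpow_natCast]
  · intro a _ b _ h
    simpa [hM.ne'] using h

lemma norm_gaborCoefZ_alternating (h : ℤ → ℂ) (r M N : ℕ) (hM : 0 < M) (hr : M = r + r)
    (P : ℤ → ℂ) (hP : ∀ m : ℤ, P (m + 1) - P m = (-1 : ℂ) ^ m * h (r + m * M)) (k : ℤ) (l : ℕ) :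
    ‖gaborCoefZ h M M (alternatingSeq r M N) k l‖ = ‖P (N - k) - P (-k)‖ := by
  -- On the support of the test sequence the modulation is the constant `exp (π i l)`.
  have hexp : ∀ n : ℕ, Complex.exp (2 * (Real.pi : ℂ) * Complex.I * (l : ℂ) *
      (((r : ℤ) + n * M : ℤ) : ℂ) / (M : ℂ)) = Complex.exp ((Real.pi * l : ℝ) * Complex.I) := by
    intro n
    rw [Complex.exp_eq_exp_iff_exists_int]
    refine ⟨l * n, ?_⟩
    have hMC : (M : ℂ) ≠ 0 := by exact_mod_cast hM.ne'
    have hrC : (M : ℂ) = r + r := by exact_mod_cast hr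
    push_cast
    field_simp
    linear_combination (-(l : ℂ)) * hrC
  have hsum : gaborCoefZ h M M (alternatingSeq r M N) k l =
      star (Complex.exp ((Real.pi * l : ℝ) * Complex.I)) * ((-1 : ℂ) ^ k *
        star (∑ n ∈ Finset.range N, (P ((n + 1 : ℕ) - k) - P ((n : ℕ) - k)))) := by
    rw [gaborCoefZ, tsum_alternatingSeq r M N hM (fun j z => z * star (h (j - k * (M : ℤ)) *
      Complex.exp (2 * (Real.pi : ℂ) * Complex.I * (l : ℂ) * (j : ℂ) / (M : ℂ))))
      (fun j => zero_mul _), star_sum, Finset.mul_sum, Finset.mul_sum]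
    refine Finset.sum_congr rfl fun n _ => ?_
    have e1 : ((n + 1 : ℕ) : ℤ) - k = (n - k) + 1 := by push_cast; ring
    have e2 : (r : ℤ) + n * M - k * M = r + (n - k) * M := by ring
    have e3 : (-1 : ℂ) ^ n = (-1 : ℂ) ^ k * (-1 : ℂ) ^ ((n : ℤ) - k) := by
      rw [← zpow_add₀ (by norm_num), add_sub_cancel, zpow_natCast]
    have e4 : star ((-1 : ℂ) ^ ((n : ℤ) - k)) = (-1 : ℂ) ^ ((n : ℤ) - k) := by
      rw [star_zpow₀, star_neg, star_one]
    simp only [hexp n]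
    rw [e1, hP, e2, e3, star_mul', star_mul', e4]
    ring
  rw [hsum, Finset.sum_range_sub (fun n : ℕ => P ((n : ℤ) - k))]
  simp only [norm_mul, norm_star, norm_zpow, norm_neg, norm_one, one_zpow, one_mul,
    Complex.norm_exp_ofReal_mul_I]
  simp

theorem stmt3 (g : ℝ → ℂ) (hgcont : Continuous g)
    (heven : ∀ x : ℝ, g (-x) = g x)
    (hdecay : ∃ C a : ℝ, 0 < C ∧ 0 < a ∧ ∀ x : ℝ, ‖g x‖ ≤ C * Real.exp (-a * |x|))
    (M : ℕ) (hM : 0 < M) (hMeven : Even M) :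
    ¬ IsGaborFrameZ (fun j : ℤ => g (j : ℝ)) M M := by
  rintro ⟨A, B, hA, -, hfr⟩
  obtain ⟨C, a, hC, ha, hdec⟩ := hdecay
  obtain ⟨r, hr⟩ := hMeven
  have hrR : (M : ℝ) = r + r := by exact_mod_cast hr
  have hM1 : (1 : ℝ) ≤ M := by exact_mod_cast hM
  obtain ⟨P, hP, hPs⟩ := exists_primitive
    (fun m : ℤ => (-1 : ℂ) ^ m * g (((r + m * M : ℤ)) : ℝ)) C (Real.exp (-a))
    (Real.exp_pos _).le (by rw [← Real.exp_zero]; exact Real.exp_lt_exp.2 (by linarith))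
    (by
      intro m
      have h1 : (((r + (-1 - m) * M : ℤ)) : ℝ) = -(((r + m * M : ℤ)) : ℝ) := by
        push_cast
        linear_combination (-1 : ℝ) * hrR
      have h2 : (-1 : ℂ) ^ (-1 - m) = -(-1 : ℂ) ^ m := by
        rw [zpow_sub₀ (by norm_num)]
        rcases Int.even_or_odd m with h | h
        · simp [h.neg_one_zpow]
        · simp [h.neg_one_zpow]
      simp only [h1, heven, h2]
      ring)
    (by
      intro n
      rw [norm_mul, norm_zpow, norm_neg, norm_one, one_zpow, one_mul, ← Real.exp_nat_mul]
      refine (hdec _).trans ?_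
      refine mul_le_mul_of_nonneg_left (Real.exp_le_exp.2 ?_) hC.le
      have h1 : (n : ℝ) ≤ |(((r + (n : ℤ) * M : ℤ)) : ℝ)| := by
        refine le_trans ?_ (le_abs_self _)
        push_cast
        have : (0 : ℝ) ≤ r := Nat.cast_nonneg r
        have : (0 : ℝ) ≤ n := Nat.cast_nonneg n
        nlinarith
      nlinarith)
  set S := ∑' j, ‖P j‖ ^ 2 with hS
  have key : ∀ N : ℕ, A * N ≤ M * (2 * S + 2 * S) := by
    intro N
    have hnorm : ∑' j, ‖alternatingSeq r M N j‖ ^ 2 = N := by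
      rw [tsum_alternatingSeq r M N hM (fun _ z => ‖z‖ ^ 2) (by simp)]
      simp
    have hsm : Summable (fun j => ‖alternatingSeq r M N j‖ ^ 2) := by
      refine summable_of_ne_finset_zero
        (s := (Finset.range N).image (fun n : ℕ => (r : ℤ) + n * M)) fun j hj => ?_
      rw [alternatingSeq, if_neg hj]
      simp
    have h := (hfr _ hsm).1
    rw [hnorm] at h
    refine h.trans ?_
    simp only [norm_gaborCoefZ_alternating (fun j : ℤ => g (j : ℝ)) r M N hM hr P hP,
      Finset.sum_const, Finset.card_range, nsmul_eq_mul]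
    rw [tsum_mul_left]
    gcongr
    have s1 : HasSum (fun k : ℤ => ‖P (N - k)‖ ^ 2) S :=
      (Equiv.subLeft (N : ℤ)).hasSum_iff (f := fun j => ‖P j‖ ^ 2) |>.2 hPs.hasSum
    have s2 : HasSum (fun k : ℤ => ‖P (-k)‖ ^ 2) S :=
      (Equiv.neg ℤ).hasSum_iff (f := fun j => ‖P j‖ ^ 2) |>.2 hPs.hasSum
    have s3 := (s1.mul_left 2).add (s2.mul_left 2)
    have hle : ∀ k : ℤ, ‖P (N - k) - P (-k)‖ ^ 2 ≤ 2 * ‖P (N - k)‖ ^ 2 + 2 * ‖P (-k)‖ ^ 2 := by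
      intro k
      have h1 := norm_sub_le (P (N - k)) (P (-k))
      have h2 := norm_nonneg (P (N - k) - P (-k))
      nlinarith [sq_nonneg (‖P (N - k)‖ - ‖P (-k)‖)]
    rw [← s3.tsum_eq]
    exact (Summable.of_nonneg_of_le (fun _ => by positivity) hle s3.summable).tsum_le_tsum hle
      s3.summable
  obtain ⟨N, hN⟩ := exists_nat_gt (M * (2 * S + 2 * S) / A)
  rw [div_lt_iff₀ hA] at hN
  linarith [key N]
end

section
/- Let g ∈ L¹(ℝ) be a totally positive function of finite type m ≥ 2, identified with its continuous representative, and let a, M ∈ ℕ with a/M < 1. Then Sg = (g(j))_{j∈ℤ} belongs to ℓ²(ℤ) and the Gabor family G(Sg, a, 1/M) is a frame for ℓ²(ℤ): there exist A, B > 0 such that A‖f‖² ≤ Σ_{k∈ℤ} Σ_{l=0}^{M−1} |⟨f, M_{l/M}T_{ka}(Sg)⟩|² ≤ B‖f‖² for all f ∈ ℓ²(ℤ). -/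
/-!
Let `G_k` be the convolution of `k + 1` one-sided exponentials with parameters `δ_0, …, δ_k`.
Fourier inversion, available since `m ≥ 2` makes `ĝ` integrable, identifies `g` with `G_{m-1}`
(`eq_tpChain`). The levels are linked by
`e^{y/δ} G_{k+1}(y) - e^{x/δ} G_{k+1}(x) = (1/δ) ∫_x^y e^{t/δ} G_k(t) dt` with `δ = δ_{k+1}`
(`expPrimitive_conv`).

*Upper frame bound.* Since `e^{x/δ} g(x)` is monotone, `g(j)` is dominated by the mean of `g` over an
adjacent unit cell, so `g|_ℤ ∈ ℓ¹` (`tpChain_summable`), and the Schur test applies (`schur_bound`).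

*Lower frame bound.* Let `c` be finitely supported and `s_k(x) = ∑_n c_n G_k(x - nM)`. Then
`e^{x/δ_0} s_0` is a step function jumping only at the knots `nM`, and by the relation above each
`s_{k+1}` is a weighted primitive of `s_k`. As in Rolle's theorem, zeros and sign alternations pass
from `s_{k+1}` to `s_k` at the cost of one, and each sign change of `s_0` uses up a knot. Suppose
the top level `s` vanishes at a long run of points of spacing `a < M`. There are more zeros than
the knots in the run can account for, so `s` vanishes on a whole gap between consecutive points
(`exists_zero_gap`). This spreads to the next gap, because otherwise two knots would have to lie
within distance less than `M` (`propagate`). Eventually `s`, hence also `s_0`, vanishes around the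
knot `0`, and so the jump of `e^{x/δ_0} s_0` there is zero, i.e. `c_0 = 0` (`coeff_zero_eq_zero`).

By linear algebra the functional `c ↦ c_0` is then a combination of finitely many sampling
functionals: there are weights with `∑_i w_i g(x_i - nM) = δ_{n,0}` for all `n ∈ ℤ`
(`exists_dual_weights`). Together with the orthogonality of the characters `e^{2πi l j/M}` this
writes each `f(j)` as a fixed-size combination of Gabor coefficients (`gaborCoefZ_reconstruct`), and
Cauchy-Schwarz gives the lower bound (`gabor_frame_of_dual`).
-/

open MeasureTheory Complex FourierTransform

/-! ### One-sided exponentials and their convolutions -/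

/-- The one-sided exponential of integral one with Fourier transform `(1 + 2πiδξ)⁻¹`: it is
`δ⁻¹ e^{-x/δ}` on `[0, ∞)` for `δ > 0`, and `|δ|⁻¹ e^{-x/δ}` on `(-∞, 0)` for `δ < 0`. The difference
of indicators treats both signs at once and makes the kernel right-continuous. -/
noncomputable def expKernel (δ x : ℝ) : ℝ :=
  Real.exp (-x / δ) * (1 / δ) * ((if 0 ≤ x then 1 else 0) - (if δ < 0 then 1 else 0))

/-- `tpChain d k` is the totally positive function of finite type `k + 1` with parameters
`d 0, …, d k`, as an iterated convolution of one-sided exponentials. -/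
noncomputable def tpChain (d : ℕ → ℝ) : ℕ → ℝ → ℝ
  | 0 => expKernel (d 0)
  | k + 1 => fun x => ∫ t, tpChain d k t * expKernel (d (k + 1)) (x - t)

/-- `u` solves `δ u' + u = w` in integrated form: `e^{x/δ} u(x)` is a primitive of
`δ⁻¹ e^{x/δ} w(x)`. -/
def ExpPrimitive (δ : ℝ) (u w : ℝ → ℝ) : Prop :=
  ∀ x y : ℝ, Real.exp (y / δ) * u y - Real.exp (x / δ) * u x =
    (1 / δ) * ∫ t in x..y, Real.exp (t / δ) * w t

lemma expKernel_of_pos {δ : ℝ} (hδ : 0 < δ) (x : ℝ) :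
    expKernel δ x = (Set.Ici (0 : ℝ)).indicator (fun x => (1 / δ) * Real.exp (-(1 / δ) * x)) x := by
  have : ¬ δ < 0 := not_lt.2 hδ.le
  have e : -x / δ = -(1 / δ) * x := by ring
  by_cases hx : 0 ≤ x <;> simp [expKernel, Set.indicator, hx, this, e, -one_div, mul_comm]

lemma expKernel_of_neg {δ : ℝ} (hδ : δ < 0) (x : ℝ) :
    expKernel δ x =
      (Set.Iio (0 : ℝ)).indicator (fun x => -(1 / δ) * Real.exp (-(1 / δ) * x)) x := by
  have e : -x / δ = -(1 / δ) * x := by ring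
  by_cases hx : 0 ≤ x <;> simp [expKernel, Set.indicator, hx, hδ, e, -one_div, mul_comm]

lemma expKernel_nonneg {δ : ℝ} (hδ : δ ≠ 0) (x : ℝ) : 0 ≤ expKernel δ x := by
  rcases lt_or_gt_of_ne hδ with h | h
  · rw [expKernel_of_neg h]
    refine Set.indicator_nonneg (fun y _ => ?_) x
    have : 0 < -(1 / δ) := by simpa using h
    positivity
  · rw [expKernel_of_pos h]
    exact Set.indicator_nonneg (fun y _ => by positivity) x

lemma expKernel_integrable {δ : ℝ} (hδ : δ ≠ 0) : Integrable (expKernel δ) := by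
  rcases lt_or_gt_of_ne hδ with h | h
  · rw [funext (expKernel_of_neg h), integrable_indicator_iff measurableSet_Iio]
    have : 0 < -(1 / δ) := by simpa using h
    exact ((integrableOn_exp_mul_Iic this 0).mono_set Set.Iio_subset_Iic_self).const_mul _
  · rw [funext (expKernel_of_pos h), integrable_indicator_iff measurableSet_Ici,
      integrableOn_Ici_iff_integrableOn_Ioi]
    have : -(1 / δ) < 0 := by simpa using h
    exact (integrableOn_exp_mul_Ioi this 0).const_mul _

lemma fourier_expKernel {δ : ℝ} (hδ : δ ≠ 0) (ξ : ℝ) :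
    𝓕 (fun x => (expKernel δ x : ℂ)) ξ = (1 + 2 * (Real.pi : ℂ) * I * (δ : ℂ) * (ξ : ℂ))⁻¹ := by
  have hδ' : (δ : ℂ) ≠ 0 := by exact_mod_cast hδ
  set z : ℂ := -(1 / (δ : ℂ)) - 2 * Real.pi * I * ξ with hz
  have hre : z.re = -(1 / δ) := by
    have : z = ((-(1 / δ) : ℝ) : ℂ) + ((-(2 * Real.pi * ξ) : ℝ) : ℂ) * I := by
      rw [hz]; push_cast; ring
    rw [this]; simp
  have hz0 : z ≠ 0 := by
    intro h; rw [h] at hre; simp [hδ] at hre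
  have hzi : (1 + 2 * (Real.pi : ℂ) * I * (δ : ℂ) * (ξ : ℂ)) = - (δ * z) := by
    rw [hz]; field_simp; ring
  rw [hzi, Real.fourier_real_eq_integral_exp_smul]
  have hexp : ∀ v : ℝ, Complex.exp (↑(-2 * Real.pi * v * ξ) * I) * Complex.exp (-(1 / (δ:ℂ)) * v)
      = Complex.exp (z * v) := by
    intro v; rw [← Complex.exp_add]; congr 1; rw [hz]; push_cast; ring
  rcases lt_or_gt_of_ne hδ with h | h
  · have e : ∀ v : ℝ, Complex.exp (↑(-2 * Real.pi * v * ξ) * I) • (expKernel δ v : ℂ) =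
        (Set.Iio (0 : ℝ)).indicator (fun v : ℝ => -(1 / (δ : ℂ)) * Complex.exp (z * v)) v := by
      intro v
      rw [expKernel_of_neg h]
      by_cases hv : v ∈ Set.Iio (0 : ℝ)
      · rw [Set.indicator_of_mem hv, Set.indicator_of_mem hv, ← hexp]
        push_cast; simp only [smul_eq_mul]; ring
      · rw [Set.indicator_of_notMem hv, Set.indicator_of_notMem hv]; simp
    simp_rw [e]
    rw [integral_indicator measurableSet_Iio, ← integral_Iic_eq_integral_Iio,
      integral_const_mul, integral_exp_mul_complex_Iic (by rw [hre]; simpa using h)]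
    simp; field_simp
  · have e : ∀ v : ℝ, Complex.exp (↑(-2 * Real.pi * v * ξ) * I) • (expKernel δ v : ℂ) =
        (Set.Ici (0 : ℝ)).indicator (fun v : ℝ => (1 / (δ : ℂ)) * Complex.exp (z * v)) v := by
      intro v
      rw [expKernel_of_pos h]
      by_cases hv : v ∈ Set.Ici (0 : ℝ)
      · rw [Set.indicator_of_mem hv, Set.indicator_of_mem hv, ← hexp]
        push_cast; simp only [smul_eq_mul]; ring
      · rw [Set.indicator_of_notMem hv, Set.indicator_of_notMem hv]; simp
    simp_rw [e]
    rw [integral_indicator measurableSet_Ici, integral_Ici_eq_integral_Ioi,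
      integral_const_mul, integral_exp_mul_complex_Ioi (by rw [hre]; simpa using h)]
    simp; field_simp

lemma tpChain_nonneg {d : ℕ → ℝ} (hd : ∀ i, d i ≠ 0) : ∀ k x, 0 ≤ tpChain d k x
  | 0, x => expKernel_nonneg (hd 0) x
  | k + 1, _ => integral_nonneg fun t =>
      mul_nonneg (tpChain_nonneg hd k t) (expKernel_nonneg (hd (k + 1)) _)

lemma tpChain_integrable {d : ℕ → ℝ} (hd : ∀ i, d i ≠ 0) : ∀ k, Integrable (tpChain d k)
  | 0 => expKernel_integrable (hd 0)
  | k + 1 => Integrable.integrable_convolution (ContinuousLinearMap.mul ℝ ℝ)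
      (tpChain_integrable hd k) (expKernel_integrable (hd (k + 1)))

lemma fourier_tpChain {d : ℕ → ℝ} (hd : ∀ i, d i ≠ 0) (ξ : ℝ) : ∀ k,
    𝓕 (fun x => (tpChain d k x : ℂ)) ξ = ∏ i ∈ Finset.range (k + 1),
      (1 + 2 * (Real.pi : ℂ) * I * (d i : ℂ) * (ξ : ℂ))⁻¹
  | 0 => by simpa using! fourier_expKernel (hd 0) ξ
  | k + 1 => by
    rw [Finset.prod_range_succ, ← fourier_tpChain hd ξ k, ← fourier_expKernel (hd (k + 1))]
    refine Eq.trans ?_ (Real.fourier_mul_convolution_eq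
      (f₁ := fun x => (tpChain d k x : ℂ)) (f₂ := fun x => (expKernel (d (k + 1)) x : ℂ))
      (tpChain_integrable hd k).ofReal (expKernel_integrable (hd (k + 1))).ofReal ξ)
    refine congrFun (congrArg _ (funext fun x => ?_)) ξ
    simp only [tpChain, convolution, ContinuousLinearMap.mul_apply']
    simp_rw [← ofReal_mul]
    exact integral_complex_ofReal.symm

lemma exp_integrableOn_Iic {δ : ℝ} (hδ : 0 < δ) {w : ℝ → ℝ} (hw : Integrable w) (x : ℝ) :
    IntegrableOn (fun t => Real.exp (t / δ) * w t) (Set.Iic x) := by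
  refine Integrable.bdd_mul (c := Real.exp (x / δ)) hw.integrableOn
    (by fun_prop) ?_
  filter_upwards [ae_restrict_mem measurableSet_Iic] with t ht
  rw [Real.norm_of_nonneg (Real.exp_nonneg _)]
  have : t ≤ x := ht
  gcongr

lemma exp_integrableOn_Ioi {δ : ℝ} (hδ : δ < 0) {w : ℝ → ℝ} (hw : Integrable w) (x : ℝ) :
    IntegrableOn (fun t => Real.exp (t / δ) * w t) (Set.Ioi x) := by
  refine Integrable.bdd_mul (c := Real.exp (x / δ)) hw.integrableOn
    (by fun_prop) ?_
  filter_upwards [ae_restrict_mem measurableSet_Ioi] with t ht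
  rw [Real.norm_of_nonneg (Real.exp_nonneg _), Real.exp_le_exp]
  exact div_le_div_of_nonpos_of_le hδ.le (le_of_lt ht)

/-- Convolving with a one-sided exponential inverts `δ D + 1`. -/
lemma expPrimitive_conv {δ : ℝ} (hδ : δ ≠ 0) {w : ℝ → ℝ} (hw : Integrable w) :
    ExpPrimitive δ (fun x => ∫ t, w t * expKernel δ (x - t)) w := by
  intro x y
  rcases lt_or_gt_of_ne hδ with h | h
  · have key : ∀ x : ℝ, Real.exp (x / δ) * ∫ t, w t * expKernel δ (x - t) =
        -(1 / δ) * ∫ t in Set.Ioi x, Real.exp (t / δ) * w t := by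
      intro x
      rw [← integral_const_mul, ← integral_const_mul, ← integral_indicator measurableSet_Ioi]
      congr 1
      funext t
      rw [expKernel_of_neg h]
      by_cases ht : x < t
      · rw [Set.indicator_of_mem (by simpa using ht), Set.indicator_of_mem (by simpa using ht)]
        have : Real.exp (t / δ) = Real.exp (x / δ) * Real.exp (-(1 / δ) * (x - t)) := by
          rw [← Real.exp_add]; congr 1; ring
        rw [this]; ring
      · rw [Set.indicator_of_notMem (by simpa using ht), Set.indicator_of_notMem (by simpa using ht)]
        ring
    simp only [key]
    rw [← intervalIntegral.integral_Ioi_sub_Ioi' (exp_integrableOn_Ioi h hw x)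
      (exp_integrableOn_Ioi h hw y)]
    ring
  · have key : ∀ x : ℝ, Real.exp (x / δ) * ∫ t, w t * expKernel δ (x - t) =
        (1 / δ) * ∫ t in Set.Iic x, Real.exp (t / δ) * w t := by
      intro x
      rw [← integral_const_mul, ← integral_const_mul, ← integral_indicator measurableSet_Iic]
      congr 1
      funext t
      rw [expKernel_of_pos h]
      by_cases ht : t ≤ x
      · rw [Set.indicator_of_mem (by simpa using ht), Set.indicator_of_mem (by simpa using ht)]
        have : Real.exp (t / δ) = Real.exp (x / δ) * Real.exp (-(1 / δ) * (x - t)) := by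
          rw [← Real.exp_add]; congr 1; ring
        rw [this]; ring
      · rw [Set.indicator_of_notMem (by simpa using ht), Set.indicator_of_notMem (by simpa using ht)]
        ring
    simp only [key]
    rw [← intervalIntegral.integral_Iic_sub_Iic (exp_integrableOn_Iic h hw x)
      (exp_integrableOn_Iic h hw y)]
    ring

lemma tpChain_expPrimitive {d : ℕ → ℝ} (hd : ∀ i, d i ≠ 0) (k : ℕ) :
    ExpPrimitive (d (k + 1)) (tpChain d (k + 1)) (tpChain d k) :=
  expPrimitive_conv (hd (k + 1)) (tpChain_integrable hd k)

lemma exp_intervalIntegrable (δ : ℝ) {w : ℝ → ℝ} (hw : Integrable w) (x y : ℝ) :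
    IntervalIntegrable (fun t => Real.exp (t / δ) * w t) volume x y :=
  hw.intervalIntegrable.continuousOn_mul (by fun_prop)

lemma ExpPrimitive.continuous {δ : ℝ} {u w : ℝ → ℝ} (h : ExpPrimitive δ u w)
    (hw : Integrable w) : Continuous u := by
  have : u = fun y => Real.exp (-(y / δ)) *
      (Real.exp (0 / δ) * u 0 + (1 / δ) * ∫ t in (0:ℝ)..y, Real.exp (t / δ) * w t) := by
    funext y
    rw [← h 0 y, add_sub_cancel, ← mul_assoc, ← Real.exp_add]
    simp
  rw [this]
  have := intervalIntegral.continuous_primitive (fun a b => exp_intervalIntegrable δ hw a b) 0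
  fun_prop

/-- Two factors already give decay of order `ξ⁻²`; the further factors are bounded by one. -/
lemma integrable_fourier_prod {d : ℕ → ℝ} (hd : ∀ i, d i ≠ 0) : ∀ k : ℕ,
    Integrable (fun ξ : ℝ => ∏ i ∈ Finset.range (k + 2),
      (1 + 2 * (Real.pi : ℂ) * I * (d i : ℂ) * (ξ : ℂ))⁻¹) := by
  have hform : ∀ (i : ℕ) (ξ : ℝ), (1 + 2 * (Real.pi : ℂ) * I * (d i : ℂ) * (ξ : ℂ))
      = ((1 : ℝ) : ℂ) + ((2 * Real.pi * d i * ξ : ℝ) : ℂ) * I := by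
    intro i ξ; push_cast; ring
  have hsq : ∀ (i : ℕ) (ξ : ℝ), ‖(1 + 2 * (Real.pi : ℂ) * I * (d i : ℂ) * (ξ : ℂ))⁻¹‖ ^ 2
      = (1 + (2 * Real.pi * d i * ξ) ^ 2)⁻¹ := by
    intro i ξ
    rw [norm_inv, inv_pow, hform, Complex.sq_norm, Complex.normSq_add_mul_I]; simp
  have hle : ∀ (i : ℕ) (ξ : ℝ), ‖(1 + 2 * (Real.pi : ℂ) * I * (d i : ℂ) * (ξ : ℂ))⁻¹‖ ≤ 1 := by
    intro i ξ
    have := hsq i ξ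
    have h1 : (1 + (2 * Real.pi * d i * ξ) ^ 2)⁻¹ ≤ 1 := inv_le_one_of_one_le₀ (by
      nlinarith [sq_nonneg (2 * Real.pi * d i * ξ)])
    rw [← this] at h1
    exact (sq_le_one_iff₀ (norm_nonneg _)).1 h1
  have hne : ∀ (i : ℕ) (ξ : ℝ), (1 + 2 * (Real.pi : ℂ) * I * (d i : ℂ) * (ξ : ℂ)) ≠ 0 := by
    intro i ξ h
    rw [hform] at h
    have := congrArg Complex.re h
    simp at this
  have hcont : ∀ i, Continuous fun ξ : ℝ => (1 + 2 * (Real.pi : ℂ) * I * (d i : ℂ) * (ξ : ℂ))⁻¹ :=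
    fun i => Continuous.inv₀ (by fun_prop) (hne i)
  have hint : ∀ i, Integrable fun ξ : ℝ => (1 + (2 * Real.pi * d i * ξ) ^ 2)⁻¹ := by
    intro i
    exact integrable_inv_one_add_sq.comp_mul_left' (g := fun x : ℝ => (1 + x ^ 2)⁻¹)
      (R := 2 * Real.pi * d i) (by have := hd i; have := Real.pi_ne_zero; positivity)
  intro k
  induction k with
  | zero =>
    refine Integrable.mono' ((hint 0).add (hint 1)) ?_ ?_
    · exact (continuous_finsetProd _ fun i _ => hcont i).aestronglyMeasurable
    · refine Filter.Eventually.of_forall fun ξ => ?_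
      simp only [Finset.prod_range_succ, Finset.prod_range_zero, one_mul, norm_mul, Pi.add_apply]
      rw [← hsq, ← hsq]
      nlinarith [sq_nonneg (‖(1 + 2 * (Real.pi : ℂ) * I * (d 0 : ℂ) * (ξ : ℂ))⁻¹‖ -
        ‖(1 + 2 * (Real.pi : ℂ) * I * (d 1 : ℂ) * (ξ : ℂ))⁻¹‖),
        norm_nonneg (1 + 2 * (Real.pi : ℂ) * I * (d 0 : ℂ) * (ξ : ℂ))⁻¹,
        norm_nonneg (1 + 2 * (Real.pi : ℂ) * I * (d 1 : ℂ) * (ξ : ℂ))⁻¹]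
  | succ k ih =>
    simp_rw [Finset.prod_range_succ _ (k + 2)]
    exact ih.mul_bdd (c := 1) (hcont _).aestronglyMeasurable
      (Filter.Eventually.of_forall fun ξ => hle _ ξ)

/-- A continuous integrable function is determined by its integrable Fourier transform, so a
totally positive function of finite type at least two is an iterated convolution. -/
lemma eq_tpChain {d : ℕ → ℝ} (hd : ∀ i, d i ≠ 0) (k : ℕ) {g : ℝ → ℂ} (hgcont : Continuous g)
    (hg : Integrable g)
    (hFT : ∀ ξ : ℝ, 𝓕 g ξ = ∏ i ∈ Finset.range (k + 2),
      (1 + 2 * (Real.pi : ℂ) * I * (d i : ℂ) * (ξ : ℂ))⁻¹) (x : ℝ) :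
    g x = tpChain d (k + 1) x := by
  have h1 : 𝓕 g = 𝓕 (fun x => (tpChain d (k + 1) x : ℂ)) := by
    funext ξ; rw [hFT, fourier_tpChain hd]
  have hI : Integrable (𝓕 g) := by
    rw [funext hFT]; exact integrable_fourier_prod hd k
  have hc := (tpChain_expPrimitive hd k).continuous (tpChain_integrable hd k)
  have h2 := hgcont.fourierInv_fourier_eq hg hI
  have h3 := Continuous.fourierInv_fourier_eq (continuous_ofReal.comp hc)
    ((tpChain_integrable hd (k + 1)).ofReal (𝕜 := ℂ)) (by rw [h1] at hI; exact hI)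
  have h4 : g = fun x => (tpChain d (k + 1) x : ℂ) := by
    rw [← h2, h1]; exact h3
  rw [h4]

/-! ### Summability of the samples -/

/-- For `w ≥ 0` the function `e^{x/δ} u(x)` is monotone, in the direction given by the sign of
`δ`. -/
lemma ExpPrimitive.le_exp_mul {δ : ℝ} (hδ : δ ≠ 0) {u w : ℝ → ℝ} (h : ExpPrimitive δ u w)
    (hw : ∀ x, 0 ≤ w x) {x y : ℝ} (hxy : 0 ≤ (y - x) / δ) :
    u x ≤ Real.exp ((y - x) / δ) * u y := by
  have hnn : ∀ t, 0 ≤ Real.exp (t / δ) * w t := fun t => mul_nonneg (Real.exp_nonneg _) (hw t)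
  have h1 : 0 ≤ (1 / δ) * ∫ t in x..y, Real.exp (t / δ) * w t := by
    rcases lt_or_gt_of_ne hδ with hn | hp
    · have hyx : y ≤ x := by
        by_contra hc
        exact absurd hxy (not_le.2 (div_neg_of_pos_of_neg (by linarith) hn))
      rw [intervalIntegral.integral_symm]
      have := intervalIntegral.integral_nonneg_of_forall (μ := volume) hyx hnn
      have h2 : 1 / δ < 0 := by simpa using hn
      nlinarith
    · have hyx : x ≤ y := by
        by_contra hc
        exact absurd hxy (not_le.2 (div_neg_of_neg_of_pos (by linarith) hp))
      have := intervalIntegral.integral_nonneg_of_forall (μ := volume) hyx hnn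
      positivity
  rw [← h x y, sub_nonneg] at h1
  have e : Real.exp (y / δ) = Real.exp (x / δ) * Real.exp ((y - x) / δ) := by
    rw [← Real.exp_add]; congr 1; ring
  rw [e, mul_assoc] at h1
  exact le_of_mul_le_mul_left h1 (Real.exp_pos _)

lemma tpChain_summable {d : ℕ → ℝ} (hd : ∀ i, d i ≠ 0) (k : ℕ) :
    Summable fun j : ℤ => tpChain d (k + 1) j := by
  set G := tpChain d (k + 1) with hG
  set δ := d (k + 1) with hδ
  have hδ0 : δ ≠ 0 := hd _
  have hI : Integrable G := tpChain_integrable hd _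
  have hR : ExpPrimitive δ G (tpChain d k) := tpChain_expPrimitive hd k
  have hGn : ∀ x, 0 ≤ G x := tpChain_nonneg hd _
  have hcell : Summable fun j : ℤ => ∫ x in Set.Ioc (j : ℝ) (j + 1), G x := by
    refine (hasSum_integral_iUnion (fun _ => measurableSet_Ioc)
      (Set.pairwise_disjoint_Ioc_intCast ℝ) hI.integrableOn).summable
  -- `G j` is dominated by its mean over an adjacent unit cell as soon as it is so pointwise
  have hmean : ∀ (j i : ℤ), (∀ x ∈ Set.Ioc (i : ℝ) (i + 1), 0 ≤ (x - j) / δ ∧ |x - j| ≤ 1) →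
      G j ≤ Real.exp (1 / |δ|) * ∫ x in Set.Ioc (i : ℝ) (i + 1), G x := by
    intro j i hx
    have h1 : ∫ x in Set.Ioc (i : ℝ) (i + 1), G j = G j := by simp
    rw [← h1, ← integral_const_mul]
    refine setIntegral_mono_on (by simp) (hI.integrableOn.const_mul _) measurableSet_Ioc ?_
    intro x hxm
    obtain ⟨h2, h3⟩ := hx x hxm
    refine (hR.le_exp_mul hδ0 (tpChain_nonneg hd k) h2).trans ?_
    refine mul_le_mul_of_nonneg_right (Real.exp_le_exp.2 ?_) (hGn x)
    rw [← abs_of_nonneg h2, abs_div]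
    gcongr
  rcases lt_or_gt_of_ne hδ0 with hn | hp
  · refine Summable.of_nonneg_of_le (fun j => hGn j) (fun j => hmean j (j - 1) ?_)
      (((Equiv.subRight (1 : ℤ)).summable_iff.2 hcell).mul_left (Real.exp (1 / |δ|)))
    intro x hx
    simp only [Set.mem_Ioc, Int.cast_sub, Int.cast_one, sub_add_cancel] at hx
    exact ⟨div_nonneg_of_nonpos (by linarith) hn.le, abs_le.2 ⟨by linarith, by linarith⟩⟩
  · refine Summable.of_nonneg_of_le (fun j => hGn j) (fun j => hmean j j ?_)
      (hcell.mul_left (Real.exp (1 / |δ|)))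
    intro x hx
    simp only [Set.mem_Ioc] at hx
    exact ⟨div_nonneg (by linarith) hp.le, abs_le.2 ⟨by linarith, by linarith⟩⟩

/-! ### Sign changes and zeros of exponential splines -/

/-- If `e^{x/δ} u` increases (`ε > 0`) or decreases (`ε < 0`) from `x` to `y`, then `δ w` takes
the corresponding strict sign in between. -/
lemma ExpPrimitive.exists_sign {δ : ℝ} (hδ : δ ≠ 0) {u w : ℝ → ℝ} (h : ExpPrimitive δ u w)
    {ε x y : ℝ} (hxy : x < y)
    (hs : 0 < ε * (Real.exp (y / δ) * u y - Real.exp (x / δ) * u x)) :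
    ∃ t ∈ Set.Ioo x y, 0 < ε * δ * w t := by
  by_contra! hc
  rw [h x y, ← mul_assoc, ← intervalIntegral.integral_const_mul,
    intervalIntegral.integral_of_le hxy.le, integral_Ioc_eq_integral_Ioo] at hs
  refine absurd hs (not_lt.2 (setIntegral_nonpos measurableSet_Ioo fun t ht => ?_))
  have e : ε * (1 / δ) * (Real.exp (t / δ) * w t) =
      (Real.exp (t / δ) / δ ^ 2) * (ε * δ * w t) := by
    field_simp
  rw [e]
  exact mul_nonpos_of_nonneg_of_nonpos (by positivity) (hc t ht)

/-- Between two zeros of `u` enclosing a nonzero value, `w` takes both strict signs. -/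
lemma ExpPrimitive.exists_sign_of_zeros {δ : ℝ} (hδ : δ ≠ 0) {u w : ℝ → ℝ}
    (h : ExpPrimitive δ u w) {x y z σ : ℝ} (hx : u x = 0) (hy : u y = 0)
    (hz : z ∈ Set.Ioo x y) (hu : u z ≠ 0) (hσ : σ ≠ 0) :
    ∃ t ∈ Set.Ioo x y, 0 < σ * w t := by
  have e : σ / δ * δ = σ := div_mul_cancel₀ _ hδ
  have hne : σ / δ * u z ≠ 0 := by positivity
  have hE := Real.exp_pos (z / δ)
  rcases lt_or_gt_of_ne hne with hv | hv
  · obtain ⟨t, ht, hw⟩ := h.exists_sign hδ (ε := σ / δ) hz.2 (by rw [hy]; nlinarith)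
    exact ⟨t, ⟨hz.1.trans ht.1, ht.2⟩, by rwa [e] at hw⟩
  · obtain ⟨t, ht, hw⟩ := h.exists_sign hδ (ε := σ / δ) hz.1 (by rw [hx]; nlinarith)
    exact ⟨t, ⟨ht.1, ht.2.trans hz.2⟩, by rwa [e] at hw⟩

/-- `u` has strictly alternating signs at `N + 1` increasing points of `(α, β)`. The sign of `ε`
is the sign of `u` at the first point; only the values `t 0, …, t N` matter. -/
def HasAlternation (u : ℝ → ℝ) (N : ℕ) (α β : ℝ) : Prop :=
  ∃ (t : ℕ → ℝ) (ε : ℝ), α < t 0 ∧ t N < β ∧ (∀ i < N, t i < t (i + 1)) ∧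
    ∀ i ≤ N, 0 < ε * (-1) ^ i * u (t i)

/-- Rolle's principle for sign changes: passing from `u` to `w` loses at most one. -/
lemma HasAlternation.step {δ : ℝ} (hδ : δ ≠ 0) {u w : ℝ → ℝ} (h : ExpPrimitive δ u w)
    {N : ℕ} {α β : ℝ} (hu : HasAlternation u (N + 1) α β) : HasAlternation w N α β := by
  obtain ⟨t, ε, h0, h1, hmono, hsign⟩ := hu
  have : ∀ i, ∃ τ, i ≤ N → τ ∈ Set.Ioo (t i) (t (i + 1)) ∧ 0 < (-(ε * δ)) * (-1) ^ i * w τ := by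
    intro i
    by_cases hi : i ≤ N
    · obtain ⟨τ, hτ, hw⟩ := h.exists_sign hδ (ε := ε * (-1) ^ (i + 1)) (hmono i (by omega)) (by
        have p1 := mul_pos (Real.exp_pos (t (i + 1) / δ)) (hsign (i + 1) (by omega))
        have p0 := mul_pos (Real.exp_pos (t i / δ)) (hsign i (by omega))
        rw [pow_succ] at p1 ⊢
        nlinarith)
      refine ⟨τ, fun _ => ⟨hτ, ?_⟩⟩
      rw [pow_succ] at hw
      nlinarith
    · exact ⟨0, fun h => absurd h hi⟩
  choose τ hτ using this
  refine ⟨τ, -(ε * δ), h0.trans (hτ 0 (by omega)).1.1, (hτ N le_rfl).1.2.trans h1,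
    fun i hi => ?_, fun i hi => (hτ i hi).2⟩
  exact (hτ i hi.le).1.2.trans (hτ (i + 1) hi).1.1

/-- If `u` vanishes at `N + 2` points but on none of the `N + 1` gaps, then `w` takes both signs in
each gap, and `N` sign changes can be selected. -/
lemma hasAlternation_of_zeros {δ : ℝ} (hδ : δ ≠ 0) {u w : ℝ → ℝ} (h : ExpPrimitive δ u w)
    {N : ℕ} {x : ℕ → ℝ} (hx : ∀ i ≤ N + 1, u (x i) = 0)
    (hne : ∀ i ≤ N, ∃ z ∈ Set.Ioo (x i) (x (i + 1)), u z ≠ 0) :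
    HasAlternation w N (x 0) (x (N + 1)) := by
  have : ∀ i, ∃ t, i ≤ N → t ∈ Set.Ioo (x i) (x (i + 1)) ∧ 0 < 1 * (-1) ^ i * w t := by
    intro i
    by_cases hi : i ≤ N
    · obtain ⟨z, hz, hu⟩ := hne i hi
      obtain ⟨t, ht, hw⟩ := h.exists_sign_of_zeros hδ (hx i (by omega)) (hx (i + 1) (by omega))
        hz hu (σ := 1 * (-1) ^ i) (by simp)
      exact ⟨t, fun _ => ⟨ht, hw⟩⟩
    · exact ⟨0, fun h => absurd h hi⟩
  choose t ht using this
  exact ⟨t, 1, (ht 0 (by omega)).1.1, (ht N le_rfl).1.2,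
    fun i hi => (ht i hi.le).1.2.trans (ht (i + 1) hi).1.1, fun i hi => (ht i hi).2⟩

/-- A sequence of functions with the properties of the exponential splines
`s k = ∑ n, c n • tpChain d k (· - n M)` that the zero counting needs: each is a weighted primitive
of the preceding one, and `e^{x/d 0} s 0` is a right-continuous step function whose jumps lie at the
knots `n M`, so that it is constant from `x` to `y` when `(x, y]` contains no knot. -/
structure IsSplineChain (d : ℕ → ℝ) (M : ℝ) (s : ℕ → ℝ → ℝ) : Prop where
  prim : ∀ k, ExpPrimitive (d (k + 1)) (s (k + 1)) (s k)
  integrable : ∀ k, Integrable (s k)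
  rightCont : ∀ k x, ContinuousWithinAt (s k) (Set.Ioi x) x
  locConst : ∀ x y, x < y → (∀ n : ℤ, ¬ (x < n * M ∧ n * M ≤ y)) →
    Real.exp (x / d 0) * s 0 x = Real.exp (y / d 0) * s 0 y

namespace IsSplineChain

variable {d : ℕ → ℝ} {M : ℝ} {s : ℕ → ℝ → ℝ}

lemma alternation_zero (h : IsSplineChain d M s) (hd : ∀ i, d i ≠ 0) {N : ℕ} {α β : ℝ} :
    ∀ k, HasAlternation (s k) (N + k) α β → HasAlternation (s 0) N α β
  | 0, ha => ha
  | k + 1, ha => alternation_zero h hd k (HasAlternation.step (hd (k + 1)) (h.prim k) ha)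

/-- A sign change of the bottom level uses up a knot. -/
lemma exists_knot (h : IsSplineChain d M s) {ε x y : ℝ} (hxy : x < y) (hx : ε * s 0 x ≤ 0)
    (hy : 0 < ε * s 0 y) : ∃ n : ℤ, x < n * M ∧ n * M ≤ y := by
  by_contra! hc
  have := h.locConst x y hxy (fun n hn => absurd hn.2 (not_le.2 (hc n hn.1)))
  have h1 := mul_pos (Real.exp_pos (y / d 0)) hy
  have h2 := mul_nonneg (Real.exp_pos (x / d 0)).le (neg_nonneg.2 hx)
  have h3 : ε * (Real.exp (x / d 0) * s 0 x) = ε * (Real.exp (y / d 0) * s 0 y) := by rw [this]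
  nlinarith

/-- The `N + 1` sign changes need `N + 1` distinct knots inside `(α, β)`. -/
lemma knots_le (h : IsSplineChain d M s) (hM : 0 < M) {N : ℕ} {α β : ℝ}
    (ha : HasAlternation (s 0) (N + 1) α β) : N * M < β - α := by
  obtain ⟨t, ε, h0, h1, hmono, hsign⟩ := ha
  have : ∀ i, ∃ n : ℤ, i ≤ N → t i < n * M ∧ n * M ≤ t (i + 1) := by
    intro i
    by_cases hi : i ≤ N
    · obtain ⟨n, hn⟩ := h.exists_knot (ε := ε * (-1) ^ (i + 1)) (hmono i (by omega)) (by
        have := hsign i (by omega); rw [pow_succ]; nlinarith) (hsign (i + 1) (by omega))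
      exact ⟨n, fun _ => hn⟩
    · exact ⟨0, fun h => absurd h hi⟩
  choose n hn using this
  have hgrow : ∀ i ≤ N, n 0 + i ≤ n i := by
    intro i
    induction i with
    | zero => simp
    | succ i ih =>
      intro hi
      have h2 := ih (by omega)
      have h3 : (n i : ℝ) * M < n (i + 1) * M :=
        (hn i (by omega)).2.trans_lt (hn (i + 1) hi).1
      have h4 : n i < n (i + 1) := by exact_mod_cast lt_of_mul_lt_mul_right h3 hM.le
      push_cast; omega
  have h5 : ((n 0 : ℝ) + N) * M ≤ n N * M := by
    have := hgrow N le_rfl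
    have h6 : ((n 0 : ℝ) + N) ≤ n N := by exact_mod_cast this
    exact mul_le_mul_of_nonneg_right h6 hM.le
  have h7 := (hn 0 (by omega)).1
  have h8 := (hn N le_rfl).2
  nlinarith

/-- With more zeros than the knots in the interval can account for, some gap between consecutive
zeros consists of zeros. -/
lemma exists_zero_gap (h : IsSplineChain d M s) (hd : ∀ i, d i ≠ 0) (hM : 0 < M) {k N : ℕ}
    {x : ℕ → ℝ} (hN : x (N + k + 2) - x 0 ≤ N * M)
    (hx : ∀ i ≤ N + k + 2, s (k + 1) (x i) = 0) :
    ∃ i ≤ N + k + 1, ∀ z ∈ Set.Ioo (x i) (x (i + 1)), s (k + 1) z = 0 := by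
  by_contra! hc
  have h1 := hasAlternation_of_zeros (hd (k + 1)) (h.prim k) (N := N + k + 1) (x := x) hx hc
  have h2 := h.alternation_zero hd (N := N + 1) k (by convert h1 using 1; omega)
  have h3 := h.knots_le hM h2
  exact absurd h3 (not_lt.2 hN)

/-- Right-continuity makes the vanishing of the integrals of `s k` imply that of `s k`, also at the
left endpoint. -/
lemma vanish_pred (h : IsSplineChain d M s) (hd : ∀ i, d i ≠ 0) {k : ℕ} {q p : ℝ}
    (hz : ∀ z ∈ Set.Ico q p, s (k + 1) z = 0) : ∀ z ∈ Set.Ico q p, s k z = 0 := by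
  intro z hzm
  by_contra hne
  have hpos : 0 < s k z * s k z := mul_self_pos.2 hne
  have hev : ∀ᶠ t in nhdsWithin z (Set.Ioi z), 0 < s k z * s k t :=
    ((h.rightCont k z).const_mul (s k z)).eventually (lt_mem_nhds hpos)
  obtain ⟨y, hy, hyt⟩ := (mem_nhdsGT_iff_exists_Ioo_subset' hzm.2).1 hev
  obtain ⟨y', h1, h2⟩ := exists_between (lt_min hy hzm.2)
  have hp := h.prim k z y'
  rw [hz z hzm, hz y' ⟨hzm.1.trans h1.le, h2.trans_le (min_le_right _ _)⟩] at hp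
  have hI := (exp_intervalIntegrable (d (k + 1)) (h.integrable k) z y').const_mul (s k z)
  have := intervalIntegral.intervalIntegral_pos_of_pos_on hI (fun t ht => by
    have h3 : 0 < s k z * s k t := hyt ⟨ht.1, ht.2.trans (h2.trans_le (min_le_left _ _))⟩
    have := mul_pos (Real.exp_pos (t / d (k + 1))) h3
    nlinarith) h1
  rw [intervalIntegral.integral_const_mul] at this
  have h0 : ∫ t in z..y', Real.exp (t / d (k + 1)) * s k t = 0 := by
    have h4 : 1 / d (k + 1) ≠ 0 := one_div_ne_zero (hd _)
    simp only [mul_zero, sub_zero] at hp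
    exact (mul_eq_zero.1 hp.symm).resolve_left h4
  rw [h0] at this
  simp at this

lemma vanish_zero (h : IsSplineChain d M s) (hd : ∀ i, d i ≠ 0) {q p : ℝ} :
    ∀ k, (∀ z ∈ Set.Ico q p, s k z = 0) → ∀ z ∈ Set.Ico q p, s 0 z = 0
  | 0, hz => hz
  | k + 1, hz => vanish_zero h hd k (h.vanish_pred hd hz)

/-- Past an interval `[q, p)` of zeros, a sign change of `s k` before `q + M` would force two knots
of the bottom level within `(q, q + M)`. The zero at `q` makes up for the loss in Rolle's
principle at each level. -/
lemma no_alternation_after_zero (h : IsSplineChain d M s) (hd : ∀ i, d i ≠ 0) (hM : 0 < M)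
    {q p β : ℝ} (hqp : q < p) (hβ : β - q ≤ M) : ∀ k, (∀ z ∈ Set.Ico q p, s k z = 0) →
      ¬ HasAlternation (s k) 1 q β
  | 0, hz, ⟨t, ε, h0, h1, hmono, hsign⟩ => by
    have s0 := hsign 0 (by omega)
    have s1 := hsign 1 le_rfl
    obtain ⟨n, hn⟩ := h.exists_knot (ε := ε) h0 (by rw [hz q ⟨le_rfl, hqp⟩]; simp)
      (by simpa using s0)
    obtain ⟨n', hn'⟩ := h.exists_knot (ε := -ε) (hmono 0 (by omega)) (by simpa using s0.le)
      (by simpa using s1)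
    have h3 : (n : ℝ) * M < n' * M := hn.2.trans_lt hn'.1
    have h4 : n < n' := by exact_mod_cast lt_of_mul_lt_mul_right h3 hM.le
    have h5 : (n : ℝ) + 1 ≤ n' := by exact_mod_cast h4
    have h6 := mul_le_mul_of_nonneg_right h5 hM.le
    have := hn'.2
    simp only [zero_add] at this
    linarith [hn.1]
  | k + 1, hz, ⟨t, ε, h0, h1, hmono, hsign⟩ => by
    refine no_alternation_after_zero h hd hM hqp hβ k (h.vanish_pred hd hz) ?_
    have s0 := hsign 0 (by omega)
    have s1 := hsign 1 le_rfl
    have m0 := hmono 0 (by omega)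
    simp only [pow_zero, mul_one, pow_one, zero_add, mul_neg] at s0 s1 m0
    have p0 := mul_pos (Real.exp_pos (t 0 / d (k + 1))) s0
    have p1 := mul_pos (Real.exp_pos (t 1 / d (k + 1))) s1
    obtain ⟨τ₀, hτ₀, hw₀⟩ := (h.prim k).exists_sign (hd _) (ε := ε) h0 (by
      rw [hz q ⟨le_rfl, hqp⟩]; nlinarith)
    obtain ⟨τ₁, hτ₁, hw₁⟩ := (h.prim k).exists_sign (hd _) (ε := -ε) m0 (by nlinarith)
    refine ⟨fun i => if i = 0 then τ₀ else τ₁, ε * d (k + 1), by simpa using hτ₀.1,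
      by simpa using hτ₁.2.trans h1, ?_, ?_⟩
    · intro i hi
      obtain rfl : i = 0 := by omega
      simpa using hτ₀.2.trans hτ₁.1
    · intro i hi
      interval_cases i
      · simpa using hw₀
      · simpa using hw₁

/-- Vanishing on `[q, p)` extends across the next gap `(p, p')` between zeros when `p' - q ≤ M`. -/
lemma propagate (h : IsSplineChain d M s) (hd : ∀ i, d i ≠ 0) (hM : 0 < M) {k : ℕ}
    {q p p' : ℝ} (hqp : q < p) (hM' : p' - q ≤ M) (hz : ∀ z ∈ Set.Ico q p, s (k + 1) z = 0)
    (hp : s (k + 1) p = 0) (hp' : s (k + 1) p' = 0) : ∀ z ∈ Set.Ioo p p', s (k + 1) z = 0 := by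
  intro z hzm
  by_contra hne
  obtain ⟨t, ht, hw⟩ := (h.prim k).exists_sign_of_zeros (hd _) hp hp' hzm hne one_ne_zero
  obtain ⟨t', ht', hw'⟩ := (h.prim k).exists_sign_of_zeros (hd _) hp hp' hzm hne
    (neg_ne_zero.2 one_ne_zero)
  have key : ∀ (t t' ε : ℝ), t ∈ Set.Ioo p p' → t' ∈ Set.Ioo p p' → 0 < ε * s k t →
      0 < -ε * s k t' → ¬ t < t' := by
    intro t t' ε ht ht' hw hw' hlt
    refine h.no_alternation_after_zero hd hM hqp hM' k (h.vanish_pred hd hz)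
      ⟨fun i => if i = 0 then t else t', ε, by simpa using hqp.trans ht.1,
        by simpa using ht'.2, ?_, ?_⟩
    · intro i hi
      obtain rfl : i = 0 := by omega
      simpa using hlt
    · intro i hi
      interval_cases i
      · simpa using hw
      · simpa using hw'
  rcases lt_trichotomy t t' with hlt | heq | hgt
  · exact key t t' 1 ht ht' hw hw' hlt
  · rw [heq] at hw; linarith
  · exact key t' t (-1) ht' ht hw' (by simpa using hw) hgt

/-- Once the spline vanishes on one gap of the sample grid, it vanishes on all later ones. Since
`a + 1 ≤ M`, a unit interval of zeros at the end of a gap suffices to cross the next one. -/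
lemma vanish_tail (h : IsSplineChain d M s) (hd : ∀ i, d i ≠ 0) (hM : 0 < M) {k K i₀ : ℕ}
    {b a : ℝ} (ha : 1 ≤ a) (haM : a + 1 ≤ M)
    (hx : ∀ i ≤ K, s (k + 1) (b + i * a) = 0)
    (hgap : ∀ z ∈ Set.Ioo (b + i₀ * a) (b + (i₀ + 1 : ℕ) * a), s (k + 1) z = 0) :
    ∀ i, i₀ ≤ i → i + 1 ≤ K → ∀ z ∈ Set.Ico (b + i * a) (b + (i + 1 : ℕ) * a),
      s (k + 1) z = 0 := by
  intro i hi
  induction i, hi using Nat.le_induction with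
  | base =>
    intro hK z hz
    rcases hz.1.eq_or_lt with he | hl
    · rw [← he]; exact hx _ (by omega)
    · exact hgap z ⟨hl, hz.2⟩
  | succ i hi ih =>
    intro hK z hz
    rcases hz.1.eq_or_lt with he | hl
    · rw [← he]; exact hx _ (by omega)
    · refine h.propagate hd hM (q := b + (i + 1 : ℕ) * a - 1) (by linarith) ?_ ?_
        (hx (i + 1) (by omega)) (hx (i + 1 + 1) hK) z ⟨hl, hz.2⟩
      · push_cast; linarith
      · intro y hy
        refine ih (by omega) y ⟨?_, hy.2⟩
        have := hy.1
        push_cast at this ⊢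
        linarith

end IsSplineChain

/-! ### Sampling of exponential splines and dual weights -/

/-- The exponential spline `∑ n, c n • tpChain d k (· - n M)` with knots in `Mℤ`. -/
noncomputable def splineSum (d : ℕ → ℝ) (M : ℝ) (c : ℤ →₀ ℝ) (k : ℕ) (x : ℝ) : ℝ :=
  ∑ n ∈ c.support, c n * tpChain d k (x - n * M)

lemma exp_mul_expKernel (δ x : ℝ) : Real.exp (x / δ) * expKernel δ x =
    (1 / δ) * ((if 0 ≤ x then 1 else 0) - (if δ < 0 then 1 else 0)) := by
  rw [expKernel, ← mul_assoc, ← mul_assoc, ← Real.exp_add]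
  have : x / δ + -x / δ = 0 := by ring
  rw [this]; simp

lemma expKernel_rightCont (δ x : ℝ) : ContinuousWithinAt (expKernel δ) (Set.Ioi x) x := by
  have h1 : ContinuousWithinAt (fun x : ℝ => if 0 ≤ x then (1 : ℝ) else 0) (Set.Ioi x) x := by
    by_cases hx : 0 ≤ x
    · refine (continuousWithinAt_const (b := (1 : ℝ))).congr (fun y hy => ?_) (by simp [hx])
      have : 0 ≤ y := hx.trans (le_of_lt hy)
      simp [this]
    · have : (fun x : ℝ => if 0 ≤ x then (1 : ℝ) else 0) =ᶠ[nhds x] fun _ => 0 := by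
        filter_upwards [gt_mem_nhds (not_le.1 hx)] with y hy
        simp [hy]
      exact (continuousAt_const.congr this.symm).continuousWithinAt
  unfold expKernel
  refine ContinuousWithinAt.mul ?_ (h1.sub continuousWithinAt_const)
  exact Continuous.continuousWithinAt (by fun_prop)

/-- The bottom level times `e^{x/d 0}` is a step function with jump
`c n e^{nM/d 0} / d 0` at the knot `n M`. -/
lemma splineSum_zero_sub (d : ℕ → ℝ) (M : ℝ) (c : ℤ →₀ ℝ) (x y : ℝ) :
    Real.exp (y / d 0) * splineSum d M c 0 y - Real.exp (x / d 0) * splineSum d M c 0 x =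
      ∑ n ∈ c.support, c n * Real.exp (n * M / d 0) * (1 / d 0) *
        ((if n * M ≤ y then 1 else 0) - (if n * M ≤ x then 1 else 0)) := by
  have key : ∀ x, Real.exp (x / d 0) * splineSum d M c 0 x =
      ∑ n ∈ c.support, c n * Real.exp (n * M / d 0) * (1 / d 0) *
        ((if n * M ≤ x then 1 else 0) - (if d 0 < 0 then 1 else 0)) := by
    intro x
    rw [splineSum, Finset.mul_sum]
    refine Finset.sum_congr rfl fun n _ => ?_
    have e : Real.exp (x / d 0) = Real.exp (n * M / d 0) * Real.exp ((x - n * M) / d 0) := by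
      rw [← Real.exp_add]; congr 1; ring
    have := exp_mul_expKernel (d 0) (x - n * M)
    simp only [sub_nonneg] at this
    rw [tpChain, mul_assoc (c n * _), ← this, e]
    ring
  rw [key, key, ← Finset.sum_sub_distrib]
  exact Finset.sum_congr rfl fun n _ => by ring

lemma tpChain_rightCont {d : ℕ → ℝ} (hd : ∀ i, d i ≠ 0) (k : ℕ) (x : ℝ) :
    ContinuousWithinAt (tpChain d k) (Set.Ioi x) x := by
  cases k with
  | zero => exact expKernel_rightCont _ _
  | succ k => exact ((tpChain_expPrimitive hd k).continuous
      (tpChain_integrable hd k)).continuousWithinAt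

lemma splineSum_isSplineChain {d : ℕ → ℝ} (hd : ∀ i, d i ≠ 0) (M : ℝ) (c : ℤ →₀ ℝ) :
    IsSplineChain d M (splineSum d M c) where
  prim k := by
    intro x y
    simp only [splineSum, Finset.mul_sum]
    rw [intervalIntegral.integral_finsetSum, Finset.mul_sum, ← Finset.sum_sub_distrib]
    · refine Finset.sum_congr rfl fun n _ => ?_
      have h1 := tpChain_expPrimitive hd k (x - n * M) (y - n * M)
      rw [← intervalIntegral.integral_comp_sub_right
        (fun t => Real.exp (t / d (k + 1)) * tpChain d k t)] at h1
      have e : ∀ t, Real.exp (t / d (k + 1)) =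
          Real.exp (n * M / d (k + 1)) * Real.exp ((t - n * M) / d (k + 1)) := by
        intro t; rw [← Real.exp_add]; congr 1; ring
      have h2 : ∫ t in x..y, Real.exp (t / d (k + 1)) * (c n * tpChain d k (t - n * M)) =
          c n * Real.exp (n * M / d (k + 1)) *
            ∫ t in x..y, Real.exp ((t - n * M) / d (k + 1)) * tpChain d k (t - n * M) := by
        rw [← intervalIntegral.integral_const_mul]
        congr 1; funext t; rw [e t]; ring
      rw [h2, mul_left_comm (1 / d (k + 1)), ← h1, e x, e y]
      ring
    · intro n _
      exact exp_intervalIntegrable (d (k + 1))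
        (((tpChain_integrable hd k).comp_sub_right (n * M)).const_mul (c n)) x y
  integrable k := integrable_finsetSum _ fun n _ =>
    ((tpChain_integrable hd k).comp_sub_right (n * M)).const_mul (c n)
  rightCont k x := by
    unfold splineSum
    refine tendsto_finsetSum _ fun n _ => Filter.Tendsto.const_mul (c n) ?_
    have h1 := tpChain_rightCont hd k (x - n * M)
    refine ContinuousWithinAt.comp (t := Set.Ioi (x - n * M)) h1
      (Continuous.continuousWithinAt (by fun_prop)) ?_
    intro y hy
    have : x < y := hy
    simpa using this
  locConst x y hxy hn := by
    rw [eq_comm, ← sub_eq_zero, splineSum_zero_sub]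
    refine Finset.sum_eq_zero fun n _ => ?_
    have : (n * M ≤ y) ↔ (n * M ≤ x) :=
      ⟨fun h => by by_contra hc; exact hn n ⟨not_le.1 hc, h⟩, fun h => h.trans hxy.le⟩
    simp [this]

/-- A spline vanishing at the sample points `b + (i - R - 1) a`, `0 ≤ i ≤ R + 2`, where
`R = (k + 2)(M + 1)`, has no jump at the knot `0`. The first `R` gaps have total length
`R a ≤ (k + 2) M ^ 2`, which is short enough for one of them to consist of zeros; the last two
gaps surround `0`. -/
lemma coeff_zero_eq_zero {d : ℕ → ℝ} (hd : ∀ i, d i ≠ 0) (k : ℕ) {a M : ℕ} (ha : 0 < a)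
    (haM : a < M) {b : ℤ} (hb0 : 0 ≤ b) (hba : b < a) (c : ℤ →₀ ℝ)
    (hc : ∀ i ≤ (k + 2) * (M + 1) + 2, splineSum d M c (k + 1)
      ((b - ((k + 2) * (M + 1) + 1) * a : ℝ) + i * a) = 0) : c 0 = 0 := by
  have h := splineSum_isSplineChain hd (M : ℝ) c
  have hM0 : (0 : ℝ) < M := by exact_mod_cast (by omega : 0 < M)
  have ha1 : (1 : ℝ) ≤ a := by exact_mod_cast ha
  have haM1 : (a : ℝ) + 1 ≤ M := by exact_mod_cast haM
  set R := (k + 2) * (M + 1) with hR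
  set x₀ : ℝ := b - ((k + 2) * (M + 1) + 1) * a with hx₀
  have hRr : (R : ℝ) = (k + 2) * (M + 1) := by rw [hR]; push_cast; ring
  have hRN : (k + 2) * M + k + 2 = R := by rw [hR]; ring
  obtain ⟨i₀, hi₀, hgap⟩ := h.exists_zero_gap hd hM0 (k := k) (N := (k + 2) * M)
    (x := fun i => x₀ + i * a) (by
      simp only [hRN, hRr]
      push_cast
      nlinarith [(by positivity : (0 : ℝ) < (k + 2) * M)]) (by
      intro i hi; exact hc i (by omega))
  have hv := h.vanish_tail hd hM0 (K := R + 2) ha1 haM1 hc hgap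
  -- the two cells adjacent to the sample point `b` cover `[-1, 0]`
  have e1 : x₀ + (R : ℕ) * a = b - a := by rw [hx₀, hRr]; ring
  have e2 : x₀ + (R + 1 : ℕ) * a = b := by rw [hx₀]; push_cast; rw [hRr]; ring
  have e3 : x₀ + (R + 1 + 1 : ℕ) * a = b + a := by rw [hx₀]; push_cast; rw [hRr]; ring
  have hv1 := hv R (by omega) (by omega)
  have hv2 := hv (R + 1) (by omega) (by omega)
  rw [e1, e2] at hv1
  rw [e2, e3] at hv2
  have hvan : ∀ z ∈ Set.Ico (b - a : ℝ) (b + a), splineSum d M c (k + 1) z = 0 := by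
    intro z hz
    rcases lt_or_ge z b with hzb | hzb
    · exact hv1 z ⟨hz.1, hzb⟩
    · exact hv2 z ⟨hzb, hz.2⟩
  have hv0 := h.vanish_zero hd (k + 1) hvan
  have hb0' : (0 : ℝ) ≤ b := by exact_mod_cast hb0
  have hba' : (b : ℝ) + 1 ≤ a := by exact_mod_cast hba
  have hj := splineSum_zero_sub d M c (-1) 0
  rw [hv0 0 ⟨by linarith, by linarith⟩, hv0 (-1) ⟨by linarith, by linarith⟩] at hj
  have hM2 : (2 : ℝ) ≤ M := by linarith
  rw [Finset.sum_eq_single 0] at hj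
  · have : ¬ (0 : ℝ) ≤ -1 := by norm_num
    simp [this, hd 0] at hj
    exact hj
  · intro n _ hn
    rcases lt_or_gt_of_ne hn with hneg | hpos
    · have h1 : (n : ℝ) ≤ -1 := by exact_mod_cast Int.le_sub_one_of_lt hneg
      have h2 : (n : ℝ) * M ≤ -1 := by nlinarith
      have h3 : (n : ℝ) * M ≤ 0 := by linarith
      simp [h2, h3]
    · have h1 : (1 : ℝ) ≤ n := by exact_mod_cast hpos
      have h2 : ¬ (n : ℝ) * M ≤ -1 := by nlinarith
      have h3 : ¬ (n : ℝ) * M ≤ 0 := by nlinarith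
      simp [h2, h3]
  · intro h0
    simp [Finsupp.notMem_support_iff.1 h0]

/-- The sampling functionals at the points of `coeff_zero_eq_zero` determine `c 0`, so they span
the functional `c ↦ c 0`; testing on unit vectors gives the duality relation. -/
lemma exists_dual_weights {d : ℕ → ℝ} (hd : ∀ i, d i ≠ 0) (k : ℕ) {a M : ℕ} (ha : 0 < a)
    (haM : a < M) {b : ℤ} (hb0 : 0 ≤ b) (hba : b < a) :
    ∃ w : Fin ((k + 2) * (M + 1) + 3) → ℝ, ∀ n : ℤ,
      ∑ i, w i * tpChain d (k + 1)
        ((b - ((k + 2) * (M + 1) + 1) * a : ℝ) + (i : ℕ) * a - n * M) = if n = 0 then 1 else 0 := by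
  set x₀ : ℝ := b - ((k + 2) * (M + 1) + 1) * a with hx₀
  let L : Fin ((k + 2) * (M + 1) + 3) → (ℤ →₀ ℝ) →ₗ[ℝ] ℝ := fun i =>
    Finsupp.linearCombination ℝ fun n : ℤ => tpChain d (k + 1) (x₀ + (i : ℕ) * a - n * M)
  have hmem : (Finsupp.lapply 0 : (ℤ →₀ ℝ) →ₗ[ℝ] ℝ) ∈ Submodule.span ℝ (Set.range L) := by
    refine mem_span_of_iInf_ker_le_ker fun c hc => ?_
    simp only [Submodule.mem_iInf, LinearMap.mem_ker] at hc ⊢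
    refine coeff_zero_eq_zero hd k ha haM hb0 hba c fun i hi => ?_
    have := hc ⟨i, by omega⟩
    simpa [L, Finsupp.linearCombination_apply, Finsupp.sum, splineSum] using! this
  obtain ⟨w, hw⟩ := (Submodule.mem_span_range_iff_exists_fun ℝ).1 hmem
  refine ⟨w, fun n => ?_⟩
  have := congrArg (fun T : (ℤ →₀ ℝ) →ₗ[ℝ] ℝ => T (Finsupp.single n 1)) hw
  simpa [L, Finsupp.single_apply] using this

/-! ### Gabor frames from dual weights -/

/-- Orthogonality of the characters of `ℤ/Mℤ`. -/
lemma sum_exp_mul_star {M : ℕ} (hM : 0 < M) (j j' : ℤ) :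
    ∑ l ∈ Finset.range M, Complex.exp (2 * (Real.pi : ℂ) * I * (l : ℂ) * (j : ℂ) / (M : ℂ)) *
      star (Complex.exp (2 * (Real.pi : ℂ) * I * (l : ℂ) * (j' : ℂ) / (M : ℂ))) =
      if (M : ℤ) ∣ j - j' then (M : ℂ) else 0 := by
  have hM' : (M : ℂ) ≠ 0 := by exact_mod_cast hM.ne'
  set ζ : ℂ := Complex.exp (2 * (Real.pi : ℂ) * I * ((j - j' : ℤ) : ℂ) / (M : ℂ)) with hζ
  have hpow : ∀ l ∈ Finset.range M,
      Complex.exp (2 * (Real.pi : ℂ) * I * (l : ℂ) * (j : ℂ) / (M : ℂ)) *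
      star (Complex.exp (2 * (Real.pi : ℂ) * I * (l : ℂ) * (j' : ℂ) / (M : ℂ))) = ζ ^ l := by
    intro l _
    rw [hζ, ← Complex.exp_nat_mul, Complex.star_def, ← Complex.exp_conj, ← Complex.exp_add]
    congr 1
    simp only [map_div₀, map_mul, Complex.conj_ofReal, Complex.conj_I, map_natCast, map_intCast,
      map_ofNat]
    push_cast
    ring
  rw [Finset.sum_congr rfl hpow]
  have hiff : ζ = 1 ↔ (M : ℤ) ∣ j - j' := by
    rw [hζ, Complex.exp_eq_one_iff]
    constructor
    · rintro ⟨n, hn⟩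
      refine ⟨n, ?_⟩
      have h2 : (2 * (Real.pi : ℂ) * I) ≠ 0 := Complex.two_pi_I_ne_zero
      rw [div_eq_iff hM'] at hn
      have : ((j - j' : ℤ) : ℂ) = ((M * n : ℤ) : ℂ) := by
        push_cast at hn ⊢
        apply mul_left_cancel₀ h2
        rw [hn]; ring
      exact_mod_cast this
    · rintro ⟨n, hn⟩
      refine ⟨n, ?_⟩
      rw [hn]; push_cast; field_simp
  split_ifs with h
  · rw [hiff.2 h]; simp
  · have hne : ζ ≠ 1 := fun h' => h (hiff.1 h')
    have hM1 : ζ ^ M = 1 := by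
      rw [hζ, ← Complex.exp_nat_mul, Complex.exp_eq_one_iff]
      exact ⟨j - j', by field_simp⟩
    rw [geom_sum_eq hne, hM1]; simp

lemma norm_gabor_exp (l : ℕ) (M : ℕ) (j : ℤ) :
    ‖Complex.exp (2 * (Real.pi : ℂ) * I * (l : ℂ) * (j : ℂ) / (M : ℂ))‖ = 1 := by
  have : 2 * (Real.pi : ℂ) * I * (l : ℂ) * (j : ℂ) / (M : ℂ) =
      ((2 * Real.pi * l * j / M : ℝ) : ℂ) * I := by push_cast; ring
  rw [this, Complex.norm_exp_ofReal_mul_I]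

/-- Cauchy-Schwarz with weight `h`. -/
lemma tsum_mul_sq_le {f h : ℤ → ℝ} (hh : ∀ j, 0 ≤ h j)
    (hs : Summable h) (hfh : Summable fun j => f j ^ 2 * h j) :
    (Summable fun j => f j * h j) ∧
      (∑' j, f j * h j) ^ 2 ≤ (∑' j, f j ^ 2 * h j) * ∑' j, h j := by
  have h1 : Summable fun j => f j * h j := by
    refine Summable.of_norm_bounded (hfh.add hs) fun j => ?_
    rw [Real.norm_eq_abs, abs_mul, abs_of_nonneg (hh j), ← sq_abs (f j)]
    nlinarith [mul_nonneg (hh j) (sq_nonneg (|f j| - 1)), mul_nonneg (hh j) (abs_nonneg (f j)),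
      mul_nonneg (hh j) (sq_nonneg (|f j|))]
  refine ⟨h1, le_of_tendsto_of_tendsto' (h1.hasSum.pow 2) (Filter.Tendsto.mul hfh.hasSum hs.hasSum)
    fun s => ?_⟩
  exact Finset.sum_sq_le_sum_mul_sum_of_sq_le_mul s (fun j _ => mul_nonneg (sq_nonneg _) (hh j))
    (fun j _ => hh j) (fun j _ => le_of_eq (by ring))

/-- The Schur test on `ℓ²(ℤ)` for a nonnegative kernel whose marginals are bounded by `S`. -/
lemma schur_test {H : ℤ → ℤ → ℝ} (hH : ∀ j k, 0 ≤ H j k) {S : ℝ} (hS0 : 0 ≤ S)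
    (hrow : ∀ k, HasSum (fun j => H j k) S) (hcol : ∀ j, Summable (H j))
    (hcolle : ∀ j, ∑' k, H j k ≤ S) {φ : ℤ → ℝ} (hφ : Summable fun j => φ j ^ 2) :
    (∀ k, Summable fun j => φ j * H j k) ∧
    (Summable fun k => (∑' j, φ j * H j k) ^ 2) ∧
    ∑' k, (∑' j, φ j * H j k) ^ 2 ≤ S ^ 2 * ∑' j, φ j ^ 2 := by
  have hcs : Summable fun j : ℤ => ∑' k : ℤ, φ j ^ 2 * H j k := by
    refine Summable.of_nonneg_of_le
      (fun j => tsum_nonneg fun k => mul_nonneg (sq_nonneg _) (hH _ _)) (fun j => ?_)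
      (hφ.mul_right S)
    rw [tsum_mul_left]
    exact mul_le_mul_of_nonneg_left (hcolle j) (sq_nonneg _)
  have hrows : ∀ j, Summable fun k => φ j ^ 2 * H j k := fun j => by
    have := (hcol j).mul_left (φ j ^ 2)
    exact this
  have hprod : Summable fun p : ℤ × ℤ => φ p.1 ^ 2 * H p.1 p.2 := by
    rw [summable_prod_of_nonneg (fun p => mul_nonneg (sq_nonneg _) (hH _ _))]
    exact ⟨hrows, hcs⟩
  have hprod' : Summable fun p : ℤ × ℤ => φ p.2 ^ 2 * H p.2 p.1 := hprod.prod_symm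
  have hk : ∀ k : ℤ, Summable fun j => φ j ^ 2 * H j k := fun k => hprod'.prod_factor k
  have hks : Summable fun k : ℤ => ∑' j, φ j ^ 2 * H j k := hprod'.prod
  have hcs2 := fun k : ℤ => tsum_mul_sq_le (fun j => hH j k) (hrow k).summable (hk k)
  have hle : ∀ k : ℤ, (∑' j, φ j * H j k) ^ 2 ≤ (∑' j, φ j ^ 2 * H j k) * S := fun k => by
    have := (hcs2 k).2; rwa [(hrow k).tsum_eq] at this
  have hsum : Summable fun k : ℤ => (∑' j, φ j * H j k) ^ 2 :=
    Summable.of_nonneg_of_le (fun k => sq_nonneg _) hle (hks.mul_right S)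
  refine ⟨fun k => (hcs2 k).1, hsum, ?_⟩
  calc ∑' k, (∑' j, φ j * H j k) ^ 2 ≤ ∑' k : ℤ, (∑' j, φ j ^ 2 * H j k) * S :=
        hsum.tsum_le_tsum hle (hks.mul_right S)
    _ = (∑' j, ∑' k : ℤ, φ j ^ 2 * H j k) * S := by
        rw [tsum_mul_right]
        congr 1
        exact Summable.tsum_comm (f := fun j k : ℤ => φ j ^ 2 * H j k) hprod
    _ ≤ (∑' j, φ j ^ 2 * S) * S := by
        refine mul_le_mul_of_nonneg_right (hcs.tsum_le_tsum (fun j => ?_) (hφ.mul_right S)) hS0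
        rw [tsum_mul_left]
        exact mul_le_mul_of_nonneg_left (hcolle j) (sq_nonneg _)
    _ = S ^ 2 * ∑' j, φ j ^ 2 := by rw [tsum_mul_right]; ring

lemma schur_bound {G : ℤ → ℝ} (hG : ∀ j, 0 ≤ G j) (hGs : Summable G) {a : ℕ} (ha : 0 < a)
    {φ : ℤ → ℝ} (hφ : Summable fun j => φ j ^ 2) :
    (∀ k : ℤ, Summable fun j => φ j * G (j - k * (a : ℤ))) ∧
    (Summable fun k : ℤ => (∑' j, φ j * G (j - k * (a : ℤ))) ^ 2) ∧
    ∑' k : ℤ, (∑' j, φ j * G (j - k * (a : ℤ))) ^ 2 ≤ (∑' j, G j) ^ 2 * ∑' j, φ j ^ 2 := by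
  have haz : (a : ℤ) ≠ 0 := by exact_mod_cast ha.ne'
  have hinjk : ∀ j : ℤ, Function.Injective fun k : ℤ => j - k * (a : ℤ) := by
    intro j k k' h
    refine mul_right_cancel₀ haz ?_
    simpa using h
  have hrow : ∀ k : ℤ, HasSum (fun j => G (j - k * (a : ℤ))) (∑' j, G j) := by
    intro k
    have := (Equiv.hasSum_iff (Equiv.subRight (k * (a : ℤ))) (f := G)).2 hGs.hasSum
    simpa [Function.comp_def] using this
  have hcol : ∀ j : ℤ, Summable fun k : ℤ => G (j - k * (a : ℤ)) := fun j =>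
    hGs.comp_injective (hinjk j)
  have hcolle : ∀ j : ℤ, ∑' k : ℤ, G (j - k * (a : ℤ)) ≤ ∑' j, G j := fun j =>
    Summable.tsum_le_tsum_of_inj (fun k : ℤ => j - k * (a : ℤ)) (hinjk j) (fun c _ => hG c)
      (fun k => le_rfl) (hcol j) hGs
  exact schur_test (H := fun j k => G (j - k * (a : ℤ))) (fun j k => hG _) (tsum_nonneg hG)
    hrow hcol hcolle hφ

/-- Dual weights recover the value of `f` at `b + q a` from `K * M` of its Gabor coefficients:
summing over the modulations restricts to the coset of `Mℤ`, and the weights then single out one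
point of that coset. -/
lemma gaborCoefZ_reconstruct {G : ℤ → ℝ} {a M K : ℕ} (hM : 0 < M) {f : ℤ → ℂ}
    (hsum : ∀ k : ℤ, Summable fun j => ‖f j‖ * |G (j - k * (a : ℤ))|) {r b q : ℤ}
    {w : Fin K → ℝ}
    (hw : ∀ n : ℤ, ∑ i : Fin K, w i * G (b - r * a + (i : ℕ) * a - n * M) =
      if n = 0 then 1 else 0) :
    f (b + q * a) = ∑ i : Fin K, ∑ l ∈ Finset.range M, ((w i / M : ℝ) : ℂ) *
      Complex.exp (2 * (Real.pi : ℂ) * I * (l : ℂ) * ((b + q * a : ℤ) : ℂ) / (M : ℂ)) *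
      gaborCoefZ (fun j => (G j : ℂ)) a M f (q + r - (i : ℕ)) l := by
  set j := b + q * (a : ℤ) with hj
  have hM' : (M : ℂ) ≠ 0 := by exact_mod_cast hM.ne'
  have hS : ∀ (k : ℤ) (l : ℕ), Summable fun j' : ℤ => f j' * star ((G (j' - k * (a : ℤ)) : ℂ) *
    Complex.exp (2 * (Real.pi : ℂ) * I * (l : ℂ) * (j' : ℂ) / (M : ℂ))) := by
    intro k l
    refine Summable.of_norm ((hsum k).congr fun j' => ?_)
    rw [norm_mul, norm_star, norm_mul, norm_gabor_exp, mul_one, Complex.norm_real,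
      Real.norm_eq_abs]
  have e1 : ∀ (i : Fin K), ∀ l ∈ Finset.range M, ((w i / M : ℝ) : ℂ) *
      Complex.exp (2 * (Real.pi : ℂ) * I * (l : ℂ) * (j : ℂ) / (M : ℂ)) *
      gaborCoefZ (fun j => (G j : ℂ)) a M f (q + r - (i : ℕ)) l =
      ∑' j' : ℤ, ((w i / M : ℝ) : ℂ) *
      Complex.exp (2 * (Real.pi : ℂ) * I * (l : ℂ) * (j : ℂ) / (M : ℂ)) *
      (f j' * star ((G (j' - (q + r - (i : ℕ)) * (a : ℤ)) : ℂ) *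
    Complex.exp (2 * (Real.pi : ℂ) * I * (l : ℂ) * (j' : ℂ) / (M : ℂ)))) := by
    intro i l _
    rw [gaborCoefZ, tsum_mul_left]
  rw [Finset.sum_congr rfl fun i _ => Finset.sum_congr rfl (e1 i)]
  have hS' : ∀ (i : Fin K) (l : ℕ), Summable fun j' : ℤ => ((w i / M : ℝ) : ℂ) *
      Complex.exp (2 * (Real.pi : ℂ) * I * (l : ℂ) * (j : ℂ) / (M : ℂ)) *
      (f j' * star ((G (j' - (q + r - (i : ℕ)) * (a : ℤ)) : ℂ) *
    Complex.exp (2 * (Real.pi : ℂ) * I * (l : ℂ) * (j' : ℂ) / (M : ℂ)))) := fun i l =>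
    (hS _ l).mul_left _
  rw [Finset.sum_congr rfl fun i _ => (Summable.tsum_finsetSum fun l _ => hS' i l).symm,
    ← Summable.tsum_finsetSum fun i _ => summable_sum fun l _ => hS' i l]
  rw [← tsum_ite_eq j f]
  -- summation over `l` leaves only the indices congruent to `j` modulo `M`
  refine tsum_congr fun j' => ?_
  have e2 : ∀ i : Fin K, ∑ l ∈ Finset.range M, ((w i / M : ℝ) : ℂ) *
      Complex.exp (2 * (Real.pi : ℂ) * I * (l : ℂ) * (j : ℂ) / (M : ℂ)) *
      (f j' * star ((G (j' - (q + r - (i : ℕ)) * (a : ℤ)) : ℂ) *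
      Complex.exp (2 * (Real.pi : ℂ) * I * (l : ℂ) * (j' : ℂ) / (M : ℂ)))) =
      f j' * ((w i * G (j' - (q + r - (i : ℕ)) * (a : ℤ)) : ℝ) : ℂ) *
        ((if (M : ℤ) ∣ j - j' then (M : ℂ) else 0) / M) := by
    intro i
    rw [← sum_exp_mul_star hM, Finset.sum_div, Finset.mul_sum]
    refine Finset.sum_congr rfl fun l _ => ?_
    rw [star_mul', Complex.star_def, Complex.conj_ofReal]
    push_cast
    ring
  rw [Finset.sum_congr rfl fun i _ => e2 i]
  by_cases hd : (M : ℤ) ∣ j - j'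
  · obtain ⟨n, hn⟩ := hd
    have hj' : j' = j - M * n := by omega
    have e3 : ∑ i : Fin K, w i * G (j' - (q + r - (i : ℕ)) * (a : ℤ)) = if n = 0 then 1 else 0 := by
      rw [← hw n]
      refine Finset.sum_congr rfl fun i _ => ?_
      congr 2
      rw [hj', hj]; ring
    have hdvd : (M : ℤ) ∣ j - j' := ⟨n, hn⟩
    rw [if_pos hdvd, div_self hM', ← Finset.sum_mul, ← Finset.mul_sum, ← Complex.ofReal_sum, e3]
    have hiff : j' = j ↔ n = 0 := by
      have : (M : ℤ) ≠ 0 := by exact_mod_cast hM.ne'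
      rw [hj']; simp [hM.ne']
    by_cases hn0 : n = 0
    · simp [hiff.2 hn0, hn0]
    · have : j' ≠ j := fun h => hn0 (hiff.1 h)
      simp [this, hn0]
  · have : j' ≠ j := by rintro rfl; simp at hd
    simp [hd, this]

/-- Split a sum over `ℤ` into residue classes modulo `a`. -/
lemma tsum_le_of_residues {a : ℕ} (ha : 0 < a) {F U : ℤ → ℝ} {s : ℝ} (hF : Summable F)
    (hU : HasSum U s) (hFU : ∀ (b : Fin a) (q : ℤ), F ((b : ℕ) + q * a) ≤ U q) :
    ∑' j, F j ≤ a * s := by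
  have : NeZero a := ⟨ha.ne'⟩
  set e : Fin a × ℤ ≃ ℤ := (Equiv.prodComm _ _).trans (Int.divModEquiv a).symm with he
  have hev : ∀ b q, e (b, q) = (b : ℕ) + q * a := by
    intro b q
    simp [he, Int.divModEquiv, add_comm]
  have hfs : Summable fun p : Fin a × ℤ => F (e p) := by
    have := (Equiv.summable_iff e (f := F)).2 hF
    exact this
  have h1 : ∑' j, F j = ∑ b, ∑' q, F (e (b, q)) := by
    rw [← e.tsum_eq F, hfs.tsum_prod, tsum_fintype]
  have h2 : ∀ b : Fin a, ∑' q, F (e (b, q)) ≤ s := by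
    intro b
    rw [← hU.tsum_eq]
    refine Summable.tsum_le_tsum (fun q => ?_) (hfs.prod_factor b) hU.summable
    rw [hev]; exact hFU b q
  rw [h1]
  calc ∑ b, ∑' q, F (e (b, q)) ≤ ∑ _b : Fin a, s := Finset.sum_le_sum fun b _ => h2 b
    _ = a * s := by simp

/-- A nonnegative `ℓ¹` window with finitely supported dual weights for each residue class modulo
`a` generates a Gabor frame. -/
theorem gabor_frame_of_dual {G : ℤ → ℝ} (hG : ∀ j, 0 ≤ G j) (hGs : Summable G) {a M K : ℕ}
    (ha : 0 < a) (hM : 0 < M) (r : ℤ) (w : Fin a → Fin K → ℝ)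
    (hw : ∀ (b : Fin a) (n : ℤ), ∑ i : Fin K, w b i *
      G (((b : ℕ) : ℤ) - r * a + (i : ℕ) * a - n * M) = if n = 0 then 1 else 0) :
    ∃ A B : ℝ, 0 < A ∧ 0 < B ∧ ∀ f : ℤ → ℂ, Summable (fun j : ℤ => ‖f j‖ ^ 2) →
      A * (∑' j : ℤ, ‖f j‖ ^ 2) ≤
          (∑' k : ℤ, ∑ l ∈ Finset.range M, ‖gaborCoefZ (fun j => (G j : ℂ)) a M f k l‖ ^ 2) ∧
        (∑' k : ℤ, ∑ l ∈ Finset.range M, ‖gaborCoefZ (fun j => (G j : ℂ)) a M f k l‖ ^ 2) ≤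
          B * (∑' j : ℤ, ‖f j‖ ^ 2) := by
  set S := ∑' j, G j with hS
  set W : ℝ := 1 + ∑ b, ∑ i, |w b i| with hW
  have hW1 : 1 ≤ W := by
    have : 0 ≤ ∑ b, ∑ i, |w b i| := Finset.sum_nonneg fun b _ => Finset.sum_nonneg fun i _ => abs_nonneg _
    linarith
  have hwW : ∀ b i, |w b i| ≤ W := by
    intro b i
    have h1 : |w b i| ≤ ∑ i, |w b i| :=
      Finset.single_le_sum (f := fun i => |w b i|) (fun i _ => abs_nonneg _) (Finset.mem_univ i)
    have h2 : ∑ i, |w b i| ≤ ∑ b, ∑ i, |w b i| :=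
      Finset.single_le_sum (f := fun b => ∑ i, |w b i|)
        (fun b _ => Finset.sum_nonneg fun i _ => abs_nonneg _) (Finset.mem_univ b)
    linarith
  have hM1 : (1 : ℝ) ≤ M := by exact_mod_cast hM
  set D : ℝ := W ^ 2 * (K * M) with hD
  have hD0 : 0 ≤ D := by positivity
  refine ⟨1 / (a * K * D + 1), M * S ^ 2 + 1, by positivity, by positivity, fun f hf => ?_⟩
  obtain ⟨hs1, hs2, hs3⟩ := schur_bound hG hGs ha hf
  have hsum' : ∀ k : ℤ, Summable fun j => ‖f j‖ * |G (j - k * (a : ℤ))| := fun k => by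
    simpa only [abs_of_nonneg (hG _)] using hs1 k
  have hF0 : 0 ≤ ∑' j : ℤ, ‖f j‖ ^ 2 := tsum_nonneg fun j => sq_nonneg _
  set C := gaborCoefZ (fun j => (G j : ℂ)) a M f with hC
  set T : ℤ → ℝ := fun k => ∑ l ∈ Finset.range M, ‖C k l‖ ^ 2 with hT
  have hT0 : ∀ k, 0 ≤ T k := fun k => Finset.sum_nonneg fun l _ => sq_nonneg _
  have hCle : ∀ k l, ‖C k l‖ ≤ ∑' j, ‖f j‖ * G (j - k * (a : ℤ)) := by
    intro k l
    refine tsum_of_norm_bounded (hs1 k).hasSum fun j => le_of_eq ?_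
    rw [norm_mul, norm_star, norm_mul, norm_gabor_exp, mul_one, Complex.norm_real,
      Real.norm_of_nonneg (hG _)]
  have hTle : ∀ k, T k ≤ M * (∑' j, ‖f j‖ * G (j - k * (a : ℤ))) ^ 2 := by
    intro k
    calc T k ≤ ∑ l ∈ Finset.range M, (∑' j, ‖f j‖ * G (j - k * (a : ℤ))) ^ 2 :=
          Finset.sum_le_sum fun l _ => pow_le_pow_left₀ (norm_nonneg _) (hCle k l) 2
      _ = _ := by simp
  have hTs : Summable T := Summable.of_nonneg_of_le hT0 hTle (hs2.mul_left _)
  have hTsum0 : 0 ≤ ∑' k, T k := tsum_nonneg hT0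
  constructor
  · -- each value of `f` is controlled by boundedly many blocks of coefficients
    have hpt : ∀ (b : Fin a) (q : ℤ), ‖f ((b : ℕ) + q * a)‖ ^ 2 ≤
        D * ∑ i : Fin K, T (q + r - (i : ℕ)) := by
      intro b q
      have h1 : ‖f ((b : ℕ) + q * a)‖ ≤
          ∑ i : Fin K, ∑ l ∈ Finset.range M, W * ‖C (q + r - (i : ℕ)) l‖ := by
        rw [gaborCoefZ_reconstruct hM hsum' (hw b)]
        refine (norm_sum_le _ _).trans (Finset.sum_le_sum fun i _ => ?_)
        refine (norm_sum_le _ _).trans (Finset.sum_le_sum fun l _ => ?_)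
        rw [norm_mul, norm_mul, norm_gabor_exp, mul_one, Complex.norm_real, Real.norm_eq_abs,
          abs_div, Nat.abs_cast]
        refine mul_le_mul_of_nonneg_right ?_ (norm_nonneg _)
        exact (div_le_self (abs_nonneg _) hM1).trans (hwW b i)
      calc ‖f ((b : ℕ) + q * a)‖ ^ 2
          ≤ (∑ i : Fin K, ∑ l ∈ Finset.range M, W * ‖C (q + r - (i : ℕ)) l‖) ^ 2 :=
            pow_le_pow_left₀ (norm_nonneg _) h1 2
        _ ≤ K * ∑ i : Fin K, (∑ l ∈ Finset.range M, W * ‖C (q + r - (i : ℕ)) l‖) ^ 2 := by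
            simpa using sq_sum_le_card_mul_sum_sq (s := (Finset.univ : Finset (Fin K)))
              (f := fun i : Fin K => ∑ l ∈ Finset.range M, W * ‖C (q + r - (i : ℕ)) l‖)
        _ ≤ K * ∑ i : Fin K, (M * ∑ l ∈ Finset.range M, (W * ‖C (q + r - (i : ℕ)) l‖) ^ 2) := by
            refine mul_le_mul_of_nonneg_left (Finset.sum_le_sum fun i _ => ?_) (by positivity)
            simpa using sq_sum_le_card_mul_sum_sq (s := Finset.range M)
              (f := fun l => W * ‖C (q + r - (i : ℕ)) l‖)
        _ = D * ∑ i : Fin K, T (q + r - (i : ℕ)) := by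
            simp only [hD, hT, mul_pow, ← Finset.mul_sum]
            ring
    have hTshift : ∀ s : ℤ, HasSum (fun q => T (q + s)) (∑' k, T k) := fun s => by
      have := (Equiv.hasSum_iff (Equiv.addRight s) (f := T)).2 hTs.hasSum
      simpa only [Function.comp_def, Equiv.coe_addRight] using this
    have hTi : HasSum (fun q => D * ∑ i : Fin K, T (q + r - (i : ℕ))) (D * (K * ∑' k, T k)) := by
      refine HasSum.mul_left D ?_
      have := hasSum_sum (s := (Finset.univ : Finset (Fin K)))
        fun i _ => hTshift (r - (i : ℕ))
      simpa [add_sub_assoc] using this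
    have hle : ∑' j : ℤ, ‖f j‖ ^ 2 ≤ a * (D * (K * ∑' k, T k)) :=
      tsum_le_of_residues ha hf hTi hpt
    rw [div_mul_eq_mul_div, one_mul, div_le_iff₀ (by positivity)]
    nlinarith
  · calc ∑' k, T k ≤ ∑' k : ℤ, M * (∑' j, ‖f j‖ * G (j - k * (a : ℤ))) ^ 2 :=
          hTs.tsum_le_tsum hTle (hs2.mul_left _)
      _ ≤ M * (S ^ 2 * ∑' j, ‖f j‖ ^ 2) := by
          rw [tsum_mul_left]
          exact mul_le_mul_of_nonneg_left hs3 (by positivity)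
      _ ≤ _ := by nlinarith

/-! ### The frame property -/

theorem stmt7 (m : ℕ) (hm : 2 ≤ m) (δ : Fin m → ℝ) (hδ0 : ∀ i, δ i ≠ 0)
    (g : ℝ → ℂ) (hgcont : Continuous g) (hg : Integrable g)
    (hFT : ∀ ξ : ℝ, 𝓕 g ξ =
      ∏ k : Fin m, (1 + 2 * (Real.pi : ℂ) * Complex.I * (δ k : ℂ) * (ξ : ℂ))⁻¹)
    (a M : ℕ) (ha : 0 < a) (hM : 0 < M) (haM : (a : ℝ) / M < 1) :
    Summable (fun j : ℤ => ‖g (j : ℝ)‖ ^ 2) ∧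
    ∃ A B : ℝ, 0 < A ∧ 0 < B ∧ ∀ f : ℤ → ℂ, Summable (fun j : ℤ => ‖f j‖ ^ 2) →
      A * (∑' j : ℤ, ‖f j‖ ^ 2) ≤
          (∑' k : ℤ, ∑ l ∈ Finset.range M,
            ‖gaborCoefZ (fun j : ℤ => g (j : ℝ)) a M f k l‖ ^ 2) ∧
        (∑' k : ℤ, ∑ l ∈ Finset.range M,
            ‖gaborCoefZ (fun j : ℤ => g (j : ℝ)) a M f k l‖ ^ 2) ≤
          B * (∑' j : ℤ, ‖f j‖ ^ 2) := by
  obtain ⟨k, rfl⟩ : ∃ k, m = k + 2 := ⟨m - 2, by omega⟩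
  have haM' : a < M := by
    rw [div_lt_one (by exact_mod_cast hM)] at haM
    exact_mod_cast haM
  -- the parameters, extended to all of `ℕ` by `1`
  set d : ℕ → ℝ := fun i => if h : i < k + 2 then δ ⟨i, h⟩ else 1 with hd
  have hd0 : ∀ i, d i ≠ 0 := by
    intro i
    by_cases h : i < k + 2
    · simpa [hd, h] using hδ0 ⟨i, h⟩
    · simp [hd, h]
  have hgG : ∀ x, g x = tpChain d (k + 1) x := by
    refine eq_tpChain hd0 k hgcont hg fun ξ => ?_
    rw [hFT, Finset.prod_range]
    refine Finset.prod_congr rfl fun i _ => ?_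
    simp [hd]
  set G : ℤ → ℝ := fun j => tpChain d (k + 1) j with hG
  have hG0 : ∀ j, 0 ≤ G j := fun j => tpChain_nonneg hd0 _ _
  have hGs : Summable G := tpChain_summable hd0 k
  have hgz : (fun j : ℤ => g (j : ℝ)) = fun j => (G j : ℂ) := funext fun j => hgG j
  have hn : ∀ j : ℤ, ‖g (j : ℝ)‖ = G j := fun j => by
    rw [hgG, Complex.norm_real, Real.norm_of_nonneg (hG0 j)]
  constructor
  · simp only [hn]
    refine Summable.of_nonneg_of_le (fun j => sq_nonneg _) (fun j => ?_)
      (hGs.mul_left (∑' i, G i))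
    rw [sq]
    exact mul_le_mul_of_nonneg_right (hGs.le_tsum j fun i _ => hG0 i) (hG0 j)
  · rw [hgz]
    have hdual := fun b : Fin a => exists_dual_weights hd0 k ha haM' (b := ((b : ℕ) : ℤ))
      (by positivity) (by exact_mod_cast b.2)
    choose w hw using hdual
    refine gabor_frame_of_dual hG0 hGs ha hM ((k + 2) * (M + 1) + 1) w fun b n => ?_
    rw [← hw b n]
    refine Finset.sum_congr rfl fun i _ => ?_
    simp only [hG]
    congr 2
    push_cast
    ring
end

section
/- Let g ∈ L¹(ℝ) be a totally positive function of finite type m ≥ 2, identified with its continuous representative, and let a, M ∈ ℕ with a/M > 1. Then the Gabor family G(Sg, a, 1/M) is a Riesz sequence in ℓ²(ℤ): there exist A', B' > 0 such that for every finitely supported family of coefficients c = (c_{k,l})_{k∈ℤ, 0≤l≤M−1}, A' Σ_{k,l} |c_{k,l}|² ≤ ‖Σ_{k∈ℤ} Σ_{l=0}^{M−1} c_{k,l} M_{l/M}T_{ka}(Sg)‖² ≤ B' Σ_{k,l} |c_{k,l}|². -/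
/-!
Write `g` for the generator.  On a residue class `r + M ℤ` the modulations are constant, so the
samples of `∑ c_{k,l} M_{l/M} T_{ka} (Sg)` there are the samples `∑_k d_k g(r + M n - k a)` of a
series of translates, where `d_k = ∑_l c_{k,l} exp (2πi l r / M)`; by orthogonality of characters
every `c_{k,l}` is dominated by one of the `d_k` (`exists_residue`).  The theorem thus reduces to
a stability estimate for sampling series of `a`-translates of `g` with step `M < a`.

By Fourier inversion (`exists_G`), `g` is the function `G` obtained from a one-sided exponential
by successively applying the resolvents `(1 + δ D)⁻¹`.  For the function `f = ∑ d_k G(· - k a)`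
each resolvent is removed by Rolle's theorem applied to `exp (x / δ) f(x)`, and removing all of
them leaves an exponential times a step function that jumps only on `a ℤ`.  Suppose that `f`
vanishes on `r + M ℤ`.

* If `f` vanishes identically in no gap between consecutive nodes, Rolle's theorem gives sign
  alternations of density `1 / M`; they descend to the step function, which has at most one change
  per length `a > M`, a contradiction (`Good.no_alt`).
* So `f` vanishes in one gap.  The same descent, started next to an interval of zeros, shows that
  `f` also vanishes in the neighbouring gaps (`Good.prop_right`, `Good.prop_left`), hence everywhere.
  Then the step function vanishes and all `d_k` are zero.

This injectivity (`Good.injective`) holds even for coefficients that grow exponentially at half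
the decay rate of `g`.  A compactness argument over normalized coefficients of that growth makes it
quantitative (`uniform_lower`), and recentring at the maximum of an exponentially weighted
coefficient sequence shows that each `d_k` is bounded by a single sample times a factor decaying
exponentially in the distance from the node to `k a` (`stability`).  Schur's test then turns this
localized estimate into the lower Riesz bound, and the exponential decay of `g` into the upper one
(`riesz_of_local`).
-/

open MeasureTheory Complex FourierTransform

namespace TPGabor

/-! ### The resolvent operator `(1 + δ D)⁻¹` -/

/-- The resolvent `(1 + δ D)⁻¹`, written as an average of translates.  The same formula serves
both signs of `δ`. -/
noncomputable def T (δ : ℝ) (h : ℝ → ℝ) (x : ℝ) : ℝ :=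
  ∫ u in Set.Ioi (0 : ℝ), Real.exp (-u) * h (x - δ * u)

/-- The one-sided exponential with Fourier transform `(1 + 2πiδξ)⁻¹`, the fundamental solution
of `1 + δ D`.  Its value at the jump is `0`. -/
noncomputable def E (δ : ℝ) (x : ℝ) : ℝ :=
  if 0 < x / δ then |δ|⁻¹ * Real.exp (-(x / δ)) else 0

/-- The totally positive function with parameters `δ0` and the entries of the list. -/
noncomputable def G (δ0 : ℝ) : List ℝ → ℝ → ℝ
  | [] => E δ0
  | δ :: l => T δ (G δ0 l)

lemma kernel_bound {C σ δ : ℝ} {h : ℝ → ℝ} (hC : ∀ x, |h x| ≤ C * Real.exp (σ * |x|))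
    (hσ : |σ| * |δ| ≤ 1 / 2) (x u : ℝ) (hu : 0 < u) :
    ‖Real.exp (-u) * h (x - δ * u)‖ ≤ C * Real.exp (σ * |x|) * Real.exp ((-1 / 2) * u) := by
  have hC0 : 0 ≤ C := by
    have := (abs_nonneg _).trans (hC 0)
    simpa using this
  rw [norm_mul, Real.norm_eq_abs, Real.norm_eq_abs, Real.abs_exp]
  have h1 : σ * |x - δ * u| ≤ σ * |x| + |σ| * (|δ| * u) := by
    have e : |σ * (|x - δ * u| - |x|)| ≤ |σ| * (|δ| * u) := by
      rw [abs_mul]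
      refine mul_le_mul_of_nonneg_left ?_ (abs_nonneg _)
      refine (abs_abs_sub_abs_le _ _).trans ?_
      rw [show x - δ * u - x = -(δ * u) by ring, abs_neg, abs_mul, abs_of_pos hu]
    have := (le_abs_self _).trans e
    linarith
  have h2 : |σ| * (|δ| * u) ≤ u / 2 := by nlinarith
  calc Real.exp (-u) * |h (x - δ * u)|
      ≤ Real.exp (-u) * (C * Real.exp (σ * |x| + u / 2)) := by
        refine mul_le_mul_of_nonneg_left ((hC _).trans ?_) (Real.exp_pos _).le
        exact mul_le_mul_of_nonneg_left (Real.exp_le_exp.2 (by linarith)) hC0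
    _ = C * Real.exp (σ * |x|) * Real.exp ((-1 / 2) * u) := by
        rw [Real.exp_add, show (-1 / 2) * u = -u + u / 2 by ring, Real.exp_add]; ring

lemma T_integrable {C σ δ : ℝ} {h : ℝ → ℝ} (hm : Measurable h)
    (hC : ∀ x, |h x| ≤ C * Real.exp (σ * |x|)) (hσ : |σ| * |δ| ≤ 1 / 2) (x : ℝ) :
    IntegrableOn (fun u => Real.exp (-u) * h (x - δ * u)) (Set.Ioi 0) := by
  have hi : IntegrableOn (fun u => C * Real.exp (σ * |x|) * Real.exp ((-1 / 2) * u))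
      (Set.Ioi (0 : ℝ)) := (integrableOn_exp_mul_Ioi (by norm_num) 0).const_mul _
  refine Integrable.mono' hi ?_ ?_
  · exact (Measurable.mul (by fun_prop) (hm.comp (by fun_prop))).aestronglyMeasurable
  · refine (ae_restrict_mem measurableSet_Ioi).mono fun u hu => ?_
    exact kernel_bound hC hσ x u hu

lemma T_norm_bound {C σ δ : ℝ} {h : ℝ → ℝ} (hm : Measurable h)
    (hC : ∀ x, |h x| ≤ C * Real.exp (σ * |x|)) (hσ : |σ| * |δ| ≤ 1 / 2) (x : ℝ) :
    ∫ u in Set.Ioi (0 : ℝ), ‖Real.exp (-u) * h (x - δ * u)‖ ≤ (2 * C) * Real.exp (σ * |x|) := by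
  have hi : IntegrableOn (fun u => C * Real.exp (σ * |x|) * Real.exp ((-1 / 2) * u))
      (Set.Ioi (0 : ℝ)) := (integrableOn_exp_mul_Ioi (by norm_num) 0).const_mul _
  calc _ ≤ ∫ u in Set.Ioi (0 : ℝ), C * Real.exp (σ * |x|) * Real.exp ((-1 / 2) * u) := by
        refine setIntegral_mono_on (T_integrable hm hC hσ x).norm hi measurableSet_Ioi ?_
        exact fun u hu => kernel_bound hC hσ x u hu
    _ = _ := by
        rw [integral_const_mul, integral_exp_mul_Ioi (by norm_num)]
        simp; ring

lemma T_bound {C σ δ : ℝ} {h : ℝ → ℝ} (hm : Measurable h)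
    (hC : ∀ x, |h x| ≤ C * Real.exp (σ * |x|)) (hσ : |σ| * |δ| ≤ 1 / 2) (x : ℝ) :
    |T δ h x| ≤ (2 * C) * Real.exp (σ * |x|) :=
  (norm_integral_le_integral_norm _).trans (T_norm_bound hm hC hσ x)

lemma locInt {C σ : ℝ} {h : ℝ → ℝ} (hm : Measurable h)
    (hC : ∀ x, |h x| ≤ C * Real.exp (σ * |x|)) (δ s t : ℝ) :
    IntervalIntegrable (fun x => Real.exp (x / δ) * h x) volume s t := by
  have hc : Continuous (fun x : ℝ => Real.exp (x / δ) * (C * Real.exp (σ * |x|))) := by fun_prop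
  refine (hc.intervalIntegrable s t).mono_fun' ?_ ?_
  · exact (Measurable.mul (by fun_prop) hm).aestronglyMeasurable
  · refine Filter.Eventually.of_forall fun x => ?_
    simp only [norm_mul, Real.norm_eq_abs, Real.abs_exp]
    exact mul_le_mul_of_nonneg_left (hC x) (Real.exp_pos _).le

/-- The integrated form of `(1 + δ D) (T δ h) = h`, valid for `h` merely measurable. -/
lemma T_formula {C σ δ : ℝ} {h : ℝ → ℝ} (hm : Measurable h) (hδ : δ ≠ 0)
    (hC : ∀ x, |h x| ≤ C * Real.exp (σ * |x|)) (hσ : |σ| * |δ| ≤ 1 / 2) (s t : ℝ) :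
    Real.exp (t / δ) * T δ h t - Real.exp (s / δ) * T δ h s =
      δ⁻¹ * ∫ x in s..t, Real.exp (x / δ) * h x := by
  set φ : ℝ → ℝ := fun v => Real.exp v * h (δ * v) with hφ
  have key : ∀ x : ℝ, IntegrableOn φ (Set.Iic (x / δ)) ∧
      Real.exp (x / δ) * T δ h x = ∫ v in Set.Iic (x / δ), φ v := by
    intro x
    set τ := x / δ with hτ
    have e0 : ∀ u, (Set.Iio τ).indicator φ (τ - u) =
        Real.exp τ * (Set.Ioi (0 : ℝ)).indicator (fun u => Real.exp (-u) * h (x - δ * u)) u := by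
      intro u
      by_cases hu : 0 < u
      · rw [Set.indicator_of_mem (by simpa using hu), Set.indicator_of_mem (by simpa using hu)]
        have : δ * (τ - u) = x - δ * u := by rw [hτ]; field_simp
        simp only [hφ, sub_eq_add_neg τ u, Real.exp_add]
        rw [← sub_eq_add_neg, this]; ring
      · rw [Set.indicator_of_notMem (by simpa using hu), Set.indicator_of_notMem (by simpa using hu)]
        simp
    have hint := T_integrable hm hC hσ x
    constructor
    · have h1 : Integrable (fun u => (Set.Iio τ).indicator φ (τ - u)) := by
        simp_rw [e0]
        exact ((integrable_indicator_iff measurableSet_Ioi).2 hint).const_mul _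
      have h2 := h1.comp_sub_left τ
      simp only [sub_sub_cancel] at h2
      rw [integrableOn_Iic_iff_integrableOn_Iio]
      exact (integrable_indicator_iff measurableSet_Iio).1 h2
    · rw [integral_Iic_eq_integral_Iio, ← integral_indicator measurableSet_Iio,
        ← integral_sub_left_eq_self _ _ τ]
      simp_rw [e0]
      rw [integral_const_mul, integral_indicator measurableSet_Ioi]; rfl
  rw [(key t).2, (key s).2, intervalIntegral.integral_Iic_sub_Iic (key s).1 (key t).1]
  have := intervalIntegral.integral_comp_div (a := s) (b := t) φ hδ
  have e : ∀ x, φ (x / δ) = Real.exp (x / δ) * h x := by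
    intro x; simp only [hφ]; rw [mul_div_cancel₀ _ hδ]
  simp_rw [e] at this
  rw [this, smul_eq_mul, inv_mul_cancel_left₀ hδ]

lemma T_continuous {C σ δ : ℝ} {h : ℝ → ℝ} (hm : Measurable h) (hδ : δ ≠ 0)
    (hC : ∀ x, |h x| ≤ C * Real.exp (σ * |x|)) (hσ : |σ| * |δ| ≤ 1 / 2) :
    Continuous (T δ h) := by
  have h1 : T δ h = fun t => Real.exp (-(t / δ)) *
      (T δ h 0 + δ⁻¹ * ∫ x in (0 : ℝ)..t, Real.exp (x / δ) * h x) := by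
    funext t
    rw [← T_formula hm hδ hC hσ 0 t]
    simp only [zero_div, Real.exp_zero, one_mul, add_sub_cancel]
    rw [← mul_assoc, ← Real.exp_add]; simp
  rw [h1]
  have h2 : Continuous fun t => ∫ x in (0 : ℝ)..t, Real.exp (x / δ) * h x :=
    intervalIntegral.continuous_primitive (fun s t => locInt hm hC δ s t) 0
  fun_prop

/-- Rolle's theorem for `1 + δ D`: where `exp (·/δ) * T δ h` varies in the direction of `w`,
the function `h` takes a value with the sign of `w / δ`. -/
lemma rolle {C σ δ : ℝ} {h : ℝ → ℝ} (hm : Measurable h) (hδ : δ ≠ 0)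
    (hC : ∀ x, |h x| ≤ C * Real.exp (σ * |x|)) (hσ : |σ| * |δ| ≤ 1 / 2) {s t w : ℝ} (hst : s < t)
    (hw : 0 < w * (Real.exp (t / δ) * T δ h t - Real.exp (s / δ) * T δ h s)) :
    ∃ x ∈ Set.Ioo s t, 0 < w / δ * h x := by
  by_contra! hcon
  rw [T_formula hm hδ hC hσ] at hw
  have : 0 < ∫ x in s..t, Real.exp (x / δ) * (w / δ * h x) := by
    have e : ∀ x, Real.exp (x / δ) * (w / δ * h x) = (w / δ) * (Real.exp (x / δ) * h x) := by
      intro x; ring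
    simp_rw [e]
    rw [intervalIntegral.integral_const_mul, div_eq_mul_inv, mul_assoc]; exact hw
  rw [intervalIntegral.integral_of_le hst.le, integral_Ioc_eq_integral_Ioo] at this
  refine absurd this (not_lt.2 (setIntegral_nonpos measurableSet_Ioo fun x hx => ?_))
  exact mul_nonpos_of_nonneg_of_nonpos (Real.exp_pos _).le (hcon x hx)

/-- Where `h` is nonzero, it keeps its sign on a whole interval in any neighbourhood of that point.
One-sided continuity implies this. -/
def Thick (h : ℝ → ℝ) : Prop :=
  ∀ x, h x ≠ 0 → ∀ s t, s < x → x < t → ∃ u v, s < u ∧ u < v ∧ v < t ∧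
    ∀ y ∈ Set.Ioo u v, 0 < h x * h y

lemma thick_of_continuous {h : ℝ → ℝ} (hh : Continuous h) : Thick h := by
  intro x hx s t hs ht
  have h1 : ∀ᶠ y in nhds x, 0 < h x * h y :=
    (continuous_const.mul hh).continuousAt.eventually (lt_mem_nhds (mul_self_pos.2 hx))
  obtain ⟨ε, hε, H⟩ := Metric.eventually_nhds_iff.1 h1
  refine ⟨x, x + min (ε / 2) ((t - x) / 2), hs, ?_, ?_, ?_⟩
  · have : 0 < min (ε / 2) ((t - x) / 2) := lt_min (by linarith) (by linarith)
    linarith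
  · have := min_le_right (ε / 2) ((t - x) / 2); linarith
  · intro y hy
    apply H
    have := min_le_left (ε / 2) ((t - x) / 2)
    rw [Real.dist_eq, abs_lt]
    constructor <;> linarith [hy.1, hy.2]

lemma zero_of_T_zero {C σ δ : ℝ} {h : ℝ → ℝ} (hm : Measurable h) (hδ : δ ≠ 0)
    (hC : ∀ x, |h x| ≤ C * Real.exp (σ * |x|)) (hσ : |σ| * |δ| ≤ 1 / 2) (hth : Thick h) {s t : ℝ}
    (hz : ∀ x ∈ Set.Ioo s t, T δ h x = 0) : ∀ x ∈ Set.Ioo s t, h x = 0 := by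
  intro x hx
  by_contra hne
  obtain ⟨u, v, hu, huv, hv, H⟩ := hth x hne s t hx.1 hx.2
  have h1 := T_formula hm hδ hC hσ u v
  rw [hz u ⟨hu, huv.trans hv⟩, hz v ⟨hu.trans huv, hv⟩] at h1
  have h2 : ∫ x in u..v, Real.exp (x / δ) * h x = 0 := by
    have := h1.symm
    simpa [hδ] using this
  have h3 : 0 < ∫ y in u..v, h x * (Real.exp (y / δ) * h y) := by
    refine intervalIntegral.intervalIntegral_pos_of_pos_on ((locInt hm hC δ u v).const_mul _) ?_ huv
    intro y hy
    have := mul_pos (Real.exp_pos (y / δ)) (H y hy)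
    linarith
  rw [intervalIntegral.integral_const_mul, h2, mul_zero] at h3
  exact lt_irrefl _ h3

lemma E_measurable (δ : ℝ) : Measurable (E δ) := by
  unfold E
  refine Measurable.ite ?_ (by fun_prop) measurable_const
  exact measurableSet_lt measurable_const (by fun_prop)

lemma E_bound {γ δ : ℝ} (hδ : δ ≠ 0) (hγ : γ * |δ| ≤ 1 / 2) (x : ℝ) :
    |E δ x| ≤ |δ|⁻¹ * Real.exp (-γ * |x|) := by
  have hp := abs_pos.2 hδ
  unfold E
  split_ifs with h
  · rw [abs_mul, Real.abs_exp, abs_of_pos (inv_pos.2 hp)]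
    refine mul_le_mul_of_nonneg_left (Real.exp_le_exp.2 ?_) (inv_pos.2 hp).le
    have e : x / δ = |x| / |δ| := by rw [← abs_div, abs_of_pos h]
    rw [e, neg_mul, neg_le_neg_iff, le_div_iff₀ hp]
    nlinarith [abs_nonneg x]
  · simp only [abs_zero]; positivity

/-- Every member of the family decays exponentially at the common rate `γ`. -/
lemma G_prop {γ δ0 : ℝ} (hγ : 0 < γ) (h0 : δ0 ≠ 0) (hγ0 : γ * |δ0| ≤ 1 / 2) (l : List ℝ)
    (hl : ∀ δ ∈ l, δ ≠ 0 ∧ γ * |δ| ≤ 1 / 2) :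
    Measurable (G δ0 l) ∧ ∃ C, 0 < C ∧ ∀ x, |G δ0 l x| ≤ C * Real.exp (-γ * |x|) := by
  induction l with
  | nil => exact ⟨E_measurable _, |δ0|⁻¹, by positivity, E_bound h0 hγ0⟩
  | cons δ l ih =>
    obtain ⟨hm, C, hC, hb⟩ := ih fun δ' h' => hl δ' (by simp [h'])
    have hd := hl δ (by simp)
    have hσ : |(-γ)| * |δ| ≤ 1 / 2 := by rw [abs_neg, abs_of_pos hγ]; exact hd.2
    exact ⟨(T_continuous hm hd.1 hb hσ).measurable, 2 * C, by positivity, T_bound hm hb hσ⟩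

lemma G_continuous {γ δ0 : ℝ} (hγ : 0 < γ) (h0 : δ0 ≠ 0) (hγ0 : γ * |δ0| ≤ 1 / 2) (δ : ℝ)
    (l : List ℝ) (hl : ∀ δ' ∈ δ :: l, δ' ≠ 0 ∧ γ * |δ'| ≤ 1 / 2) : Continuous (G δ0 (δ :: l)) := by
  obtain ⟨hm, C, hC, hb⟩ := G_prop hγ h0 hγ0 l fun δ' h' => hl δ' (by simp [h'])
  have hd := hl δ (by simp)
  have hσ : |(-γ)| * |δ| ≤ 1 / 2 := by rw [abs_neg, abs_of_pos hγ]; exact hd.2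
  exact T_continuous hm hd.1 hb hσ

/-! ### Series of lattice translates -/

lemma summable_exp_int {c : ℝ} (hc : 0 < c) :
    Summable (fun k : ℤ => Real.exp (-(c * |(k : ℝ)|))) := by
  have h : Summable (fun n : ℕ => Real.exp ((n : ℝ) * (-c))) :=
    Real.summable_exp_nat_mul_iff.2 (by linarith)
  refine Summable.of_nat_of_neg ?_ ?_
  · refine h.congr fun n => ?_
    simp [mul_comm]
  · refine h.congr fun n => ?_
    simp [mul_comm]

/-- The standing assumptions on rate, step, parameters and coefficients; the coefficients may
grow exponentially, but only at half the decay rate of the generator. -/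
structure Good (γ a δ0 : ℝ) (l : List ℝ) (d : ℤ → ℝ) : Prop where
  hγ : 0 < γ
  ha : 0 < a
  h0 : δ0 ≠ 0
  hγ0 : γ * |δ0| ≤ 1 / 2
  hl : ∀ δ ∈ l, δ ≠ 0 ∧ γ * |δ| ≤ 1 / 2
  hd : ∃ B, 0 < B ∧ ∀ k : ℤ, |d k| ≤ B * Real.exp (γ / 2 * (a * |(k : ℝ)|))

lemma Good.tail {γ a δ0 δ : ℝ} {l : List ℝ} {d : ℤ → ℝ} (H : Good γ a δ0 (δ :: l) d) :
    Good γ a δ0 l d :=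
  ⟨H.hγ, H.ha, H.h0, H.hγ0, fun δ' h' => H.hl δ' (by simp [h']), H.hd⟩

lemma Good.hσ {γ a δ0 δ : ℝ} {l : List ℝ} {d : ℤ → ℝ} (H : Good γ a δ0 (δ :: l) d) :
    |γ| * |δ| ≤ 1 / 2 := by
  rw [abs_of_pos H.hγ]; exact (H.hl δ (by simp)).2

/-- The series of lattice translates `∑ d_k G(x - k a)`. -/
noncomputable def f (a δ0 : ℝ) (d : ℤ → ℝ) (l : List ℝ) (x : ℝ) : ℝ :=
  ∑' k : ℤ, d k * G δ0 l (x - k * a)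

lemma exp_shift {γ a : ℝ} (hγ : 0 < γ) (ha : 0 < a) (x : ℝ) (k : ℤ) :
    Real.exp (γ / 2 * (a * |(k : ℝ)|)) * Real.exp (-γ * |x - k * a|) ≤
      Real.exp (γ * |x|) * Real.exp (-(γ / 2 * a * |(k : ℝ)|)) := by
  rw [← Real.exp_add, ← Real.exp_add, Real.exp_le_exp]
  have h1 : a * |(k : ℝ)| ≤ |x| + |x - k * a| := by
    have : a * |(k : ℝ)| = |x - (x - k * a)| := by
      rw [show x - (x - k * a) = a * k by ring, abs_mul, abs_of_pos ha]
    rw [this]; exact abs_sub _ _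
  nlinarith

lemma Good.term {γ a δ0 : ℝ} {l : List ℝ} {d : ℤ → ℝ} (H : Good γ a δ0 l d) :
    ∃ C, 0 < C ∧ ∀ (x : ℝ) (k : ℤ), |d k| * (Real.exp (-γ * |x - k * a|)) ≤
      C * Real.exp (γ * |x|) * Real.exp (-(γ / 2 * a * |(k : ℝ)|)) := by
  obtain ⟨B, hB, hd⟩ := H.hd
  refine ⟨B, hB, fun x k => ?_⟩
  calc _ ≤ (B * Real.exp (γ / 2 * (a * |(k : ℝ)|))) * Real.exp (-γ * |x - k * a|) :=
        mul_le_mul_of_nonneg_right (hd k) (Real.exp_pos _).le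
    _ ≤ _ := by
        rw [mul_assoc, mul_assoc]
        exact mul_le_mul_of_nonneg_left (exp_shift H.hγ H.ha x k) hB.le

lemma Good.termG {γ a δ0 : ℝ} {l : List ℝ} {d : ℤ → ℝ} (H : Good γ a δ0 l d) :
    ∃ C, 0 < C ∧ ∀ (x : ℝ) (k : ℤ), ‖d k * G δ0 l (x - k * a)‖ ≤
      C * Real.exp (γ * |x|) * Real.exp (-(γ / 2 * a * |(k : ℝ)|)) := by
  obtain ⟨-, C, hC, hG⟩ := G_prop H.hγ H.h0 H.hγ0 l H.hl
  obtain ⟨B, hB, ht⟩ := H.term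
  refine ⟨C * B, by positivity, fun x k => ?_⟩
  rw [norm_mul, Real.norm_eq_abs, Real.norm_eq_abs]
  calc _ ≤ |d k| * (C * Real.exp (-γ * |x - k * a|)) :=
        mul_le_mul_of_nonneg_left (hG _) (abs_nonneg _)
    _ = C * (|d k| * Real.exp (-γ * |x - k * a|)) := by ring
    _ ≤ C * (B * Real.exp (γ * |x|) * Real.exp (-(γ / 2 * a * |(k : ℝ)|))) :=
        mul_le_mul_of_nonneg_left (ht x k) hC.le
    _ = _ := by ring

lemma Good.summable {γ a δ0 : ℝ} {l : List ℝ} {d : ℤ → ℝ} (H : Good γ a δ0 l d) (x : ℝ) :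
    Summable (fun k : ℤ => d k * G δ0 l (x - k * a)) := by
  obtain ⟨C, hC, hb⟩ := H.termG
  have hp : 0 < γ / 2 * a := mul_pos (half_pos H.hγ) H.ha
  exact Summable.of_norm_bounded ((summable_exp_int hp).mul_left _) (hb x)

lemma Good.growth {γ a δ0 : ℝ} {l : List ℝ} {d : ℤ → ℝ} (H : Good γ a δ0 l d) :
    ∃ C, ∀ x, |f a δ0 d l x| ≤ C * Real.exp (γ * |x|) := by
  obtain ⟨C, hC, hb⟩ := H.termG
  have hp : 0 < γ / 2 * a := mul_pos (half_pos H.hγ) H.ha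
  refine ⟨C * ∑' k : ℤ, Real.exp (-(γ / 2 * a * |(k : ℝ)|)), fun x => ?_⟩
  have := tsum_of_norm_bounded ((summable_exp_int hp).mul_left _).hasSum (hb x)
  rw [tsum_mul_left] at this
  rw [← Real.norm_eq_abs]
  unfold f
  linarith

lemma Good.measurable {γ a δ0 : ℝ} {l : List ℝ} {d : ℤ → ℝ} (H : Good γ a δ0 l d) :
    Measurable (f a δ0 d l) := by
  obtain ⟨hm, -⟩ := G_prop H.hγ H.h0 H.hγ0 l H.hl
  refine measurable_of_tendsto_metrizable' (Filter.atTop : Filter (Finset ℤ))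
    (f := fun s x => ∑ k ∈ s, d k * G δ0 l (x - k * a)) ?_ ?_
  · intro s
    refine Finset.measurable_sum _ fun k _ => ?_
    exact (hm.comp (by fun_prop)).const_mul _
  · rw [tendsto_pi_nhds]
    intro x
    exact (H.summable x).hasSum

/-- The resolvent commutes with translations, hence with forming the series. -/
lemma Good.f_cons {γ a δ0 δ : ℝ} {l : List ℝ} {d : ℤ → ℝ} (H : Good γ a δ0 (δ :: l) d) :
    f a δ0 d (δ :: l) = T δ (f a δ0 d l) := by
  obtain ⟨hm, C, hC, hG⟩ := G_prop H.hγ H.h0 H.hγ0 l H.tail.hl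
  have hσ : |(-γ)| * |δ| ≤ 1 / 2 := by rw [abs_neg]; exact H.hσ
  have hp : 0 < γ / 2 * a := mul_pos (half_pos H.hγ) H.ha
  obtain ⟨B, hB, ht⟩ := H.term
  funext x
  have e : ∀ (k : ℤ) (u : ℝ), Real.exp (-u) * (d k * G δ0 l (x - δ * u - k * a)) =
      d k * (Real.exp (-u) * G δ0 l (x - k * a - δ * u)) := by
    intro k u; rw [show x - δ * u - k * a = x - k * a - δ * u by ring]; ring
  have key := hasSum_integral_of_summable_integral_norm
    (μ := volume.restrict (Set.Ioi (0 : ℝ)))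
    (F := fun (k : ℤ) u => Real.exp (-u) * (d k * G δ0 l (x - δ * u - k * a))) ?_ ?_
  · have h2 : T δ (f a δ0 d l) x = ∫ u in Set.Ioi (0 : ℝ),
        ∑' k : ℤ, Real.exp (-u) * (d k * G δ0 l (x - δ * u - k * a)) := by
      unfold T f
      simp_rw [tsum_mul_left]
    rw [h2, ← key.tsum_eq]
    unfold f
    refine tsum_congr fun k => ?_
    simp_rw [e, integral_const_mul]
    rfl
  · intro k
    simp_rw [e]
    exact (T_integrable hm hG hσ _).const_mul _
  · simp_rw [e, norm_mul (d _), integral_const_mul]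
    refine Summable.of_nonneg_of_le (fun k => ?_) (fun k => ?_)
      ((summable_exp_int hp).mul_left (2 * C * (B * Real.exp (γ * |x|))))
    · exact mul_nonneg (norm_nonneg _) (integral_nonneg fun _ => norm_nonneg _)
    · calc _ ≤ ‖d k‖ * (2 * C * Real.exp (-γ * |x - k * a|)) :=
            mul_le_mul_of_nonneg_left (T_norm_bound hm hG hσ _) (norm_nonneg _)
        _ = 2 * C * (|d k| * Real.exp (-γ * |x - k * a|)) := by rw [Real.norm_eq_abs]; ring
        _ ≤ 2 * C * (B * Real.exp (γ * |x|) * Real.exp (-(γ / 2 * a * |(k : ℝ)|))) :=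
            mul_le_mul_of_nonneg_left (ht x k) (by positivity)
        _ = _ := by ring

lemma exp_E {δ0 x y : ℝ} : E δ0 (x - y) =
    Real.exp (-(x / δ0)) * if 0 < (x - y) / δ0 then |δ0|⁻¹ * Real.exp (y / δ0) else 0 := by
  unfold E
  split_ifs
  · rw [sub_div, neg_sub, sub_eq_add_neg, Real.exp_add]; ring
  · simp

/-- At the bottom of the hierarchy the function is, up to the factor `exp (-x/δ0)`, a step
function with jumps on the lattice only; `q` numbers the steps. -/
lemma Good.nil_struct {γ a δ0 : ℝ} {d : ℤ → ℝ} (H : Good γ a δ0 [] d) :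
    ∃ (q : ℝ → ℤ) (V : ℤ → ℝ), Monotone q ∧
      (∀ x, f a δ0 d [] x = Real.exp (-(x / δ0)) * V (q x)) ∧
      (∀ x y, q x + 2 ≤ q y → a ≤ y - x) ∧
      (∀ x, |q x * a - x| ≤ a) ∧
      (∀ x s t, s < x → x < t → ∃ u v, s < u ∧ u < v ∧ v < t ∧
        ∀ y ∈ Set.Ioo u v, q y = q x) := by
  have ha := H.ha
  rcases lt_or_gt_of_ne H.h0 with hneg | hpos
  · refine ⟨fun x => ⌊x / a⌋, fun n => ∑' k : ℤ, d k *
      (if n < k then |δ0|⁻¹ * Real.exp (k * a / δ0) else 0), ?_, ?_, ?_, ?_, ?_⟩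
    · intro x y hxy
      exact Int.floor_mono (div_le_div_of_nonneg_right hxy ha.le)
    · intro x
      rw [← tsum_mul_left]
      refine tsum_congr fun k => ?_
      have hc : (0 < (x - k * a) / δ0) ↔ ⌊x / a⌋ < k := by
        rw [Int.floor_lt, div_lt_iff₀ ha, div_pos_iff]
        constructor
        · rintro (h | h) <;> linarith [h.1, h.2]
        · intro h; right; exact ⟨by linarith, hneg⟩
      simp only [G]
      rw [exp_E]
      simp only [hc]
      ring
    · intro x y hxy
      have h1 := Int.lt_floor_add_one (x / a)
      have h2 := Int.floor_le (y / a)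
      have h3 : (⌊x / a⌋ : ℝ) + 2 ≤ ⌊y / a⌋ := by exact_mod_cast hxy
      have h4 : x / a + 1 ≤ y / a := by linarith
      rw [div_add_one ha.ne', div_le_div_iff_of_pos_right ha] at h4
      linarith
    · intro x
      have h1 := Int.lt_floor_add_one (x / a)
      have h2 := Int.floor_le (x / a)
      rw [le_div_iff₀ ha] at h2
      rw [div_lt_iff₀ ha] at h1
      rw [abs_le]; constructor <;> linarith
    · intro x s t hs ht
      have h1 := Int.lt_floor_add_one (x / a)
      rw [div_lt_iff₀ ha] at h1
      have h2 := Int.floor_le (x / a)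
      obtain ⟨v, hv1, hv2⟩ := exists_between (lt_min ht h1)
      refine ⟨x, v, hs, hv1, hv2.trans_le (min_le_left _ _), fun y hy => ?_⟩
      rw [Int.floor_eq_iff, le_div_iff₀ ha, div_lt_iff₀ ha]
      rw [le_div_iff₀ ha] at h2
      exact ⟨by linarith [hy.1], by linarith [hy.2, min_le_right t ((↑⌊x / a⌋ + 1) * a)]⟩
  · refine ⟨fun x => ⌈x / a⌉, fun n => ∑' k : ℤ, d k *
      (if k < n then |δ0|⁻¹ * Real.exp (k * a / δ0) else 0), ?_, ?_, ?_, ?_, ?_⟩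
    · intro x y hxy
      exact Int.ceil_mono (div_le_div_of_nonneg_right hxy ha.le)
    · intro x
      rw [← tsum_mul_left]
      refine tsum_congr fun k => ?_
      have hc : (0 < (x - k * a) / δ0) ↔ k < ⌈x / a⌉ := by
        rw [Int.lt_ceil, lt_div_iff₀ ha, div_pos_iff_of_pos_right hpos, sub_pos]
      simp only [G]
      rw [exp_E]
      simp only [hc]
      ring
    · intro x y hxy
      have h1 := Int.le_ceil (x / a)
      have h2 := Int.ceil_lt_add_one (y / a)
      have h3 : (⌈x / a⌉ : ℝ) + 2 ≤ ⌈y / a⌉ := by exact_mod_cast hxy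
      have h4 : x / a + 1 ≤ y / a := by linarith
      rw [div_add_one ha.ne', div_le_div_iff_of_pos_right ha] at h4
      linarith
    · intro x
      have h1 := Int.le_ceil (x / a)
      have h2 := Int.ceil_lt_add_one (x / a)
      rw [div_le_iff₀ ha] at h1
      rw [← sub_lt_iff_lt_add, lt_div_iff₀ ha] at h2
      rw [abs_le]; constructor <;> linarith
    · intro x s t hs ht
      have h1 := Int.le_ceil (x / a)
      rw [div_le_iff₀ ha] at h1
      have h2 := Int.ceil_lt_add_one (x / a)
      rw [← sub_lt_iff_lt_add, lt_div_iff₀ ha] at h2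
      obtain ⟨u, hu1, hu2⟩ := exists_between (max_lt hs h2)
      refine ⟨u, x, (le_max_left _ _).trans_lt hu1, hu2, ht, fun y hy => ?_⟩
      rw [Int.ceil_eq_iff, lt_div_iff₀ ha, div_le_iff₀ ha]
      exact ⟨by linarith [hy.1, le_max_right s ((↑⌈x / a⌉ - 1) * a)], by linarith [hy.2]⟩

lemma Good.nil_inj {γ a δ0 : ℝ} {d : ℤ → ℝ} (H : Good γ a δ0 [] d)
    (hz : ∀ x, f a δ0 d [] x = 0) (k : ℤ) : d k = 0 := by
  have ha := H.ha
  -- the two sample points lie on the two sides of the jump at `k a`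
  obtain ⟨x1, x2, h1, h2, h3⟩ : ∃ x1 x2 : ℝ, 0 < (x1 - k * a) / δ0 ∧ ¬ 0 < (x2 - k * a) / δ0 ∧
      ∀ j : ℤ, j ≠ k → (0 < (x1 - j * a) / δ0 ↔ 0 < (x2 - j * a) / δ0) := by
    rcases lt_or_gt_of_ne H.h0 with hneg | hpos
    · have e : ∀ y : ℝ, 0 < y / δ0 ↔ y < 0 := by
        intro y
        rw [div_pos_iff]
        constructor
        · rintro (h | h) <;> linarith [h.1, h.2]
        · intro h; exact Or.inr ⟨h, hneg⟩
      refine ⟨(k - 1) * a, k * a, ?_, ?_, ?_⟩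
      · rw [e]; linarith
      · rw [e]; linarith
      · intro j hj
        rw [e, e, sub_neg, sub_neg, mul_lt_mul_iff_left₀ ha, mul_lt_mul_iff_left₀ ha]
        have : ((k : ℝ) - 1 < j ↔ (k : ℝ) < j) := by
          constructor
          · intro h
            have : k - 1 < j := by exact_mod_cast h
            have : k < j := by omega
            exact_mod_cast this
          · intro h; linarith
        exact this
    · have e : ∀ y : ℝ, 0 < y / δ0 ↔ 0 < y := fun y => div_pos_iff_of_pos_right hpos
      refine ⟨(k + 1) * a, k * a, ?_, ?_, ?_⟩
      · rw [e]; linarith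
      · rw [e]; linarith
      · intro j hj
        rw [e, e, sub_pos, sub_pos, mul_lt_mul_iff_left₀ ha, mul_lt_mul_iff_left₀ ha]
        have : ((j : ℝ) < k + 1 ↔ (j : ℝ) < k) := by
          constructor
          · intro h
            have : j < k + 1 := by exact_mod_cast h
            have : j < k := by omega
            exact_mod_cast this
          · intro h; linarith
        exact this
  have hsum : ∀ x : ℝ, HasSum (fun j : ℤ => d j *
      if 0 < (x - j * a) / δ0 then |δ0|⁻¹ * Real.exp (j * a / δ0) else 0) 0 := by
    intro x
    have h := (H.summable x).hasSum
    have hz' := hz x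
    unfold f at hz'
    rw [hz'] at h
    have h' := h.mul_left (Real.exp (x / δ0))
    rw [mul_zero] at h'
    refine h'.congr_fun ?_
    intro j
    simp only [G]
    rw [exp_E, mul_left_comm, ← mul_assoc (Real.exp (x / δ0)), ← Real.exp_add]
    simp
  have hd := (hsum x1).sub (hsum x2)
  have hs := hasSum_single (f := fun j : ℤ => (d j *
      if 0 < (x1 - j * a) / δ0 then |δ0|⁻¹ * Real.exp (j * a / δ0) else 0) - d j *
      if 0 < (x2 - j * a) / δ0 then |δ0|⁻¹ * Real.exp (j * a / δ0) else 0) k ?_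
  · have := hd.unique hs
    simp only [h1, h2, if_true, if_false, mul_zero, sub_zero] at this
    have hne : |δ0|⁻¹ * Real.exp (k * a / δ0) ≠ 0 :=
      mul_ne_zero (inv_ne_zero (abs_ne_zero.2 H.h0)) (Real.exp_ne_zero _)
    rcases mul_eq_zero.1 this.symm with h | h
    · exact h
    · exact absurd h hne
  · intro j hj
    simp only [h3 j hj, sub_self]

/-! ### Zero counting and injectivity -/

lemma Good.continuous {γ a δ0 δ : ℝ} {l : List ℝ} {d : ℤ → ℝ} (H : Good γ a δ0 (δ :: l) d) :
    Continuous (f a δ0 d (δ :: l)) := by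
  obtain ⟨C, hC⟩ := H.tail.growth
  rw [H.f_cons]
  exact T_continuous H.tail.measurable (H.hl δ (by simp)).1 hC H.hσ

lemma Good.thick {γ a δ0 : ℝ} {l : List ℝ} {d : ℤ → ℝ} (H : Good γ a δ0 l d) :
    Thick (f a δ0 d l) := by
  cases l with
  | cons δ l => exact thick_of_continuous H.continuous
  | nil =>
    obtain ⟨q, V, -, hf, -, -, hq⟩ := H.nil_struct
    intro x hx s t hs ht
    obtain ⟨u, v, h1, h2, h3, h4⟩ := hq x s t hs ht
    refine ⟨u, v, h1, h2, h3, fun y hy => ?_⟩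
    have hV : V (q x) ≠ 0 := by
      intro h0
      rw [hf, h0, mul_zero] at hx
      exact hx rfl
    rw [hf, hf, h4 y hy]
    have := mul_self_pos.2 hV
    have e1 := Real.exp_pos (-(x / δ0))
    have e2 := Real.exp_pos (-(y / δ0))
    calc (0 : ℝ) < (Real.exp (-(x / δ0)) * Real.exp (-(y / δ0))) * (V (q x) * V (q x)) := by
          positivity
      _ = _ := by ring

lemma Good.rolle {γ a δ0 δ : ℝ} {l : List ℝ} {d : ℤ → ℝ} (H : Good γ a δ0 (δ :: l) d)
    {s t w : ℝ} (hst : s < t)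
    (hw : 0 < w * (Real.exp (t / δ) * f a δ0 d (δ :: l) t -
      Real.exp (s / δ) * f a δ0 d (δ :: l) s)) :
    ∃ x ∈ Set.Ioo s t, 0 < w / δ * f a δ0 d l x := by
  obtain ⟨C, hC⟩ := H.tail.growth
  rw [H.f_cons] at hw
  exact TPGabor.rolle H.tail.measurable (H.hl δ (by simp)).1 hC H.hσ hst hw

lemma Good.zero_tail {γ a δ0 δ : ℝ} {l : List ℝ} {d : ℤ → ℝ} (H : Good γ a δ0 (δ :: l) d)
    {s t : ℝ} (hz : ∀ x ∈ Set.Ioo s t, f a δ0 d (δ :: l) x = 0) :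
    ∀ x ∈ Set.Ioo s t, f a δ0 d l x = 0 := by
  obtain ⟨C, hC⟩ := H.tail.growth
  rw [H.f_cons] at hz
  exact zero_of_T_zero H.tail.measurable (H.hl δ (by simp)).1 hC H.hσ H.tail.thick hz

/-- `F` takes values of both strict signs inside the interval. -/
def Both (F : ℝ → ℝ) (α β : ℝ) : Prop :=
  ∃ t1 t2 w : ℝ, α < t1 ∧ t1 < t2 ∧ t2 < β ∧ 0 < w * F t1 ∧ w * F t2 < 0

/-- A sign change next to a zero at the left endpoint descends the hierarchy: Rolle's theorem is
applied between the zero and the first point, and between the two points. -/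
lemma Good.both_left {γ a δ0 δ : ℝ} {l : List ℝ} {d : ℤ → ℝ} (H : Good γ a δ0 (δ :: l) d)
    {α β : ℝ} (hα : f a δ0 d (δ :: l) α = 0) (hb : Both (f a δ0 d (δ :: l)) α β) :
    Both (f a δ0 d l) α β := by
  obtain ⟨t1, t2, w, h1, h12, h2, hp, hn⟩ := hb
  have p1 := mul_pos (Real.exp_pos (t1 / δ)) hp
  have p2 := mul_neg_of_pos_of_neg (Real.exp_pos (t2 / δ)) hn
  obtain ⟨x1, hx1, k1⟩ := H.rolle (w := w) h1 (by rw [hα]; linarith)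
  obtain ⟨x2, hx2, k2⟩ := H.rolle (w := -w) h12 (by linarith)
  refine ⟨x1, x2, w / δ, hx1.1, hx1.2.trans hx2.1, hx2.2.trans h2, k1, ?_⟩
  rw [neg_div, neg_mul] at k2; linarith

lemma Good.both_right {γ a δ0 δ : ℝ} {l : List ℝ} {d : ℤ → ℝ} (H : Good γ a δ0 (δ :: l) d)
    {α β : ℝ} (hβ : f a δ0 d (δ :: l) β = 0) (hb : Both (f a δ0 d (δ :: l)) α β) :
    Both (f a δ0 d l) α β := by
  obtain ⟨t1, t2, w, h1, h12, h2, hp, hn⟩ := hb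
  have p1 := mul_pos (Real.exp_pos (t1 / δ)) hp
  have p2 := mul_neg_of_pos_of_neg (Real.exp_pos (t2 / δ)) hn
  obtain ⟨x1, hx1, k1⟩ := H.rolle (w := -w) h12 (by linarith)
  obtain ⟨x2, hx2, k2⟩ := H.rolle (w := w) h2 (by rw [hβ]; linarith)
  refine ⟨x1, x2, -w / δ, h1.trans hx1.1, hx1.2.trans hx2.1, hx2.2, k1, ?_⟩
  rw [neg_div, neg_mul]; linarith

lemma Good.both_init {γ a δ0 δ : ℝ} {l : List ℝ} {d : ℤ → ℝ} (H : Good γ a δ0 (δ :: l) d)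
    {α β y : ℝ} (hα : f a δ0 d (δ :: l) α = 0) (hβ : f a δ0 d (δ :: l) β = 0)
    (hy : y ∈ Set.Ioo α β) (hne : f a δ0 d (δ :: l) y ≠ 0) : Both (f a δ0 d l) α β := by
  have p := mul_pos (Real.exp_pos (y / δ)) (mul_self_pos.2 hne)
  obtain ⟨x1, hx1, k1⟩ := H.rolle (w := f a δ0 d (δ :: l) y) hy.1 (by rw [hα]; linarith)
  obtain ⟨x2, hx2, k2⟩ := H.rolle (w := -f a δ0 d (δ :: l) y) hy.2 (by rw [hβ]; linarith)
  refine ⟨x1, x2, _, hx1.1, hx1.2.trans hx2.1, hx2.2, k1, ?_⟩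
  rw [neg_div, neg_mul] at k2; linarith

lemma zero_on_Icc {F : ℝ → ℝ} (hF : Continuous F) {s t : ℝ} (hst : s < t)
    (hz : ∀ x ∈ Set.Ioo s t, F x = 0) : ∀ x ∈ Set.Icc s t, F x = 0 := by
  have hc : IsClosed {x | F x = 0} := isClosed_eq hF continuous_const
  have : closure (Set.Ioo s t) ⊆ {x | F x = 0} := hc.closure_subset_iff.2 hz
  rw [closure_Ioo hst.ne] at this
  exact this

lemma sign_ne {e1 e2 w V : ℝ} (h1 : 0 < e1) (h2 : 0 < e2) (hp : 0 < w * (e1 * V))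
    (hn : w * (e2 * V) < 0) : False := by
  have : 0 < w * V := by
    have : 0 < e1 * (w * V) := by linarith
    exact (mul_pos_iff_of_pos_left h1).1 this
  have : 0 < e2 * (w * V) := mul_pos h2 this
  linarith

/-- To the right of a zero interval, a function in the hierarchy keeps its sign up to
distance `a`: only one lattice point can be met on the way. -/
lemma Good.no_both_left {γ a δ0 : ℝ} {l : List ℝ} {d : ℤ → ℝ} (H : Good γ a δ0 l d)
    {s α β : ℝ} (hs : s < α) (hβ : β - α < a) (hz : ∀ x ∈ Set.Ioo s α, f a δ0 d l x = 0)
    (hb : Both (f a δ0 d l) α β) : False := by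
  induction l with
  | cons δ l ih =>
    exact ih H.tail (H.zero_tail hz)
      (H.both_left (zero_on_Icc H.continuous hs hz α ⟨hs.le, le_rfl⟩) hb)
  | nil =>
    obtain ⟨q, V, hmono, hf, hq2, -, -⟩ := H.nil_struct
    obtain ⟨t1, t2, w, h1, h12, h2, hp, hn⟩ := hb
    obtain ⟨u, hu1, hu2⟩ := exists_between (max_lt hs (show t2 - a < α by linarith))
    have hu := hz u ⟨(le_max_left _ _).trans_lt hu1, hu2⟩
    rw [hf] at hu hp hn
    have hVu : V (q u) = 0 := by simpa using hu
    have n1 : q u ≠ q t1 := by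
      intro h; rw [← h, hVu] at hp; simp at hp
    have n2 : q t1 ≠ q t2 := by
      intro h; rw [← h] at hn; exact sign_ne (Real.exp_pos _) (Real.exp_pos _) hp hn
    have m1 := hmono (hu2.trans h1).le
    have m2 := hmono h12.le
    have := hq2 u t2 (by omega)
    linarith [le_max_right s (t2 - a)]

lemma Good.no_both_right {γ a δ0 : ℝ} {l : List ℝ} {d : ℤ → ℝ} (H : Good γ a δ0 l d)
    {t α β : ℝ} (ht : β < t) (hβ : β - α < a) (hz : ∀ x ∈ Set.Ioo β t, f a δ0 d l x = 0)
    (hb : Both (f a δ0 d l) α β) : False := by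
  induction l with
  | cons δ l ih =>
    exact ih H.tail (H.zero_tail hz)
      (H.both_right (zero_on_Icc H.continuous ht hz β ⟨le_rfl, ht.le⟩) hb)
  | nil =>
    obtain ⟨q, V, hmono, hf, hq2, -, -⟩ := H.nil_struct
    obtain ⟨t1, t2, w, h1, h12, h2, hp, hn⟩ := hb
    obtain ⟨u, hu1, hu2⟩ := exists_between (lt_min ht (show β < t1 + a by linarith))
    have hu := hz u ⟨hu1, hu2.trans_le (min_le_left _ _)⟩
    rw [hf] at hu hp hn
    have hVu : V (q u) = 0 := by simpa using hu
    have n1 : q t2 ≠ q u := by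
      intro h; rw [h, hVu] at hn; simp at hn
    have n2 : q t1 ≠ q t2 := by
      intro h; rw [← h] at hn; exact sign_ne (Real.exp_pos _) (Real.exp_pos _) hp hn
    have m1 := hmono (h2.trans hu1).le
    have m2 := hmono h12.le
    have := hq2 t1 u (by omega)
    linarith [min_le_right t (t1 + a)]

/-- Vanishing on an interval propagates to the right up to any zero within distance `a`. -/
lemma Good.prop_right {γ a δ0 δ : ℝ} {l : List ℝ} {d : ℤ → ℝ} (H : Good γ a δ0 (δ :: l) d)
    {s α β : ℝ} (hs : s < α) (hβ : β - α < a) (hz : ∀ x ∈ Set.Ioo s α, f a δ0 d (δ :: l) x = 0)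
    (hβ0 : f a δ0 d (δ :: l) β = 0) : ∀ x ∈ Set.Ioo α β, f a δ0 d (δ :: l) x = 0 := by
  intro y hy
  by_contra hne
  exact H.tail.no_both_left hs hβ (H.zero_tail hz)
    (H.both_init (zero_on_Icc H.continuous hs hz α ⟨hs.le, le_rfl⟩) hβ0 hy hne)

lemma Good.prop_left {γ a δ0 δ : ℝ} {l : List ℝ} {d : ℤ → ℝ} (H : Good γ a δ0 (δ :: l) d)
    {t α β : ℝ} (ht : β < t) (hβ : β - α < a) (hz : ∀ x ∈ Set.Ioo β t, f a δ0 d (δ :: l) x = 0)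
    (hα0 : f a δ0 d (δ :: l) α = 0) : ∀ x ∈ Set.Ioo α β, f a δ0 d (δ :: l) x = 0 := by
  intro y hy
  by_contra hne
  exact H.tail.no_both_right ht hβ (H.zero_tail hz)
    (H.both_init hα0 (zero_on_Icc H.continuous ht hz β ⟨le_rfl, ht.le⟩) hy hne)

/-- Strict sign alternations of density at least `1/M` are passed down the hierarchy by Rolle's
theorem, while at the bottom they cannot be denser than the lattice `a ℤ`. -/
lemma Good.no_alt {γ a δ0 M : ℝ} {l : List ℝ} {d : ℤ → ℝ} (H : Good γ a δ0 l d) (hMa : M < a)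
    (C w : ℝ) (t : ℕ → ℝ) (ht : StrictMono t) (htC : ∀ i, t i ≤ C + M * i)
    (hw : ∀ i, 0 < w * (-1) ^ i * f a δ0 d l (t i)) : False := by
  induction l generalizing C w t with
  | cons δ l ih =>
    have hex : ∀ i, ∃ x ∈ Set.Ioo (t i) (t (i + 1)),
        0 < (w * (-1) ^ (i + 1)) / δ * f a δ0 d l x := by
      intro i
      apply H.rolle (ht (Nat.lt_succ_self i))
      have p1 := mul_pos (Real.exp_pos (t i / δ)) (hw i)
      have p2 := mul_pos (Real.exp_pos (t (i + 1) / δ)) (hw (i + 1))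
      rw [pow_succ] at p2 ⊢
      linarith
    choose t' ht' hp using hex
    refine ih H.tail (C + M) (-w / δ) t' ?_ ?_ ?_
    · exact strictMono_nat_of_lt_succ fun i => (ht' i).2.trans (ht' (i + 1)).1
    · intro i
      have h1 := (ht' i).2
      have h2 := htC (i + 1)
      push_cast at h2
      linarith
    · intro i
      have := hp i
      rw [pow_succ] at this
      have e : w * ((-1) ^ i * -1) / δ * f a δ0 d l (t' i) =
        -w / δ * (-1) ^ i * f a δ0 d l (t' i) := by ring
      rwa [e] at this
  | nil =>
    obtain ⟨q, V, hmono, hf, -, hq, -⟩ := H.nil_struct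
    have hstep : ∀ i, q (t i) + 1 ≤ q (t (i + 1)) := by
      intro i
      have hne : q (t i) ≠ q (t (i + 1)) := by
        intro h
        have h1 := hw i
        have h2 := hw (i + 1)
        rw [hf] at h1 h2
        rw [← h, pow_succ] at h2
        refine sign_ne (Real.exp_pos _) (Real.exp_pos _) h1 (w := w * (-1) ^ i)
          (e2 := Real.exp (-(t (i + 1) / δ0))) ?_
        linarith
      have := hmono (ht (Nat.lt_succ_self i)).le
      simp only [Nat.succ_eq_add_one] at this
      omega
    have hlin : ∀ i : ℕ, q (t 0) + i ≤ q (t i) := by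
      intro i
      induction i with
      | zero => simp
      | succ i ih => have := hstep i; push_cast; omega
    obtain ⟨i, hi⟩ := exists_nat_gt ((C + a - q (t 0) * a) / (a - M))
    rw [div_lt_iff₀ (by linarith)] at hi
    have h1 : ((q (t 0) : ℝ) + i) * a ≤ q (t i) * a :=
      mul_le_mul_of_nonneg_right (by exact_mod_cast hlin i) H.ha.le
    have h2 := (abs_le.1 (hq (t i))).2
    have h3 := htC i
    linarith

/-- Sampling with step `M < a` is injective on the space spanned by the `a`-translates, even for
exponentially growing coefficients. -/
lemma Good.injective {γ a δ0 δ M r : ℝ} {l : List ℝ} {d : ℤ → ℝ} (H : Good γ a δ0 (δ :: l) d)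
    (hM : 0 < M) (hMa : M < a) (hz : ∀ n : ℤ, f a δ0 d (δ :: l) (r + M * n) = 0) (k : ℤ) :
    d k = 0 := by
  set F := f a δ0 d (δ :: l) with hF
  have hgap : ∃ n : ℤ, ∀ y ∈ Set.Ioo (r + M * n) (r + M * (n + 1 : ℤ)), F y = 0 := by
    by_contra! hcon
    have hex : ∀ n : ℕ, ∃ t ∈ Set.Ioo (r + M * n) (r + M * (n + 1)),
        0 < 1 * (-1) ^ n * f a δ0 d l t := by
      intro n
      obtain ⟨y, hy, hne⟩ := hcon n
      obtain ⟨t1, t2, w, h1, h12, h2, hp, hn⟩ := H.both_init (hz n) (hz (n + 1 : ℤ)) hy hne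
      push_cast at h1 h2
      rcases neg_one_pow_eq_or ℝ n with e | e <;> rw [e] <;>
        rcases lt_or_ge 0 (f a δ0 d l t1) with g | g
      · exact ⟨t1, ⟨h1, by linarith⟩, by linarith⟩
      · have : w < 0 := by by_contra! hw; nlinarith
        exact ⟨t2, ⟨by linarith, h2⟩, by by_contra! h; nlinarith⟩
      · have : 0 < w := by by_contra! hw; nlinarith
        exact ⟨t2, ⟨by linarith, h2⟩, by by_contra! h; nlinarith⟩
      · refine ⟨t1, ⟨h1, by linarith⟩, ?_⟩
        have : f a δ0 d l t1 ≠ 0 := by intro h; rw [h] at hp; simp at hp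
        have := lt_of_le_of_ne g this
        linarith
    choose t ht hp using hex
    refine H.tail.no_alt hMa (r + M) 1 t ?_ ?_ hp
    · refine strictMono_nat_of_lt_succ fun i => ?_
      have h1 := (ht i).2
      have h2 := (ht (i + 1)).1
      push_cast at h2
      linarith
    · intro i; have := (ht i).2; linarith
  obtain ⟨n0, hn0⟩ := hgap
  have hright : ∀ j : ℕ, ∀ y ∈ Set.Ioo (r + M * (n0 + j : ℤ)) (r + M * (n0 + j + 1 : ℤ)), F y = 0 := by
    intro j
    induction j with
    | zero => simpa using hn0
    | succ j ih =>
      have e : ((n0 + (j + 1 : ℕ) : ℤ)) = n0 + j + 1 := by push_cast; ring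
      rw [e]
      refine H.prop_right (s := r + M * (n0 + j : ℤ)) ?_ ?_ ih (hz _)
      · push_cast; linarith
      · push_cast; linarith
  have hleft : ∀ j : ℕ, ∀ y ∈ Set.Ioo (r + M * (n0 - j : ℤ)) (r + M * (n0 - j + 1 : ℤ)), F y = 0 := by
    intro j
    induction j with
    | zero => simpa using hn0
    | succ j ih =>
      have e : ((n0 - (j + 1 : ℕ) : ℤ)) + 1 = n0 - j := by push_cast; ring
      rw [e]
      refine H.prop_left (t := r + M * (n0 - j + 1 : ℤ)) ?_ ?_ ih (hz _)
      · push_cast; linarith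
      · push_cast; linarith
  have hall : ∀ n : ℤ, ∀ y ∈ Set.Ioo (r + M * n) (r + M * (n + 1 : ℤ)), F y = 0 := by
    intro n
    rcases le_total n0 n with h | h
    · obtain ⟨j, rfl⟩ := Int.le.dest h
      exact hright j
    · obtain ⟨j, hj⟩ := Int.le.dest h
      have : n = n0 - j := by omega
      rw [this]; exact hleft j
  have hF0 : ∀ x, F x = 0 := by
    intro x
    have h1 := Int.floor_le ((x - r) / M)
    have h2 := Int.lt_floor_add_one ((x - r) / M)
    rw [le_div_iff₀ hM] at h1
    rw [div_lt_iff₀ hM] at h2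
    rcases h1.eq_or_lt with h | h
    · have := hz ⌊(x - r) / M⌋
      rwa [show r + M * (⌊(x - r) / M⌋ : ℝ) = x by linarith] at this
    · exact hall ⌊(x - r) / M⌋ x ⟨by linarith, by push_cast; linarith⟩
  have hdown : ∀ (l' : List ℝ), Good γ a δ0 l' d → (∀ x, f a δ0 d l' x = 0) → d k = 0 := by
    intro l'
    induction l' with
    | nil => intro H' hz'; exact H'.nil_inj hz' k
    | cons δ' l' ih =>
      intro H' hz'
      refine ih H'.tail fun x => ?_
      exact H'.zero_tail (s := x - 1) (t := x + 1) (fun y _ => hz' y) x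
        ⟨by linarith, by linarith⟩
  exact hdown _ H hF0

/-! ### Compactness and stability -/

/-- By compactness of the set of normalized coefficient sequences with controlled growth,
injectivity becomes quantitative.  Since a limiting sequence would have to vanish at every node,
the lower bound may be required to grow exponentially with the node. -/
lemma uniform_lower {γ a δ0 δ M : ℝ} {l : List ℝ} (H0 : Good γ a δ0 (δ :: l) 0)
    (hM : 0 < M) (hMa : M < a) :
    ∃ ε, 0 < ε ∧ ∀ ρ ∈ Set.Icc 0 M, ∀ D : ℤ → ℂ,
      (∀ k : ℤ, ‖D k‖ ≤ Real.exp (γ / 2 * (a * |(k : ℝ)|))) → ‖D 0‖ = 1 →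
      ∃ n : ℤ, ε * Real.exp (γ / 2 * (M * |(n : ℝ)|)) <
        ‖∑' k : ℤ, D k * (G δ0 (δ :: l) (ρ + M * n - k * a) : ℂ)‖ := by
  obtain ⟨-, C, hC, hG⟩ := G_prop H0.hγ H0.h0 H0.hγ0 _ H0.hl
  have hGc : Continuous (G δ0 (δ :: l)) := G_continuous H0.hγ H0.h0 H0.hγ0 δ l H0.hl
  have hp : 0 < γ / 2 * a := mul_pos (half_pos H0.hγ) H0.ha
  by_contra! hcon
  set Y : Set (ℤ → ℂ) := Set.univ.pi fun k =>
    Metric.closedBall (0 : ℂ) (Real.exp (γ / 2 * (a * |(k : ℝ)|))) with hY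
  set X : Set (ℝ × (ℤ → ℂ)) := Set.Icc 0 M ×ˢ Y with hX
  have hXc : IsCompact X :=
    isCompact_Icc.prod (isCompact_univ_pi fun k => isCompact_closedBall _ _)
  have hYm : ∀ D, D ∈ Y ↔ ∀ k : ℤ, ‖D k‖ ≤ Real.exp (γ / 2 * (a * |(k : ℝ)|)) := by
    intro D; simp [hY]
  set Φ : ℤ → ℝ × (ℤ → ℂ) → ℂ := fun n p =>
    ∑' k : ℤ, p.2 k * (G δ0 (δ :: l) (p.1 + M * n - k * a) : ℂ) with hΦ
  have hterm : ∀ (x : ℝ) (D : ℤ → ℂ), D ∈ Y → ∀ k : ℤ,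
      ‖D k * (G δ0 (δ :: l) (x - k * a) : ℂ)‖ ≤
        C * Real.exp (γ * |x|) * Real.exp (-(γ / 2 * a * |(k : ℝ)|)) := by
    intro x D hD k
    rw [norm_mul, Complex.norm_real, Real.norm_eq_abs]
    calc _ ≤ Real.exp (γ / 2 * (a * |(k : ℝ)|)) * (C * Real.exp (-γ * |x - k * a|)) :=
          mul_le_mul ((hYm D).1 hD k) (hG _) (abs_nonneg _) (Real.exp_pos _).le
      _ = C * (Real.exp (γ / 2 * (a * |(k : ℝ)|)) * Real.exp (-γ * |x - k * a|)) := by ring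
      _ ≤ _ := by
          rw [mul_assoc]
          exact mul_le_mul_of_nonneg_left (exp_shift H0.hγ H0.ha x k) hC.le
  have hΦc : ∀ n, ContinuousOn (Φ n) X := by
    intro n
    refine continuousOn_tsum (u := fun k : ℤ => C * Real.exp (γ * (M + M * |(n : ℝ)|)) *
      Real.exp (-(γ / 2 * a * |(k : ℝ)|))) ?_ ((summable_exp_int hp).mul_left _) ?_
    · intro k
      refine Continuous.continuousOn ?_
      fun_prop
    · rintro k ⟨ρ, D⟩ ⟨hρ, hD⟩
      refine (hterm (ρ + M * n) D hD k).trans ?_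
      have : |ρ + M * n| ≤ M + M * |(n : ℝ)| := by
        refine (abs_add_le _ _).trans ?_
        rw [abs_mul, abs_of_pos hM, abs_of_nonneg hρ.1]
        exact add_le_add hρ.2 le_rfl
      have h2 : Real.exp (γ * |ρ + M * n|) ≤ Real.exp (γ * (M + M * |(n : ℝ)|)) :=
        Real.exp_le_exp.2 (mul_le_mul_of_nonneg_left this H0.hγ.le)
      gcongr
  set K : ℕ → Set (ℝ × (ℤ → ℂ)) := fun N => (X ∩ {p | ‖p.2 0‖ = 1}) ∩
    ⋂ n : ℤ, (X ∩ (fun p => ‖Φ n p‖) ⁻¹' Set.Iic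
      ((1 / ((N : ℝ) + 1)) * Real.exp (γ / 2 * (M * |(n : ℝ)|)))) with hK
  have hclosed1 : IsClosed (X ∩ {p : ℝ × (ℤ → ℂ) | ‖p.2 0‖ = 1}) :=
    hXc.isClosed.inter (isClosed_eq (by fun_prop) continuous_const)
  have hclosed : ∀ N, IsClosed (K N) := by
    intro N
    refine hclosed1.inter (isClosed_iInter fun n => ?_)
    exact (hΦc n).norm.preimage_isClosed_of_isClosed hXc.isClosed isClosed_Iic
  have hne : (⋂ N, K N).Nonempty := by
    refine IsCompact.nonempty_iInter_of_sequence_nonempty_isCompact_isClosed K ?_ ?_ ?_ hclosed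
    · rintro N p ⟨hp1, hp2⟩
      refine ⟨hp1, ?_⟩
      rw [Set.mem_iInter] at hp2 ⊢
      intro n
      refine ⟨hp1.1, ?_⟩
      have := (hp2 n).2
      simp only [Set.mem_preimage, Set.mem_Iic] at this ⊢
      refine this.trans (mul_le_mul_of_nonneg_right ?_ (Real.exp_pos _).le)
      apply one_div_le_one_div_of_le (by positivity)
      push_cast; linarith
    · intro N
      obtain ⟨ρ, hρ, D, hD, hD0, hle⟩ := hcon (1 / ((N : ℝ) + 1)) (by positivity)
      have hx : (ρ, D) ∈ X := ⟨hρ, (hYm D).2 hD⟩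
      exact ⟨(ρ, D), ⟨hx, hD0⟩, Set.mem_iInter.2 fun n => ⟨hx, hle n⟩⟩
    · exact hXc.of_isClosed_subset (hclosed 0) fun p hp => hp.1.1
  obtain ⟨⟨ρ, D⟩, hpK⟩ := hne
  rw [Set.mem_iInter] at hpK
  have hD : D ∈ Y := (hpK 0).1.1.2
  have hD0 : ‖D 0‖ = 1 := (hpK 0).1.2
  have hzero : ∀ n : ℤ, Φ n (ρ, D) = 0 := by
    intro n
    have hle : ∀ N : ℕ, ‖Φ n (ρ, D)‖ ≤ (1 / ((N : ℝ) + 1)) *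
        Real.exp (γ / 2 * (M * |(n : ℝ)|)) := fun N => (Set.mem_iInter.1 (hpK N).2 n).2
    have hlim := (tendsto_one_div_add_atTop_nhds_zero_nat (𝕜 := ℝ)).mul_const
      (Real.exp (γ / 2 * (M * |(n : ℝ)|)))
    rw [zero_mul] at hlim
    have := ge_of_tendsto' hlim hle
    exact norm_le_zero_iff.1 this
  have hsum : ∀ x : ℝ, Summable fun k : ℤ => D k * (G δ0 (δ :: l) (x - k * a) : ℂ) := fun x =>
    Summable.of_norm_bounded ((summable_exp_int hp).mul_left _) (hterm x D hD)
  have hre : ∀ k, (D k).re = 0 := by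
    refine Good.injective (γ := γ) (a := a) (δ0 := δ0) (δ := δ) (l := l) (M := M) (r := ρ)
      ⟨H0.hγ, H0.ha, H0.h0, H0.hγ0, H0.hl, 1, one_pos, fun k => ?_⟩ hM hMa fun n => ?_
    · rw [one_mul]; exact (Complex.abs_re_le_norm _).trans ((hYm D).1 hD k)
    · have := congrArg Complex.re (hzero n)
      simp only [hΦ] at this
      rw [Complex.re_tsum (hsum _)] at this
      simpa [f] using this
  have him : ∀ k, (D k).im = 0 := by
    refine Good.injective (γ := γ) (a := a) (δ0 := δ0) (δ := δ) (l := l) (M := M) (r := ρ)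
      ⟨H0.hγ, H0.ha, H0.h0, H0.hγ0, H0.hl, 1, one_pos, fun k => ?_⟩ hM hMa fun n => ?_
    · rw [one_mul]; exact (Complex.abs_im_le_norm _).trans ((hYm D).1 hD k)
    · have := congrArg Complex.im (hzero n)
      simp only [hΦ] at this
      rw [Complex.im_tsum (hsum _)] at this
      simpa [f] using this
  have : D 0 = 0 := Complex.ext (hre 0) (him 0)
  rw [this] at hD0
  simp at hD0

/-- Every coefficient is controlled by a single sample, up to a factor decaying exponentially in
the distance between the coefficient's lattice point and the node. -/
lemma stability {γ a δ0 δ M : ℝ} {l : List ℝ} (H0 : Good γ a δ0 (δ :: l) 0)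
    (hM : 0 < M) (hMa : M < a) :
    ∃ C, 0 < C ∧ ∀ d : ℤ → ℂ, (Function.support d).Finite → ∀ (j : ℤ) (r : ℝ), ∃ n : ℤ,
      ‖d j‖ ≤ C * Real.exp (-(γ / 2 * |j * a - (r + M * n)|)) *
        ‖∑' k : ℤ, d k * (G δ0 (δ :: l) (r + M * n - k * a) : ℂ)‖ := by
  obtain ⟨ε, hε, hlow⟩ := uniform_lower H0 hM hMa
  have hγ := H0.hγ
  have ha := H0.ha
  refine ⟨Real.exp (γ / 2 * M) / ε, by positivity, fun d hd j r => ?_⟩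
  by_cases hj : d j = 0
  · refine ⟨0, ?_⟩
    rw [hj, norm_zero]; positivity
  -- recentre at the index maximizing the exponentially weighted coefficient
  obtain ⟨k0, -, hk0⟩ := Finset.exists_max_image hd.toFinset
    (fun k => ‖d k‖ * Real.exp (-(γ / 2 * (a * |((k - j : ℤ) : ℝ)|)))) ⟨j, by simpa using hj⟩
  have hmax : ∀ k, ‖d k‖ * Real.exp (-(γ / 2 * (a * |((k - j : ℤ) : ℝ)|))) ≤
      ‖d k0‖ * Real.exp (-(γ / 2 * (a * |((k0 - j : ℤ) : ℝ)|))) := by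
    intro k
    by_cases hk : d k = 0
    · rw [hk, norm_zero, zero_mul]; positivity
    · exact hk0 k (by simpa using hk)
  have hpos : 0 < ‖d k0‖ := by
    have h1 := hmax j
    have h2 : 0 < ‖d j‖ * Real.exp (-(γ / 2 * (a * |((j - j : ℤ) : ℝ)|))) :=
      mul_pos (norm_pos_iff.2 hj) (Real.exp_pos _)
    exact (mul_pos_iff_of_pos_right (Real.exp_pos _)).1 (h2.trans_le h1)
  set c : ℂ := ((‖d k0‖ : ℝ) : ℂ)⁻¹ with hc
  have hcn : ‖c‖ = ‖d k0‖⁻¹ := by rw [hc, norm_inv, Complex.norm_real, norm_norm]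
  set q : ℤ := ⌊(r - k0 * a) / M⌋ with hq
  have hq1 := Int.floor_le ((r - k0 * a) / M)
  have hq2 := Int.lt_floor_add_one ((r - k0 * a) / M)
  rw [le_div_iff₀ hM] at hq1
  rw [div_lt_iff₀ hM] at hq2
  rw [← hq] at hq1 hq2
  have hb1 : ∀ i : ℤ, ‖c * d (k0 + i)‖ ≤ Real.exp (γ / 2 * (a * |(i : ℝ)|)) := by
    intro i
    rw [norm_mul, hcn, inv_mul_eq_div, div_le_iff₀ hpos]
    have h1 := hmax (k0 + i)
    have h2 : |((k0 + i - j : ℤ) : ℝ)| ≤ |((k0 - j : ℤ) : ℝ)| + |(i : ℝ)| := by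
      rw [show ((k0 + i - j : ℤ) : ℝ) = ((k0 - j : ℤ) : ℝ) + i by push_cast; ring]
      exact abs_add_le _ _
    rw [Real.exp_neg, ← div_eq_mul_inv, div_le_iff₀ (Real.exp_pos _), mul_assoc,
      ← Real.exp_add] at h1
    refine h1.trans ?_
    rw [mul_comm]
    refine mul_le_mul_of_nonneg_right (Real.exp_le_exp.2 ?_) hpos.le
    have : 0 < γ / 2 * a := by positivity
    nlinarith
  have hb2 : ‖c * d (k0 + 0)‖ = 1 := by
    rw [add_zero, norm_mul, hcn, inv_mul_cancel₀ hpos.ne']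
  obtain ⟨n, hn⟩ := hlow (r - k0 * a - q * M) ⟨by linarith, by linarith⟩
    (fun i => c * d (k0 + i)) hb1 hb2
  refine ⟨n - q, ?_⟩
  have hs : ∑' k : ℤ, c * d (k0 + k) *
      (G δ0 (δ :: l) (r - k0 * a - q * M + M * n - k * a) : ℂ) =
      c * ∑' k : ℤ, d k * (G δ0 (δ :: l) (r + M * (n - q : ℤ) - k * a) : ℂ) := by
    rw [← tsum_mul_left, ← (Equiv.addLeft k0).tsum_eq (fun k : ℤ =>
      c * (d k * (G δ0 (δ :: l) (r + M * (n - q : ℤ) - k * a) : ℂ)))]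
    refine tsum_congr fun k => ?_
    simp only [Equiv.coe_addLeft]
    push_cast
    rw [show r - k0 * a - q * M + M * n - k * a = r + M * (n - q) - (k0 + k) * a by ring]
    ring
  rw [hs, norm_mul, hcn] at hn
  set S := ‖∑' k : ℤ, d k * (G δ0 (δ :: l) (r + M * (n - q : ℤ) - k * a) : ℂ)‖ with hS
  have h1 := hmax j
  simp only [sub_self, Int.cast_zero, abs_zero, mul_zero, neg_zero, Real.exp_zero, mul_one] at h1
  have h2 : ‖d k0‖ ≤ Real.exp (-(γ / 2 * (M * |(n : ℝ)|))) / ε * S := by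
    rw [inv_mul_eq_div, lt_div_iff₀ hpos] at hn
    rw [Real.exp_neg]
    have e := Real.exp_pos (γ / 2 * (M * |(n : ℝ)|))
    rw [div_mul_eq_mul_div, le_div_iff₀ hε, inv_mul_eq_div, le_div_iff₀ e]
    linarith
  have hS0 : 0 ≤ S := norm_nonneg _
  have hdist : |j * a - (r + M * (n - q : ℤ))| ≤
      a * |((k0 - j : ℤ) : ℝ)| + (M + M * |(n : ℝ)|) := by
    have e : j * a - (r + M * (n - q : ℤ)) =
        -(a * ((k0 - j : ℤ) : ℝ)) + -((r - k0 * a - q * M) + M * n) := by push_cast; ring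
    rw [e]
    refine (abs_add_le _ _).trans ?_
    rw [abs_neg, abs_neg, abs_mul, abs_of_pos ha]
    refine add_le_add le_rfl ((abs_add_le _ _).trans ?_)
    rw [abs_mul, abs_of_pos hM, abs_of_nonneg (by linarith : 0 ≤ r - k0 * a - q * M)]
    linarith
  have hexp : Real.exp (-(γ / 2 * (M * |(n : ℝ)|))) *
      Real.exp (-(γ / 2 * (a * |((k0 - j : ℤ) : ℝ)|))) ≤
      Real.exp (γ / 2 * M) * Real.exp (-(γ / 2 * |j * a - (r + M * (n - q : ℤ))|)) := by
    rw [← Real.exp_add, ← Real.exp_add, Real.exp_le_exp]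
    nlinarith
  calc ‖d j‖ ≤ ‖d k0‖ * Real.exp (-(γ / 2 * (a * |((k0 - j : ℤ) : ℝ)|))) := h1
    _ ≤ (Real.exp (-(γ / 2 * (M * |(n : ℝ)|))) / ε * S) *
        Real.exp (-(γ / 2 * (a * |((k0 - j : ℤ) : ℝ)|))) :=
      mul_le_mul_of_nonneg_right h2 (Real.exp_pos _).le
    _ = (Real.exp (-(γ / 2 * (M * |(n : ℝ)|))) *
        Real.exp (-(γ / 2 * (a * |((k0 - j : ℤ) : ℝ)|)))) * (S / ε) := by ring
    _ ≤ (Real.exp (γ / 2 * M) * Real.exp (-(γ / 2 * |j * a - (r + M * (n - q : ℤ))|))) *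
        (S / ε) := mul_le_mul_of_nonneg_right hexp (by positivity)
    _ = _ := by ring

/-! ### Identification of the generator by its Fourier transform -/

lemma exp_abs_integrable {γ : ℝ} (hγ : 0 < γ) :
    Integrable fun x : ℝ => Real.exp (-γ * |x|) := by
  rw [← integrableOn_univ, ← Set.Iic_union_Ioi (a := (0 : ℝ)), integrableOn_union]
  constructor
  · refine (integrableOn_exp_mul_Iic hγ 0).congr_fun (fun x hx => ?_) measurableSet_Iic
    simp only [abs_of_nonpos (Set.mem_Iic.1 hx)]; ring_nf
  · refine (integrableOn_exp_mul_Ioi (neg_neg_of_pos hγ) 0).congr_fun (fun x hx => ?_)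
      measurableSet_Ioi
    simp only [abs_of_pos (Set.mem_Ioi.1 hx)]

lemma integrable_of_decay {γ C : ℝ} {h : ℝ → ℝ} (hγ : 0 < γ) (hm : Measurable h)
    (hC : ∀ x, |h x| ≤ C * Real.exp (-γ * |x|)) : Integrable h :=
  Integrable.mono' ((exp_abs_integrable hγ).const_mul C) hm.aestronglyMeasurable
    (Filter.Eventually.of_forall hC)

lemma laplace (t : ℝ) :
    ∫ u in Set.Ioi (0 : ℝ), cexp (-(1 + t * I) * u) = (1 + t * I)⁻¹ := by
  have := integral_exp_mul_complex_Ioi (a := -(1 + t * I)) (by simp) 0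
  rw [this, neg_div_neg_eq]
  simp

lemma fourier_E {δ : ℝ} (hδ : δ ≠ 0) (ξ : ℝ) :
    𝓕 (fun x => (E δ x : ℂ)) ξ = (1 + 2 * (Real.pi : ℂ) * I * δ * ξ)⁻¹ := by
  rw [Real.fourier_eq']
  set φ : ℝ → ℂ := fun u => (|δ|⁻¹ : ℝ) * (Set.Ioi (0 : ℝ)).indicator
    (fun u : ℝ => cexp (-(1 + (2 * Real.pi * δ * ξ : ℝ) * I) * u)) u with hφ
  have e : ∀ x : ℝ, cexp (↑(-2 * Real.pi * inner ℝ x ξ) * I) • (E δ x : ℂ) = φ (x / δ) := by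
    intro x
    simp only [hφ, E]
    by_cases h : 0 < x / δ
    · rw [if_pos h, Set.indicator_of_mem (by simpa using h)]
      have hδ' : (δ : ℂ) ≠ 0 := by exact_mod_cast hδ
      simp only [Complex.ofReal_mul, Complex.ofReal_exp, smul_eq_mul]
      rw [mul_left_comm, ← Complex.exp_add]
      congr 2
      simp
      field_simp
    · rw [if_neg h, Set.indicator_of_notMem (by simpa using h)]
      simp
  simp_rw [e]
  rw [Measure.integral_comp_div φ δ]
  simp only [hφ]
  rw [integral_const_mul, integral_indicator measurableSet_Ioi, laplace]
  have : |δ| ≠ 0 := abs_ne_zero.2 hδ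
  rw [real_smul, ← mul_assoc, ← Complex.ofReal_mul, mul_inv_cancel₀ this]
  push_cast
  ring_nf

lemma fourier_T {γ C δ : ℝ} {h : ℝ → ℝ} (hγ : 0 < γ) (hm : Measurable h)
    (hC : ∀ x, |h x| ≤ C * Real.exp (-γ * |x|)) (hσ : γ * |δ| ≤ 1 / 2) (ξ : ℝ) :
    𝓕 (fun x => (T δ h x : ℂ)) ξ =
      (1 + 2 * (Real.pi : ℂ) * I * δ * ξ)⁻¹ * 𝓕 (fun x => (h x : ℂ)) ξ := by
  have hσ' : |(-γ)| * |δ| ≤ 1 / 2 := by rwa [abs_neg, abs_of_pos hγ]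
  rw [Real.fourier_eq', Real.fourier_eq']
  set F : ℝ → ℝ → ℂ := fun x u =>
    cexp (↑(-2 * Real.pi * inner ℝ x ξ) * I) * ((Real.exp (-u) * h (x - δ * u) : ℝ) : ℂ) with hF
  have e1 : ∀ x, cexp (↑(-2 * Real.pi * inner ℝ x ξ) * I) • (T δ h x : ℂ) =
      ∫ u in Set.Ioi (0 : ℝ), F x u := by
    intro x
    simp only [hF, T]
    rw [integral_const_mul, integral_complex_ofReal, smul_eq_mul]
  have hint : Integrable (Function.uncurry F)
      (volume.prod (volume.restrict (Set.Ioi (0 : ℝ)))) := by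
    have hb : Integrable (fun p : ℝ × ℝ => (C * Real.exp (-γ * |p.1|)) *
        Real.exp ((-1 / 2) * p.2)) (volume.prod (volume.restrict (Set.Ioi (0 : ℝ)))) :=
      ((exp_abs_integrable hγ).const_mul C).mul_prod
        (integrableOn_exp_mul_Ioi (by norm_num) 0)
    refine Integrable.mono' hb ?_ ?_
    · refine Measurable.aestronglyMeasurable ?_
      simp only [hF, Function.uncurry_def]
      have hh : Measurable fun p : ℝ × ℝ => h (p.1 - δ * p.2) := hm.comp (by fun_prop)
      fun_prop
    · have hmem : ∀ᵐ p : ℝ × ℝ ∂(volume.prod (volume.restrict (Set.Ioi (0 : ℝ)))),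
          p.2 ∈ Set.Ioi (0 : ℝ) :=
        Measure.quasiMeasurePreserving_snd.ae (ae_restrict_mem measurableSet_Ioi)
      filter_upwards [hmem] with p hp
      simp only [hF, Function.uncurry_def]
      rw [norm_mul, Complex.norm_exp_ofReal_mul_I, one_mul, Complex.norm_real]
      exact kernel_bound hC hσ' p.1 p.2 hp
  simp_rw [e1]
  rw [integral_integral_swap hint]
  have e2 : ∀ u, ∫ x, F x u = cexp (-(1 + (2 * Real.pi * δ * ξ : ℝ) * I) * u) *
      ∫ x, cexp (↑(-2 * Real.pi * inner ℝ x ξ) * I) • (h x : ℂ) := by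
    intro u
    rw [← integral_add_right_eq_self (fun x => F x u) (δ * u), ← integral_const_mul]
    refine integral_congr_ae (Filter.Eventually.of_forall fun x => ?_)
    simp only [hF, add_sub_cancel_right, smul_eq_mul]
    push_cast
    rw [← mul_assoc, ← mul_assoc, ← Complex.exp_add, ← Complex.exp_add]
    congr 2
    simp
    ring
  simp_rw [e2]
  rw [integral_mul_const, laplace]
  congr 2
  push_cast
  ring

lemma fourier_G {γ δ0 : ℝ} (hγ : 0 < γ) (h0 : δ0 ≠ 0) (hγ0 : γ * |δ0| ≤ 1 / 2) (l : List ℝ)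
    (hl : ∀ δ ∈ l, δ ≠ 0 ∧ γ * |δ| ≤ 1 / 2) (ξ : ℝ) :
    𝓕 (fun x => (G δ0 l x : ℂ)) ξ = (1 + 2 * (Real.pi : ℂ) * I * δ0 * ξ)⁻¹ *
      (l.map fun δ : ℝ => (1 + 2 * (Real.pi : ℂ) * I * δ * ξ)⁻¹).prod := by
  induction l with
  | nil => simpa [G] using fourier_E h0 ξ
  | cons δ l ih =>
    have hl' : ∀ δ' ∈ l, δ' ≠ 0 ∧ γ * |δ'| ≤ 1 / 2 := fun δ' h' => hl δ' (by simp [h'])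
    obtain ⟨hm, C, hC, hb⟩ := G_prop hγ h0 hγ0 l hl'
    have := fourier_T hγ hm hb (hl δ (by simp)).2 ξ
    simp only [G]
    rw [this, ih hl', List.map_cons, List.prod_cons]
    ring

/-- Fourier inversion applied to the difference shows that the continuous generator is the
explicit iterated convolution `G`. -/
lemma exists_G {m : ℕ} (hm : 2 ≤ m) (δ : Fin m → ℝ) (hδ0 : ∀ i, δ i ≠ 0)
    (g : ℝ → ℂ) (hgcont : Continuous g) (hg : Integrable g)
    (hFT : ∀ ξ : ℝ, 𝓕 g ξ =
      ∏ k : Fin m, (1 + 2 * (Real.pi : ℂ) * Complex.I * (δ k : ℂ) * (ξ : ℂ))⁻¹) :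
    ∃ (γ δ0 δ1 : ℝ) (l : List ℝ), 0 < γ ∧ δ0 ≠ 0 ∧ γ * |δ0| ≤ 1 / 2 ∧
      (∀ δ' ∈ δ1 :: l, δ' ≠ 0 ∧ γ * |δ'| ≤ 1 / 2) ∧ ∀ x, g x = (G δ0 (δ1 :: l) x : ℂ) := by
  obtain ⟨n, rfl⟩ : ∃ n, m = n + 2 := ⟨m - 2, by omega⟩
  have hS : 0 ≤ ∑ i, |δ i| := Finset.sum_nonneg fun i _ => abs_nonneg _
  set γ : ℝ := 1 / (2 * (1 + ∑ i, |δ i|)) with hγd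
  have hγ : 0 < γ := by positivity
  have hγi : ∀ i, γ * |δ i| ≤ 1 / 2 := by
    intro i
    have h1 : |δ i| ≤ ∑ i, |δ i| :=
      Finset.single_le_sum (f := fun i => |δ i|) (fun i _ => abs_nonneg _) (Finset.mem_univ i)
    rw [hγd, div_mul_eq_mul_div, one_mul, div_le_iff₀ (by positivity)]
    linarith
  set l : List ℝ := List.ofFn fun i : Fin n => δ i.succ.succ with hl
  have hmem : ∀ δ' ∈ δ (Fin.succ 0) :: l, δ' ≠ 0 ∧ γ * |δ'| ≤ 1 / 2 := by
    intro δ' h'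
    rcases List.mem_cons.1 h' with h' | h'
    · rw [h']; exact ⟨hδ0 _, hγi _⟩
    · rw [hl, List.mem_ofFn] at h'
      obtain ⟨i, rfl⟩ := h'
      exact ⟨hδ0 _, hγi _⟩
  refine ⟨γ, δ 0, δ (Fin.succ 0), l, hγ, hδ0 0, hγi 0, hmem, ?_⟩
  obtain ⟨hGm, C, hC, hGb⟩ := G_prop hγ (hδ0 0) (hγi 0) _ hmem
  have hGc := G_continuous hγ (hδ0 0) (hγi 0) _ _ hmem
  have hGi : Integrable fun x => (G (δ 0) (δ (Fin.succ 0) :: l) x : ℂ) :=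
    (integrable_of_decay hγ hGm hGb).ofReal
  have hGF : 𝓕 (fun x => (G (δ 0) (δ (Fin.succ 0) :: l) x : ℂ)) = 𝓕 g := by
    funext ξ
    rw [fourier_G hγ (hδ0 0) (hγi 0) _ hmem, hFT, Fin.prod_univ_succ, Fin.prod_univ_succ,
      List.map_cons, List.prod_cons, hl, List.map_ofFn, List.prod_ofFn]
    rfl
  have hdiff : 𝓕 (g - fun x => (G (δ 0) (δ (Fin.succ 0) :: l) x : ℂ)) = 0 := by
    funext ξ
    have h1 := congrFun hGF ξ
    rw [Real.fourier_eq', Real.fourier_eq'] at h1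
    have hi : ∀ {h : ℝ → ℂ}, Integrable h →
        Integrable fun v : ℝ => cexp (↑(-2 * Real.pi * inner ℝ v ξ) * I) • h v := by
      intro h hh
      refine hh.bdd_mul (c := 1) ?_ ?_
      · exact Continuous.aestronglyMeasurable (by fun_prop)
      · exact Filter.Eventually.of_forall fun v => (Complex.norm_exp_ofReal_mul_I _).le
    rw [Real.fourier_eq']
    simp only [Pi.sub_apply, smul_sub]
    rw [integral_sub (hi hg) (hi hGi), h1, sub_self, Pi.zero_apply]
  have hc : Continuous (g - fun x => (G (δ 0) (δ (Fin.succ 0) :: l) x : ℂ)) :=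
    hgcont.sub (Complex.continuous_ofReal.comp hGc)
  have hinv := Continuous.fourierInv_fourier_eq hc (hg.sub hGi)
    (by rw [hdiff]; exact integrable_zero _ _ _)
  intro x
  have h2 := congrFun hinv x
  rw [hdiff, Real.fourierInv_eq'] at h2
  simp only [Pi.zero_apply, smul_zero, integral_zero, Pi.sub_apply] at h2
  exact sub_eq_zero.1 h2.symm

/-! ### Schur-type bounds -/

/-- Sums of exponentials over a lattice are bounded uniformly in the centre. -/
lemma lattice_sum {c a : ℝ} (hc : 0 < c) (ha : 0 < a) : ∃ K, 0 < K ∧ ∀ x : ℝ,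
    Summable (fun k : ℤ => Real.exp (-(c * |x - k * a|))) ∧
      ∑' k : ℤ, Real.exp (-(c * |x - k * a|)) ≤ K := by
  have hs := summable_exp_int (mul_pos hc ha)
  have hpos : 0 < ∑' k : ℤ, Real.exp (-(c * a * |(k : ℝ)|)) :=
    hs.tsum_pos (fun k => (Real.exp_pos _).le) 0 (Real.exp_pos _)
  refine ⟨Real.exp (c * a) * ∑' k : ℤ, Real.exp (-(c * a * |(k : ℝ)|)), by positivity,
    fun x => ?_⟩
  set q : ℤ := ⌊x / a⌋ with hq
  have hq1 := Int.floor_le (x / a)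
  have hq2 := Int.lt_floor_add_one (x / a)
  rw [le_div_iff₀ ha, ← hq] at hq1
  rw [div_lt_iff₀ ha, ← hq] at hq2
  have hb : ∀ k : ℤ, Real.exp (-(c * |x - k * a|)) ≤
      Real.exp (c * a) * Real.exp (-(c * a * |((k - q : ℤ) : ℝ)|)) := by
    intro k
    rw [← Real.exp_add, Real.exp_le_exp]
    have h1 : a * |((k - q : ℤ) : ℝ)| ≤ a + |x - k * a| := by
      have e : a * |((k - q : ℤ) : ℝ)| = |(x - q * a) - (x - k * a)| := by
        rw [show (x - q * a) - (x - k * a) = a * ((k - q : ℤ) : ℝ) by push_cast; ring,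
          abs_mul, abs_of_pos ha]
      rw [e]
      refine (abs_sub _ _).trans (add_le_add ?_ le_rfl)
      rw [abs_of_nonneg (by linarith)]; linarith
    nlinarith
  have hs' : Summable fun k : ℤ =>
      Real.exp (c * a) * Real.exp (-(c * a * |((k - q : ℤ) : ℝ)|)) :=
    (((Equiv.subRight q).summable_iff (f := fun k : ℤ =>
      Real.exp (-(c * a * |(k : ℝ)|)))).2 hs).mul_left _
  have hs2 := Summable.of_nonneg_of_le (fun k => (Real.exp_pos _).le) hb hs'
  refine ⟨hs2, (hs2.tsum_le_tsum hb hs').trans ?_⟩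
  rw [tsum_mul_left]
  exact (congrArg _ ((Equiv.subRight q).tsum_eq
    (fun k : ℤ => Real.exp (-(c * a * |(k : ℝ)|))))).le

/-- A family of sequences localized at the lattice points is a Riesz sequence as soon as every
coefficient is controlled by one localized sample of the combination: both bounds are
instances of Schur's test. -/
lemma riesz_of_local {M : ℕ} {a γ C C' : ℝ} (hM : 0 < M) (ha : 0 < a) (hγ : 0 < γ) (hC : 0 < C)
    (hC' : 0 < C') (w : ℤ × Fin M → ℤ → ℂ)
    (hw : ∀ p j, ‖w p j‖ ≤ C * Real.exp (-(γ * |(j : ℝ) - p.1 * a|)))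
    (hlow : ∀ (c : (ℤ × Fin M) →₀ ℂ) (p : ℤ × Fin M), ∃ j : ℤ,
      ‖c p‖ ≤ C' * Real.exp (-(γ / 2 * |(j : ℝ) - p.1 * a|)) *
        ‖∑ q ∈ c.support, c q * w q j‖) :
    ∃ A' B' : ℝ, 0 < A' ∧ 0 < B' ∧ ∀ c : (ℤ × Fin M) →₀ ℂ,
      A' * (∑ p ∈ c.support, ‖c p‖ ^ 2) ≤ (∑' j : ℤ, ‖∑ p ∈ c.support, c p * w p j‖ ^ 2) ∧
      (∑' j : ℤ, ‖∑ p ∈ c.support, c p * w p j‖ ^ 2) ≤ B' * (∑ p ∈ c.support, ‖c p‖ ^ 2) := by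
  obtain ⟨K, hK, hKs⟩ := lattice_sum hγ ha
  obtain ⟨L, hL, hLs⟩ := lattice_sum hγ one_pos
  have hM' : (0 : ℝ) < M := by exact_mod_cast hM
  set e : ℤ × Fin M → ℤ → ℝ := fun p j => Real.exp (-(γ * |(j : ℝ) - p.1 * a|)) with he
  have he0 : ∀ p j, 0 < e p j := fun p j => Real.exp_pos _
  have hrow : ∀ (s : Finset (ℤ × Fin M)) (j : ℤ), ∑ p ∈ s, e p j ≤ M * K := by
    intro s j
    calc ∑ p ∈ s, e p j ≤ ∑ p ∈ s.image Prod.fst ×ˢ Finset.univ, e p j := by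
          refine Finset.sum_le_sum_of_subset_of_nonneg (fun p hp => ?_) fun p _ _ => (he0 p j).le
          exact Finset.mem_product.2 ⟨Finset.mem_image_of_mem _ hp, Finset.mem_univ _⟩
      _ = M * ∑ k ∈ s.image Prod.fst, Real.exp (-(γ * |(j : ℝ) - k * a|)) := by
          rw [Finset.sum_product, Finset.mul_sum]
          simp [he]
      _ ≤ M * K := by
          refine mul_le_mul_of_nonneg_left ?_ hM'.le
          exact ((hKs j).1.sum_le_tsum _ fun k _ => (Real.exp_pos _).le).trans (hKs j).2
  have hcol : ∀ p, Summable (e p) ∧ ∑' j, e p j ≤ L := by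
    intro p
    have h : e p = fun j : ℤ => Real.exp (-(γ * |p.1 * a - j * 1|)) := by
      funext j; simp only [he]; rw [abs_sub_comm, mul_one]
    rw [h]; exact hLs _
  refine ⟨(C' ^ 2 * (M * K))⁻¹, C ^ 2 * (M * K) * L, by positivity, by positivity, fun c => ?_⟩
  set F : ℤ → ℂ := fun j => ∑ p ∈ c.support, c p * w p j with hF
  have hup : ∀ j, ‖F j‖ ^ 2 ≤ C ^ 2 * (M * K) * ∑ p ∈ c.support, ‖c p‖ ^ 2 * e p j := by
    intro j
    have h1 : ‖F j‖ ≤ C * ∑ p ∈ c.support, ‖c p‖ * e p j := by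
      rw [Finset.mul_sum]
      refine (norm_sum_le _ _).trans (Finset.sum_le_sum fun p _ => ?_)
      rw [norm_mul]
      calc _ ≤ ‖c p‖ * (C * e p j) := mul_le_mul_of_nonneg_left (hw p j) (norm_nonneg _)
        _ = _ := by ring
    have h2 : (∑ p ∈ c.support, ‖c p‖ * e p j) ^ 2 ≤
        (∑ p ∈ c.support, ‖c p‖ ^ 2 * e p j) * ∑ p ∈ c.support, e p j :=
      Finset.sum_sq_le_sum_mul_sum_of_sq_le_mul _
        (fun p _ => mul_nonneg (sq_nonneg _) (he0 p j).le) (fun p _ => (he0 p j).le)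
        fun p _ => le_of_eq (by ring)
    have h3 : 0 ≤ ∑ p ∈ c.support, ‖c p‖ ^ 2 * e p j :=
      Finset.sum_nonneg fun p _ => mul_nonneg (sq_nonneg _) (he0 p j).le
    calc ‖F j‖ ^ 2 ≤ (C * ∑ p ∈ c.support, ‖c p‖ * e p j) ^ 2 :=
          pow_le_pow_left₀ (norm_nonneg _) h1 2
      _ = C ^ 2 * (∑ p ∈ c.support, ‖c p‖ * e p j) ^ 2 := by ring
      _ ≤ C ^ 2 * ((∑ p ∈ c.support, ‖c p‖ ^ 2 * e p j) * (M * K)) := by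
          refine mul_le_mul_of_nonneg_left (h2.trans ?_) (sq_nonneg _)
          exact mul_le_mul_of_nonneg_left (hrow _ j) h3
      _ = _ := by ring
  have hsum1 : ∀ p ∈ c.support, Summable fun j => ‖c p‖ ^ 2 * e p j :=
    fun p _ => (hcol p).1.mul_left _
  have hsumR : Summable fun j => C ^ 2 * (M * K) * ∑ p ∈ c.support, ‖c p‖ ^ 2 * e p j :=
    (summable_sum hsum1).mul_left _
  have hsF : Summable fun j => ‖F j‖ ^ 2 :=
    Summable.of_nonneg_of_le (fun j => sq_nonneg _) hup hsumR
  constructor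
  · have hone : ∀ p, Summable (fun j => e p j * ‖F j‖ ^ 2) := by
      intro p
      refine Summable.of_nonneg_of_le (fun j => mul_nonneg (he0 p j).le (sq_nonneg _))
        (fun j => ?_) hsF
      refine mul_le_of_le_one_left (sq_nonneg _) (Real.exp_le_one_iff.2 ?_)
      exact neg_nonpos.2 (by positivity)
    have hp : ∀ p, ‖c p‖ ^ 2 ≤ C' ^ 2 * ∑' j, e p j * ‖F j‖ ^ 2 := by
      intro p
      obtain ⟨j, hj⟩ := hlow c p
      have hee : Real.exp (-(γ / 2 * |(j : ℝ) - p.1 * a|)) ^ 2 = e p j := by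
        rw [← Real.exp_nat_mul]; simp only [he]; congr 1; push_cast; ring
      calc ‖c p‖ ^ 2 ≤ (C' * Real.exp (-(γ / 2 * |(j : ℝ) - p.1 * a|)) * ‖F j‖) ^ 2 :=
            pow_le_pow_left₀ (norm_nonneg _) hj 2
        _ = C' ^ 2 * (e p j * ‖F j‖ ^ 2) := by rw [mul_pow, mul_pow, hee]; ring
        _ ≤ _ := by
            refine mul_le_mul_of_nonneg_left ?_ (sq_nonneg _)
            exact (hone p).le_tsum j fun i _ => mul_nonneg (he0 p i).le (sq_nonneg _)
    rw [inv_mul_le_iff₀ (by positivity)]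
    calc ∑ p ∈ c.support, ‖c p‖ ^ 2
        ≤ ∑ p ∈ c.support, C' ^ 2 * ∑' j, e p j * ‖F j‖ ^ 2 := Finset.sum_le_sum fun p _ => hp p
      _ = C' ^ 2 * ∑' j, (∑ p ∈ c.support, e p j) * ‖F j‖ ^ 2 := by
          rw [← Finset.mul_sum, ← Summable.tsum_finsetSum fun p _ => hone p]
          simp_rw [Finset.sum_mul]
      _ ≤ C' ^ 2 * ∑' j, (M * K) * ‖F j‖ ^ 2 := by
          refine mul_le_mul_of_nonneg_left (Summable.tsum_le_tsum (fun j => ?_) ?_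
            (hsF.mul_left _)) (sq_nonneg _)
          · exact mul_le_mul_of_nonneg_right (hrow _ j) (sq_nonneg _)
          · simp_rw [Finset.sum_mul]
            exact summable_sum fun p _ => hone p
      _ = _ := by rw [tsum_mul_left]; ring
  · calc ∑' j, ‖F j‖ ^ 2 ≤ ∑' j, C ^ 2 * (M * K) * ∑ p ∈ c.support, ‖c p‖ ^ 2 * e p j :=
          hsF.tsum_le_tsum hup hsumR
      _ = C ^ 2 * (M * K) * ∑ p ∈ c.support, ‖c p‖ ^ 2 * ∑' j, e p j := by
          rw [tsum_mul_left, Summable.tsum_finsetSum hsum1]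
          simp_rw [tsum_mul_left]
      _ ≤ C ^ 2 * (M * K) * ∑ p ∈ c.support, ‖c p‖ ^ 2 * L := by
          refine mul_le_mul_of_nonneg_left (Finset.sum_le_sum fun p _ => ?_) (by positivity)
          exact mul_le_mul_of_nonneg_left (hcol p).2 (sq_nonneg _)
      _ = _ := by rw [← Finset.sum_mul]; ring

/-! ### Decoupling of the modulations -/

/-- The `l`-th character of `ℤ/M` evaluated at `j`. -/
noncomputable def χ (M l : ℕ) (j : ℤ) : ℂ :=
  cexp (2 * (Real.pi : ℂ) * I * (l : ℂ) * (j : ℂ) / (M : ℂ))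

lemma norm_χ (M l : ℕ) (j : ℤ) : ‖χ M l j‖ = 1 := by
  unfold χ
  rw [show 2 * (Real.pi : ℂ) * I * (l : ℂ) * (j : ℂ) / (M : ℂ) =
    ((2 * Real.pi * l * j / M : ℝ) : ℂ) * I by push_cast; ring]
  exact Complex.norm_exp_ofReal_mul_I _

lemma χ_periodic {M : ℕ} (hM : 0 < M) (l : ℕ) (r n : ℤ) : χ M l (r + M * n) = χ M l r := by
  have hM' : (M : ℂ) ≠ 0 := by exact_mod_cast hM.ne'
  unfold χ
  rw [show 2 * (Real.pi : ℂ) * I * (l : ℂ) * ((r + M * n : ℤ) : ℂ) / (M : ℂ) =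
    2 * (Real.pi : ℂ) * I * (l : ℂ) * (r : ℂ) / (M : ℂ) +
      ((l * n : ℤ) : ℂ) * (2 * Real.pi * I) by push_cast; field_simp,
    Complex.exp_add, Complex.exp_int_mul_two_pi_mul_I, mul_one]

lemma χ_orthogonal {M : ℕ} (hM : 0 < M) (l l0 : Fin M) :
    ∑ r ∈ Finset.range M, (χ M l0 r)⁻¹ * χ M l r = if l = l0 then (M : ℂ) else 0 := by
  have hM' : (M : ℂ) ≠ 0 := by exact_mod_cast hM.ne'
  set z : ℂ := cexp (2 * Real.pi * I * (((l : ℕ) : ℂ) - ((l0 : ℕ) : ℂ)) / M) with hz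
  have e : ∀ r : ℕ, (χ M l0 r)⁻¹ * χ M l r = z ^ r := by
    intro r
    unfold χ
    rw [← Complex.exp_neg, ← Complex.exp_add, hz, ← Complex.exp_nat_mul]
    congr 1
    push_cast
    ring
  simp_rw [e]
  split_ifs with h
  · simp [hz, h]
  · have hz1 : z ≠ 1 := by
      intro h1
      rw [hz, Complex.exp_eq_one_iff] at h1
      obtain ⟨n, hn⟩ := h1
      have hpi : (2 * Real.pi * I : ℂ) ≠ 0 := Complex.two_pi_I_ne_zero
      have h2 : (((l : ℕ) : ℂ) - ((l0 : ℕ) : ℂ)) = n * M := by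
        rw [div_eq_iff hM'] at hn
        apply mul_left_cancel₀ hpi
        rw [hn]; ring
      have h3 : ((l : ℕ) : ℤ) - ((l0 : ℕ) : ℤ) = n * M := by exact_mod_cast h2
      have hl := l.2
      have hl0 := l0.2
      have hlt : |n * (M : ℤ)| < M := by rw [← h3, abs_lt]; constructor <;> omega
      have hn0 : n = 0 := by
        by_contra hne
        have : 1 ≤ |n| := Int.one_le_abs hne
        rw [abs_mul, Nat.abs_cast] at hlt
        nlinarith
      rw [hn0, zero_mul] at h3
      exact h (Fin.ext (by omega))
    have hzM : z ^ M = 1 := by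
      rw [hz, ← Complex.exp_nat_mul]
      rw [show (M : ℂ) * (2 * Real.pi * I * (((l : ℕ) : ℂ) - ((l0 : ℕ) : ℂ)) / M) =
        (((l : ℕ) - (l0 : ℕ) : ℤ) : ℂ) * (2 * Real.pi * I) by push_cast; field_simp]
      exact Complex.exp_int_mul_two_pi_mul_I _
    have := geom_sum_mul z M
    rw [hzM, sub_self] at this
    exact (mul_eq_zero.1 this).resolve_right (sub_ne_zero.2 hz1)

/-- By orthogonality of the characters, a coefficient is the mean of unimodular multiples of the
values of its trigonometric polynomial, hence dominated by one of them. -/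
lemma exists_residue {M : ℕ} (hM : 0 < M) (b : Fin M → ℂ) (l0 : Fin M) :
    ∃ r : ℕ, ‖b l0‖ ≤ ‖∑ l, b l * χ M l r‖ := by
  by_contra! hcon
  have h1 : (M : ℂ) * b l0 =
      ∑ r ∈ Finset.range M, (χ M l0 r)⁻¹ * ∑ l, b l * χ M l r := by
    simp_rw [Finset.mul_sum]
    rw [Finset.sum_comm]
    have : ∀ l, ∑ r ∈ Finset.range M, (χ M l0 r)⁻¹ * (b l * χ M l r) =
        b l * if l = l0 then (M : ℂ) else 0 := by
      intro l
      rw [← χ_orthogonal hM, Finset.mul_sum]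
      exact Finset.sum_congr rfl fun r _ => by ring
    simp_rw [this]
    simp [mul_comm]
  have h2 : ‖(M : ℂ) * b l0‖ < ∑ r ∈ Finset.range M, ‖b l0‖ := by
    rw [h1]
    refine (norm_sum_le _ _).trans_lt (Finset.sum_lt_sum_of_nonempty ?_ fun r _ => ?_)
    · simpa using hM.ne'
    · rw [norm_mul, norm_inv, norm_χ, inv_one, one_mul]; exact hcon r
  rw [norm_mul, Complex.norm_natCast, Finset.sum_const, Finset.card_range, nsmul_eq_mul] at h2
  exact lt_irrefl _ h2

/-- On a residue class modulo `M` the modulations act as constants on the coefficients, and the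
samples of the combination become samples of a series of translates of the generator. -/
lemma local_control {γ δ0 δ : ℝ} {l : List ℝ} {a M : ℕ} (H0 : Good γ a δ0 (δ :: l) 0)
    (hM : 0 < M) (hMa : (M : ℝ) < a) : ∃ C, 0 < C ∧
    ∀ (c : (ℤ × Fin M) →₀ ℂ) (p : ℤ × Fin M), ∃ j : ℤ,
      ‖c p‖ ≤ C * Real.exp (-(γ / 2 * |(j : ℝ) - p.1 * a|)) *
        ‖∑ q ∈ c.support, c q * ((G δ0 (δ :: l) ((j : ℝ) - q.1 * a) : ℂ) * χ M q.2 j)‖ := by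
  obtain ⟨C, hC, hst⟩ := stability H0 (by exact_mod_cast hM) hMa
  refine ⟨C, hC, fun c p => ?_⟩
  obtain ⟨r, hr⟩ := exists_residue hM (fun l => c (p.1, l)) p.2
  set d : ℤ → ℂ := fun k => ∑ l : Fin M, c (k, l) * χ M l r with hd
  have hd0 : ∀ k ∉ c.support.image Prod.fst, d k = 0 := by
    intro k hk
    refine Finset.sum_eq_zero fun l _ => ?_
    have : c (k, l) = 0 := by
      by_contra h
      exact hk (Finset.mem_image.2 ⟨(k, l), Finsupp.mem_support_iff.2 h, rfl⟩)
    rw [this, zero_mul]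
  have hfin : (Function.support d).Finite := by
    refine (c.support.image Prod.fst).finite_toSet.subset fun k hk => ?_
    by_contra h
    exact hk (hd0 k h)
  obtain ⟨n, hn⟩ := hst d hfin p.1 r
  refine ⟨r + M * n, hr.trans (hn.trans_eq ?_)⟩
  have hj : ((r + M * n : ℤ) : ℝ) = r + M * n := by push_cast; ring
  rw [hj, abs_sub_comm]
  congr 2
  have hsub : c.support ⊆ c.support.image Prod.fst ×ˢ Finset.univ := fun q hq =>
    Finset.mem_product.2 ⟨Finset.mem_image_of_mem _ hq, Finset.mem_univ _⟩
  rw [Finset.sum_subset hsub fun q _ hq => by rw [Finsupp.notMem_support_iff.1 hq, zero_mul],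
    Finset.sum_product, tsum_eq_sum (s := c.support.image Prod.fst)
      fun k hk => by rw [hd0 k hk, zero_mul]]
  refine Finset.sum_congr rfl fun k _ => ?_
  simp only [hd]
  rw [Finset.sum_mul]
  refine Finset.sum_congr rfl fun l _ => ?_
  rw [χ_periodic hM]
  ring

end TPGabor

theorem stmt8 (m : ℕ) (hm : 2 ≤ m) (δ : Fin m → ℝ) (hδ0 : ∀ i, δ i ≠ 0)
    (g : ℝ → ℂ) (hgcont : Continuous g) (hg : Integrable g)
    (hFT : ∀ ξ : ℝ, 𝓕 g ξ =
      ∏ k : Fin m, (1 + 2 * (Real.pi : ℂ) * Complex.I * (δ k : ℂ) * (ξ : ℂ))⁻¹)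
    (a M : ℕ) (ha : 0 < a) (hM : 0 < M) (haM : 1 < (a : ℝ) / M) :
    ∃ A' B' : ℝ, 0 < A' ∧ 0 < B' ∧ ∀ c : (ℤ × Fin M) →₀ ℂ,
      A' * (∑ p ∈ c.support, ‖c p‖ ^ 2) ≤
          (∑' j : ℤ, ‖∑ p ∈ c.support, c p * (g ((j : ℝ) - p.1 * a) *
            Complex.exp (2 * (Real.pi : ℂ) * Complex.I * ((p.2 : ℕ) : ℂ) * (j : ℂ) / (M : ℂ)))‖ ^ 2) ∧
        (∑' j : ℤ, ‖∑ p ∈ c.support, c p * (g ((j : ℝ) - p.1 * a) *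
            Complex.exp (2 * (Real.pi : ℂ) * Complex.I * ((p.2 : ℕ) : ℂ) * (j : ℂ) / (M : ℂ)))‖ ^ 2) ≤
          B' * (∑ p ∈ c.support, ‖c p‖ ^ 2) := by
  obtain ⟨γ, δ0, δ1, l, hγ, h0, hγ0, hl, hgG⟩ := TPGabor.exists_G hm δ hδ0 g hgcont hg hFT
  obtain ⟨-, C, hC, hGb⟩ := TPGabor.G_prop hγ h0 hγ0 _ hl
  have ha' : (0 : ℝ) < a := by exact_mod_cast ha
  have hMa : (M : ℝ) < a := by
    have hM' : (0 : ℝ) < M := by exact_mod_cast hM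
    rwa [lt_div_iff₀ hM', one_mul] at haM
  have H0 : TPGabor.Good γ a δ0 (δ1 :: l) 0 :=
    ⟨hγ, ha', h0, hγ0, hl, 1, one_pos, fun k => by simp [Real.exp_nonneg]⟩
  obtain ⟨C', hC', hlow⟩ := TPGabor.local_control H0 hM hMa
  simp only [hgG]
  refine TPGabor.riesz_of_local hM ha' hγ hC hC' (fun p j =>
    (TPGabor.G δ0 (δ1 :: l) ((j : ℝ) - p.1 * a) : ℂ) * TPGabor.χ M p.2 j) (fun p j => ?_) hlow
  rw [norm_mul, TPGabor.norm_χ, mul_one, Complex.norm_real, ← neg_mul]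
  exact hGb _
end
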